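/- Let H be a finite dimensional Hopf algebra over k acting inner faithfully on the Weyl algebra A = A_n(k). Then for a sufficiently large prime p, the reduced action of H_p on A_p = A_n(F̄_p) is inner faithful. -/

import Mathlib

open TensorProduct

/-- The defining relations of the `n`-th Weyl algebra: generators `xᵢ = .inl i`,
`yᵢ = .inr i`, relations `[xᵢ,xⱼ] = [yᵢ,yⱼ] = 0` and `[yᵢ,xⱼ] = δᵢⱼ`. -/
inductive WeylRel (R : Type) [CommRing R] (n : ℕ) :
    FreeAlgebra R (Fin n ⊕ Fin n) → FreeAlgebra R (Fin n ⊕ Fin n) → Prop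
  | xx (i j : Fin n) : WeylRel R n (FreeAlgebra.ι R (Sum.inl i) * FreeAlgebra.ι R (Sum.inl j))
      (FreeAlgebra.ι R (Sum.inl j) * FreeAlgebra.ι R (Sum.inl i))
  | yy (i j : Fin n) : WeylRel R n (FreeAlgebra.ι R (Sum.inr i) * FreeAlgebra.ι R (Sum.inr j))
      (FreeAlgebra.ι R (Sum.inr j) * FreeAlgebra.ι R (Sum.inr i))
  | yx (i j : Fin n) : WeylRel R n (FreeAlgebra.ι R (Sum.inr i) * FreeAlgebra.ι R (Sum.inl j))
      (FreeAlgebra.ι R (Sum.inl j) * FreeAlgebra.ι R (Sum.inr i) + if i = j then 1 else 0)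

/-- The `n`-th Weyl algebra `A_n(R)` over a commutative ring `R`. -/
def WeylAlgebra (R : Type) [CommRing R] (n : ℕ) : Type := RingQuot (WeylRel R n)

noncomputable instance (R : Type) [CommRing R] (n : ℕ) : Ring (WeylAlgebra R n) :=
  inferInstanceAs (Ring (RingQuot (WeylRel R n)))

noncomputable instance (S R : Type) [CommSemiring S] [CommRing R] [Algebra S R] (n : ℕ) :
    Algebra S (WeylAlgebra R n) :=
  inferInstanceAs (Algebra S (RingQuot (WeylRel R n)))

namespace WeylAlgebra

/-- The generator `xᵢ` of the Weyl algebra. -/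
noncomputable def X {R : Type} [CommRing R] {n : ℕ} (i : Fin n) : WeylAlgebra R n :=
  RingQuot.mkRingHom (WeylRel R n) (FreeAlgebra.ι R (Sum.inl i))

/-- The generator `yᵢ` of the Weyl algebra. -/
noncomputable def Y {R : Type} [CommRing R] {n : ℕ} (i : Fin n) : WeylAlgebra R n :=
  RingQuot.mkRingHom (WeylRel R n) (FreeAlgebra.ι R (Sum.inr i))

end WeylAlgebra

/-- An action of a (bi/Hopf) algebra `H` on an algebra `A`, where the comultiplication and
counit of `H` are supplied explicitly as `comul` and `counit`.  This says exactly that `A`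
is an `H`-module algebra:  `h ⬝ (ab) = ∑ (h₁ ⬝ a)(h₂ ⬝ b)` and `h ⬝ 1 = ε(h) 1`. -/
structure ModAlgAction (k : Type) [CommRing k] (H : Type) [Ring H] [Module k H]
    (comul : H →ₗ[k] H ⊗[k] H) (counit : H →ₗ[k] k)
    (A : Type) [Ring A] [Algebra k A] where
  /-- the action map -/
  act : H →ₗ[k] A →ₗ[k] A
  one_act : ∀ a : A, act 1 a = a
  mul_act : ∀ (g h : H) (a : A), act (g * h) a = act g (act h a)
  act_one : ∀ h : H, act h 1 = algebraMap k A (counit h)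
  act_mul : ∀ (h : H) (a b : A), act h (a * b) =
    TensorProduct.lift (((LinearMap.mul k A).comp (act.flip a)).compl₂ (act.flip b)) (comul h)

/-- An action of a Hopf algebra `H` on an algebra `A`, i.e. an `H`-module algebra
structure on `A`. -/
abbrev HopfAction (k : Type) [CommRing k] (H : Type) [Ring H] [Bialgebra k H]
    (A : Type) [Ring A] [Algebra k A] :=
  ModAlgAction k H (Coalgebra.comul (R := k)) (Coalgebra.counit (R := k)) A

/-- The `k`-subspace `I ⊗ H + H ⊗ I` of `H ⊗ H` determined by a subspace `I ⊆ H`. -/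
noncomputable def tensorIdeal (k : Type) [CommRing k] (H : Type) [Ring H] [Module k H]
    (I : Submodule k H) : Submodule k (H ⊗[k] H) :=
  Submodule.span k {z : H ⊗[k] H |
    (∃ a ∈ I, ∃ b : H, z = a ⊗ₜ[k] b) ∨ (∃ a : H, ∃ b ∈ I, z = a ⊗ₜ[k] b)}

/-- A (two-sided) Hopf ideal of `H`, with respect to explicitly supplied comultiplication,
counit and antipode. -/
def IsHopfIdealWith (k : Type) [CommRing k] (H : Type) [Ring H] [Module k H]
    (comul : H →ₗ[k] H ⊗[k] H) (counit : H →ₗ[k] k) (antipode : H →ₗ[k] H)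
    (I : Submodule k H) : Prop :=
  (∀ x ∈ I, ∀ h : H, h * x ∈ I ∧ x * h ∈ I) ∧
  (∀ x ∈ I, comul x ∈ tensorIdeal k H I) ∧
  (∀ x ∈ I, counit x = 0) ∧
  (∀ x ∈ I, antipode x ∈ I)

/-- A Hopf ideal of a Hopf algebra `H`. -/
abbrev IsHopfIdeal (k : Type) [CommRing k] (H : Type) [Ring H] [HopfAlgebra k H]
    (I : Submodule k H) : Prop :=
  IsHopfIdealWith k H (Coalgebra.comul (R := k)) (Coalgebra.counit (R := k))
    (HopfAlgebra.antipode (R := k)) I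

/-- Inner faithfulness of an action map `act`: no nonzero Hopf ideal annihilates `A`. -/
def InnerFaithfulWith (k : Type) [CommRing k] (H : Type) [Ring H] [Module k H]
    (comul : H →ₗ[k] H ⊗[k] H) (counit : H →ₗ[k] k) (antipode : H →ₗ[k] H)
    (A : Type) [Ring A] [Algebra k A] (act : H →ₗ[k] A →ₗ[k] A) : Prop :=
  ∀ I : Submodule k H, IsHopfIdealWith k H comul counit antipode I →
    (∀ x ∈ I, ∀ a : A, act x a = 0) → I = ⊥

/-- Inner faithfulness of a Hopf algebra action: no nonzero Hopf ideal of `H` acts by zero. -/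
abbrev HopfAction.InnerFaithful {k : Type} [CommRing k] {H : Type} [Ring H] [HopfAlgebra k H]
    {A : Type} [Ring A] [Algebra k A] (ha : HopfAction k H A) : Prop :=
  InnerFaithfulWith k H (Coalgebra.comul (R := k)) (Coalgebra.counit (R := k))
    (HopfAlgebra.antipode (R := k)) A ha.act

/-- The set of invariants of an action. -/
def ModAlgAction.invariants {k : Type} [CommRing k] {H : Type} [Ring H] [Module k H]
    {comul : H →ₗ[k] H ⊗[k] H} {counit : H →ₗ[k] k}
    {A : Type} [Ring A] [Algebra k A] (ha : ModAlgAction k H comul counit A) : Set A :=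
  {a : A | ∀ h : H, ha.act h a = counit h • a}

/-- The kernel of an action, as a subspace of `H`. -/
noncomputable def ModAlgAction.actionKernel {k : Type} [CommRing k] {H : Type} [Ring H]
    [Module k H] {comul : H →ₗ[k] H ⊗[k] H} {counit : H →ₗ[k] k}
    {A : Type} [Ring A] [Algebra k A] (ha : ModAlgAction k H comul counit A) :
    Submodule k H :=
  ⨅ a : A, LinearMap.ker (ha.act.flip a)

noncomputable def bcComul (R S H : Type) [CommRing R] [CommRing S] [Algebra R S]
    [AddCommGroup H] [Module R H] (comul : H →ₗ[R] H ⊗[R] H) :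
    S ⊗[R] H →ₗ[S] (S ⊗[R] H) ⊗[S] (S ⊗[R] H) :=
  (TensorProduct.AlgebraTensorModule.distribBaseChange R S H H).toLinearMap ∘ₗ
    comul.baseChange S

noncomputable def bcCounit (R S H : Type) [CommRing R] [CommRing S] [Algebra R S]
    [AddCommGroup H] [Module R H] (counit : H →ₗ[R] R) :
    S ⊗[R] H →ₗ[S] S :=
  (TensorProduct.AlgebraTensorModule.rid R S S).toLinearMap ∘ₗ counit.baseChange S


/-- The natural map `M ⊗[R] M → H ⊗[k] H` induced by an `R`-linear map `ι : M → H`,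
where `R → k`. -/
noncomputable def ordTensor (R k : Type) [CommRing R] [CommRing k] [Algebra R k]
    (H : Type) [AddCommGroup H] [Module k H] [Module R H] [IsScalarTower R k H]
    (M : Type) [AddCommGroup M] [Module R M] (ι : M →ₗ[R] H) :
    M ⊗[R] M →ₗ[R] H ⊗[k] H :=
  TensorProduct.lift (LinearMap.mk₂ R (fun x y => ι x ⊗ₜ[k] ι y)
    (fun x x' y => by simp [map_add, TensorProduct.add_tmul])
    (fun r x y => by
      show ι (r • x) ⊗ₜ[k] ι y = r • (ι x ⊗ₜ[k] ι y)
      rw [map_smul, ← algebraMap_smul k r (ι x), TensorProduct.smul_tmul',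
        algebraMap_smul])
    (fun x y y' => by simp [map_add, TensorProduct.tmul_add])
    (fun r x y => by
      show ι x ⊗ₜ[k] ι (r • y) = r • (ι x ⊗ₜ[k] ι y)
      rw [map_smul, ← algebraMap_smul k r (ι y), TensorProduct.tmul_smul,
        algebraMap_smul]))

namespace WF
open MvPolynomial
open TensorProduct

section basics
variable {S : Type} [CommRing S] {n : ℕ}

/-- generators -/
noncomputable def gen : Fin n ⊕ Fin n → WeylAlgebra S n
  | .inl i => WeylAlgebra.X i
  | .inr i => WeylAlgebra.Y i

noncomputable def mkA (S : Type) [CommRing S] (n : ℕ) : FreeAlgebra S (Fin n ⊕ Fin n) →ₐ[S] WeylAlgebra S n :=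
  RingQuot.mkAlgHom S (WeylRel S n)

lemma mkA_surj : Function.Surjective (mkA S n) := RingQuot.mkAlgHom_surjective S (WeylRel S n)

lemma mkA_ι (v) : mkA S n (FreeAlgebra.ι S v) = gen v := by
  have := RingQuot.mkAlgHom_coe S (WeylRel S n)
  have h2 := RingHom.congr_fun this (FreeAlgebra.ι S v)
  cases v <;> exact h2

lemma mkA_rel {a b} (h : WeylRel S n a b) : mkA S n a = mkA S n b :=
  RingQuot.mkAlgHom_rel S h

lemma XX (i j : Fin n) : (WeylAlgebra.X i : WeylAlgebra S n) * WeylAlgebra.X j = WeylAlgebra.X j * WeylAlgebra.X i := by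
  have := mkA_rel (WeylRel.xx (R := S) i j)
  simpa [mkA_ι, gen] using this

lemma YY (i j : Fin n) : (WeylAlgebra.Y i : WeylAlgebra S n) * WeylAlgebra.Y j = WeylAlgebra.Y j * WeylAlgebra.Y i := by
  have := mkA_rel (WeylRel.yy (R := S) i j)
  simpa [mkA_ι, gen] using this

lemma YX (i j : Fin n) : (WeylAlgebra.Y i : WeylAlgebra S n) * WeylAlgebra.X j = WeylAlgebra.X j * WeylAlgebra.Y i + if i = j then 1 else 0 := by
  have := mkA_rel (WeylRel.yx (R := S) i j)
  simpa [mkA_ι, gen, apply_ite (mkA S n)] using this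

noncomputable def wlift {B : Type*} [Ring B] [Algebra S B] (fX fY : Fin n → B)
    (hxx : ∀ i j, fX i * fX j = fX j * fX i) (hyy : ∀ i j, fY i * fY j = fY j * fY i)
    (hyx : ∀ i j, fY i * fX j = fX j * fY i + if i = j then 1 else 0) : WeylAlgebra S n →ₐ[S] B :=
  RingQuot.liftAlgHom S (s := WeylRel S n) ⟨FreeAlgebra.lift S (Sum.elim fX fY), by
    intro x y h
    cases h with
    | xx i j => simpa using hxx i j
    | yy i j => simpa using hyy i j
    | yx i j => 
      have := hyx i j
      simp only [map_mul, FreeAlgebra.lift_ι_apply, Sum.elim_inl, Sum.elim_inr, map_add]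
      rw [this]; split_ifs <;> simp⟩

lemma wlift_mkA {B : Type*} [Ring B] [Algebra S B] (fX fY : Fin n → B) (h1 h2 h3) (z) :
    wlift (S := S) fX fY h1 h2 h3 (mkA S n z) = FreeAlgebra.lift S (Sum.elim fX fY) z := by
  exact RingQuot.liftAlgHom_mkAlgHom_apply S _ _ z

lemma wlift_X {B : Type*} [Ring B] [Algebra S B] (fX fY : Fin n → B) (h1 h2 h3) (i) :
    wlift (S := S) fX fY h1 h2 h3 (WeylAlgebra.X i) = fX i := by
  have := wlift_mkA (S := S) fX fY h1 h2 h3 (FreeAlgebra.ι S (Sum.inl i))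
  simpa [mkA_ι, gen] using this

lemma wlift_Y {B : Type*} [Ring B] [Algebra S B] (fX fY : Fin n → B) (h1 h2 h3) (i) :
    wlift (S := S) fX fY h1 h2 h3 (WeylAlgebra.Y i) = fY i := by
  have := wlift_mkA (S := S) fX fY h1 h2 h3 (FreeAlgebra.ι S (Sum.inr i))
  simpa [mkA_ι, gen] using this

lemma adjoin_gen : Algebra.adjoin S (Set.range (gen (S := S) (n := n))) = ⊤ := by
  have := FreeAlgebra.adjoin_range_ι (R := S) (X := Fin n ⊕ Fin n)
  have h2 := congrArg (Subalgebra.map (mkA S n)) this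
  rw [AlgHom.map_adjoin, ← Set.range_comp, Algebra.map_top, (AlgHom.range_eq_top _).2 mkA_surj] at h2
  rw [← h2]; congr 2; funext v; exact (mkA_ι v).symm

lemma pderiv_pderiv_comm {τ : Type*} (u v : τ) (P : MvPolynomial τ S) :
    pderiv u (pderiv v P) = pderiv v (pderiv u P) := by
  classical
  have : ⁅(pderiv u : Derivation S (MvPolynomial τ S) (MvPolynomial τ S)), (pderiv v : Derivation S (MvPolynomial τ S) (MvPolynomial τ S))⁆ = 0 := by
    apply derivation_ext
    intro i
    rw [Derivation.commutator_apply]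
    simp [pderiv_X, Pi.single_apply]
    split_ifs <;> simp
  have h2 := DFunLike.congr_fun this P
  rw [Derivation.commutator_apply] at h2
  exact sub_eq_zero.1 h2

/-- induction by left multiplication -/
lemma windL {P : WeylAlgebra S n → Prop} (h1 : P 1) (hX : ∀ i a, P a → P (WeylAlgebra.X i * a))
    (hY : ∀ i a, P a → P (WeylAlgebra.Y i * a)) (hadd : ∀ a b, P a → P b → P (a + b))
    (hs : ∀ (s : S) a, P a → P (s • a)) (a) : P a := by
  have key : ∀ a, a ∈ Algebra.adjoin S (Set.range (gen (S := S) (n := n))) → ∀ b, P b → P (a * b) := by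
    intro a ha
    induction ha using Algebra.adjoin_induction with
    | mem x hx => 
      obtain ⟨v, rfl⟩ := hx
      cases v with
      | inl i => exact hX i
      | inr i => exact hY i
    | algebraMap r => intro b hb; rw [← Algebra.smul_def]; exact hs r b hb
    | add x y _ _ hx hy => intro b hb; rw [add_mul]; exact hadd _ _ (hx b hb) (hy b hb)
    | mul x y _ _ hx hy => intro b hb; rw [mul_assoc]; exact hx _ (hy _ hb)
  simpa using key a (by rw [adjoin_gen]; trivial) 1 h1

lemma walgHom_ext {B : Type*} [Ring B] [Algebra S B] {f g : WeylAlgebra S n →ₐ[S] B}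
    (hX : ∀ i, f (WeylAlgebra.X i) = g (WeylAlgebra.X i)) (hY : ∀ i, f (WeylAlgebra.Y i) = g (WeylAlgebra.Y i)) : f = g := by
  ext a
  induction a using windL with
  | h1 => simp
  | hX i a h => simp [hX, h]
  | hY i a h => simp [hY, h]
  | hadd a b h h' => simp [h, h']
  | hs s a h => simp [h]

lemma center_of_gen {w : WeylAlgebra S n} (hX : ∀ i, Commute (WeylAlgebra.X i) w) (hY : ∀ i, Commute (WeylAlgebra.Y i) w) (a) : Commute a w := by
  induction a using windL with
  | h1 => exact Commute.one_left _
  | hX i a h => exact (hX i).mul_left h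
  | hY i a h => exact (hY i).mul_left h
  | hadd a b h h' => exact h.add_left h'
  | hs s a h => exact h.smul_left s

abbrev Pol (S : Type) [CommRing S] (n : ℕ) := MvPolynomial (Fin n ⊕ Fin n) S

noncomputable def opm (P : Pol S n) : Module.End S (Pol S n) := LinearMap.mulLeft S P
noncomputable def opd (v : Fin n ⊕ Fin n) : Module.End S (Pol S n) := (pderiv v).toLinearMap
@[simp] lemma opm_apply (P Q : Pol S n) : opm P Q = P * Q := rfl
@[simp] lemma opd_apply (v : Fin n ⊕ Fin n) (Q : Pol S n) : opd v Q = pderiv v Q := rfl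

noncomputable def rep : WeylAlgebra S n →ₐ[S] Module.End S (Pol S n) :=
  wlift (fun i => opm (X (.inl i))) (fun i => opm (X (.inr i)) + opd (.inl i))
    (by intro i j; apply LinearMap.ext; intro P; simp; ring)
    (by intro i j; apply LinearMap.ext; intro P; simp [Derivation.leibniz, pderiv_X]; rw [pderiv_pderiv_comm]; ring)
    (by 
      intro i j; apply LinearMap.ext; intro P; simp [Derivation.leibniz, pderiv_X]
      by_cases h : i = j
      · subst h; simp; ring
      · simp [h, Pi.single_apply, Ne.symm h]; ring)

lemma rep_X (i : Fin n) : rep (S := S) (WeylAlgebra.X i) = opm (X (.inl i)) := wlift_X _ _ _ _ _ i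
lemma rep_Y (i : Fin n) : rep (S := S) (WeylAlgebra.Y i) = opm (X (.inr i)) + opd (.inl i) := wlift_Y _ _ _ _ _ i

noncomputable def sg0 : WeylAlgebra S n →ₗ[S] Pol S n := (LinearMap.applyₗ (1 : Pol S n)) ∘ₗ (rep (S := S) (n := n)).toLinearMap
lemma sg0_apply (a : WeylAlgebra S n) : sg0 a = rep a 1 := rfl
lemma sg0_one : sg0 (1 : WeylAlgebra S n) = 1 := by simp [sg0_apply]
lemma sg0_X_mul (i) (a : WeylAlgebra S n) : sg0 (WeylAlgebra.X i * a) = X (.inl i) * sg0 a := by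
  simp [sg0_apply, rep_X]
lemma sg0_Y_mul (i) (a : WeylAlgebra S n) : sg0 (WeylAlgebra.Y i * a) = X (.inr i) * sg0 a + pderiv (.inl i) (sg0 a) := by
  simp [sg0_apply, rep_Y]
lemma rep_comm_y (i) (a : WeylAlgebra S n) (P) : rep a (X (.inr i) * P) = X (.inr i) * rep a P := by
  induction a using windL generalizing P with
  | h1 => simp
  | hX j a h => simp [rep_X, h]; ring
  | hY j a h => simp [rep_Y, h, Derivation.leibniz, pderiv_X]; ring
  | hadd a b h h' => simp [h, h']; ring
  | hs s a h => simp [h]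
lemma rep_comm_x (i) (a : WeylAlgebra S n) (P) : rep a (X (.inl i) * P + pderiv (.inr i) P) = X (.inl i) * rep a P + pderiv (.inr i) (rep a P) := by
  induction a using windL generalizing P with
  | h1 => simp
  | hX j a h => 
    simp only [map_mul, rep_X, Module.End.mul_apply, h, opm_apply, Derivation.leibniz, pderiv_X, smul_eq_mul]
    simp; ring
  | hY j a h => 
    rw [map_mul, Module.End.mul_apply, h, Module.End.mul_apply]
    simp only [rep_Y, opm_apply, Derivation.leibniz, pderiv_X, smul_eq_mul, LinearMap.add_apply, opd_apply, map_add]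
    rw [pderiv_pderiv_comm]
    by_cases hij : i = j
    · subst hij; simp; ring
    · simp [hij, Ne.symm hij]; ring
  | hadd a b h h' => rw [map_add rep, LinearMap.add_apply, h, h']; simp; ring
  | hs s a h => rw [map_smul rep, LinearMap.smul_apply, h]; simp [smul_eq_C_mul]; ring
lemma sg0_mul_Y (i) (a : WeylAlgebra S n) : sg0 (a * WeylAlgebra.Y i) = X (.inr i) * sg0 a := by
  have := rep_comm_y i a 1
  simpa [sg0_apply, rep_Y] using this
lemma sg0_mul_X (i) (a : WeylAlgebra S n) : sg0 (a * WeylAlgebra.X i) = X (.inl i) * sg0 a + pderiv (.inr i) (sg0 a) := by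
  have := rep_comm_x i a 1
  simpa [sg0_apply, rep_X] using this

/-- commuting operators on the Weyl algebra -/
noncomputable def opL : Fin n ⊕ Fin n → Module.End S (WeylAlgebra S n)
  | .inl i => LinearMap.mulLeft S (WeylAlgebra.X i)
  | .inr i => LinearMap.mulRight S (WeylAlgebra.Y i)

lemma opL_comm (u v : Fin n ⊕ Fin n) : opL (S := S) u * opL v = opL v * opL u := by
  apply LinearMap.ext; intro a
  rcases u with i | i <;> rcases v with j | j <;> simp [opL, mul_assoc, XX, YY]
  · rw [← mul_assoc, XX, mul_assoc]

noncomputable def tau0 : Pol S n →ₗ[S] WeylAlgebra S n := by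
  letI : CommRing (Algebra.adjoin S (Set.range (opL (S := S) (n := n)))) := Algebra.adjoinCommRingOfComm S (by
    rintro _ ⟨u, rfl⟩ _ ⟨v, rfl⟩; exact opL_comm u v)
  letI : Algebra S (Algebra.adjoin S (Set.range (opL (S := S) (n := n)))) := Subalgebra.algebra _
  exact (LinearMap.applyₗ (1 : WeylAlgebra S n)) ∘ₗ (Algebra.adjoin S (Set.range (opL (S := S) (n := n)))).val.toLinearMap ∘ₗ
    (MvPolynomial.aeval (fun v => (⟨opL v, Algebra.subset_adjoin ⟨v, rfl⟩⟩ : Algebra.adjoin S (Set.range (opL (S := S) (n := n)))))).toLinearMap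

lemma tau0_one : tau0 (1 : Pol S n) = 1 := by
  simp [tau0]
lemma tau0_X_mul (v) (P : Pol S n) : tau0 (X v * P) = opL v (tau0 P) := by
  simp only [tau0, LinearMap.comp_apply, AlgHom.toLinearMap_apply, map_mul, aeval_X]
  rfl

lemma Y_mul_tau0 (i) (P : Pol S n) : WeylAlgebra.Y i * tau0 P = tau0 (X (.inr i) * P + pderiv (.inl i) P) := by
  induction P using MvPolynomial.induction_on with
  | C s => 
    have : (C s : Pol S n) = s • 1 := by rw [smul_eq_C_mul, mul_one]
    rw [this]
    have h2 := tau0_X_mul (S := S) (Sum.inr i) 1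
    simp only [mul_one, opL, tau0_one, LinearMap.mulRight_apply, one_mul] at h2
    simp [tau0_one, h2]
  | add P Q hP hQ => simp only [map_add, mul_add, hP, hQ]; abel
  | mul_X P v hP =>
    rw [mul_comm P (X v), tau0_X_mul]
    rcases v with j | j
    · simp only [opL, LinearMap.mulLeft_apply]
      rw [← mul_assoc, YX, add_mul, mul_assoc, hP]
      simp only [map_add, mul_add, Derivation.leibniz, pderiv_X, smul_eq_mul, tau0_X_mul, opL, LinearMap.mulLeft_apply, LinearMap.mulRight_apply]
      by_cases h : i = j
      · subst h; simp [mul_assoc]; abel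
      · simp [h, mul_assoc, Ne.symm h]
    · simp only [opL, LinearMap.mulRight_apply]
      rw [← mul_assoc, hP]
      simp only [map_add, mul_add, Derivation.leibniz, pderiv_X, smul_eq_mul, tau0_X_mul, opL, LinearMap.mulLeft_apply, LinearMap.mulRight_apply]
      simp [add_mul, mul_assoc, YY j i]

lemma sg0_tau0 (P : Pol S n) : sg0 (tau0 P) = P := by
  induction P using MvPolynomial.induction_on with
  | C s => 
    have : (C s : Pol S n) = s • 1 := by rw [smul_eq_C_mul, mul_one]
    rw [this]; simp [tau0_one, sg0_one]
  | add P Q hP hQ => simp [hP, hQ]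
  | mul_X P v hP =>
    rw [mul_comm P (X v), tau0_X_mul]
    rcases v with j | j
    · simp [opL, sg0_X_mul, hP]
    · simp [opL, sg0_mul_Y, hP]

lemma tau0_surj : Function.Surjective (tau0 (S := S) (n := n)) := by
  intro a
  induction a using windL with
  | h1 => exact ⟨1, tau0_one⟩
  | hX i a h => obtain ⟨P, rfl⟩ := h; exact ⟨X (.inl i) * P, by rw [tau0_X_mul]; rfl⟩
  | hY i a h => obtain ⟨P, rfl⟩ := h; exact ⟨_, (Y_mul_tau0 i P).symm⟩
  | hadd a b h h' => obtain ⟨P, rfl⟩ := h; obtain ⟨Q, rfl⟩ := h'; exact ⟨P + Q, by simp⟩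
  | hs s a h => obtain ⟨P, rfl⟩ := h; exact ⟨s • P, by simp⟩

/-- symbol equivalence -/
noncomputable def sg (S : Type) [CommRing S] (n : ℕ) : WeylAlgebra S n ≃ₗ[S] Pol S n :=
  { sg0 with
    invFun := tau0
    left_inv := fun a => by obtain ⟨P, rfl⟩ := tau0_surj a; simp [sg0_tau0]
    right_inv := sg0_tau0 }

lemma sg_one : sg S n 1 = 1 := sg0_one
lemma sg_X_mul (i) (a : WeylAlgebra S n) : sg S n (WeylAlgebra.X i * a) = X (.inl i) * sg S n a := sg0_X_mul i a
lemma sg_Y_mul (i) (a : WeylAlgebra S n) : sg S n (WeylAlgebra.Y i * a) = X (.inr i) * sg S n a + pderiv (.inl i) (sg S n a) := sg0_Y_mul i a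
lemma sg_mul_Y (i) (a : WeylAlgebra S n) : sg S n (a * WeylAlgebra.Y i) = X (.inr i) * sg S n a := sg0_mul_Y i a
lemma sg_mul_X (i) (a : WeylAlgebra S n) : sg S n (a * WeylAlgebra.X i) = X (.inl i) * sg S n a + pderiv (.inr i) (sg S n a) := sg0_mul_X i a

/-- coefficients -/
noncomputable def cf (m : (Fin n ⊕ Fin n) →₀ ℕ) : WeylAlgebra S n →ₗ[S] S := (lcoeff S m) ∘ₗ (sg S n).toLinearMap
lemma cf_apply (m) (a : WeylAlgebra S n) : cf m a = coeff m (sg S n a) := rfl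
lemma cf_ext {a b : WeylAlgebra S n} (h : ∀ m, cf m a = cf m b) : a = b := (sg S n).injective (MvPolynomial.ext _ _ h)

end basics

section towers
variable (R : Type) [CommRing R] (S : Type) [CommRing S] [Algebra R S] (n : ℕ)

instance towerW : IsScalarTower R S (WeylAlgebra S n) :=
  inferInstanceAs (IsScalarTower R S (RingQuot (WeylRel S n)))

noncomputable def wmap : WeylAlgebra R n →ₐ[R] WeylAlgebra S n :=
  wlift WeylAlgebra.X WeylAlgebra.Y XX YY YX

lemma wmap_X (i) : wmap R S n (WeylAlgebra.X i) = WeylAlgebra.X i := wlift_X _ _ _ _ _ i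
lemma wmap_Y (i) : wmap R S n (WeylAlgebra.Y i) = WeylAlgebra.Y i := wlift_Y _ _ _ _ _ i

lemma sg_wmap (a : WeylAlgebra R n) : sg S n (wmap R S n a) = MvPolynomial.map (algebraMap R S) (sg R n a) := by
  induction a using windL with
  | h1 => simp [sg_one]
  | hX i a h => simp [wmap_X, sg_X_mul, h]
  | hY i a h => simp [wmap_Y, sg_Y_mul, h, pderiv_map]
  | hadd a b h h' => simp [h, h']
  | hs s a h => 
    rw [map_smul, ← algebraMap_smul S s, map_smul, h, map_smul, smul_eq_C_mul, smul_eq_C_mul]; simp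

lemma cf_wmap (m) (a : WeylAlgebra R n) : cf m (wmap R S n a) = algebraMap R S (cf m a) := by
  simp [cf_apply, sg_wmap, coeff_map]

lemma eq_wmap (j : WeylAlgebra R n →+* WeylAlgebra S n) (hX : ∀ i, j (WeylAlgebra.X i) = WeylAlgebra.X i)
    (hY : ∀ i, j (WeylAlgebra.Y i) = WeylAlgebra.Y i)
    (hs : ∀ r, j (algebraMap R (WeylAlgebra R n) r) = algebraMap R _ r) (a) : j a = wmap R S n a := by
  let j' : WeylAlgebra R n →ₐ[R] WeylAlgebra S n := { j with commutes' := hs }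
  have : j' = wmap R S n := walgHom_ext (by intro i; rw [wmap_X]; exact hX i) (by intro i; rw [wmap_Y]; exact hY i)
  exact DFunLike.congr_fun this a

lemma span_wmap : Submodule.span S (Set.range (wmap R S n)) = ⊤ := by
  rw [eq_top_iff]
  rintro a -
  obtain ⟨P, rfl⟩ := (sg S n).symm.surjective a
  induction P using MvPolynomial.induction_on' with
  | monomial m s =>
    have : (sg S n).symm (monomial m s) = s • wmap R S n ((sg R n).symm (monomial m 1)) := by
      rw [LinearEquiv.symm_apply_eq, map_smul, sg_wmap]; simp [smul_monomial]
    rw [this]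
    exact Submodule.smul_mem _ _ (Submodule.subset_span ⟨_, rfl⟩)
  | add P Q hP hQ => rw [map_add]; exact Submodule.add_mem _ hP hQ

end towers
end WF

namespace WF
open MvPolynomial
open TensorProduct

section ext
variable (R : Type) [CommRing R] (S : Type) [CommRing S] [Algebra R S] (n : ℕ)

noncomputable def ext0 (f : WeylAlgebra R n →ₗ[R] WeylAlgebra R n) : WeylAlgebra S n →ₗ[S] WeylAlgebra S n :=
  ((basisMonomials (Fin n ⊕ Fin n) S).constr S (fun m => wmap R S n (f ((sg R n).symm (monomial m 1))))) ∘ₗ (sg S n).toLinearMap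

lemma ext0_wmap (f : WeylAlgebra R n →ₗ[R] WeylAlgebra R n) (a) : ext0 R S n f (wmap R S n a) = wmap R S n (f a) := by
  obtain ⟨P, rfl⟩ := (sg R n).symm.surjective a
  induction P using MvPolynomial.induction_on' with
  | monomial m s =>
    have : (monomial m s : Pol R n) = s • monomial m 1 := by simp [smul_monomial]
    rw [this]
    simp only [map_smul]
    rw [LinearMap.map_smul_of_tower]
    congr 1
    simp only [ext0, LinearMap.comp_apply, LinearEquiv.coe_coe, sg_wmap, LinearEquiv.apply_symm_apply, map_monomial, map_one]
    have := (basisMonomials (Fin n ⊕ Fin n) S).constr_basis S (fun m => wmap R S n (f ((sg R n).symm (monomial m 1)))) m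
    rwa [coe_basisMonomials] at this
  | add P Q hP hQ => simp only [map_add, hP, hQ]

lemma hom_ext_wmap {M : Type*} [AddCommGroup M] [Module S M] {f g : WeylAlgebra S n →ₗ[S] M} (h : ∀ a, f (wmap R S n a) = g (wmap R S n a)) : f = g :=
  LinearMap.ext_on_range (span_wmap R S n) h

noncomputable def extL : (WeylAlgebra R n →ₗ[R] WeylAlgebra R n) →ₗ[R] (WeylAlgebra S n →ₗ[R] WeylAlgebra S n) where
  toFun f := (ext0 R S n f).restrictScalars R
  map_add' f g := by
    have : ext0 R S n (f + g) = ext0 R S n f + ext0 R S n g := hom_ext_wmap R S n (fun a => by simp [ext0_wmap])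
    ext a; simp [this]
  map_smul' r f := by
    have : ext0 R S n (r • f) = (algebraMap R S r) • ext0 R S n f := hom_ext_wmap R S n (fun a => by simp [ext0_wmap])
    ext a; simp [this]

variable {R} {H : Type} [Ring H] [Module R H]
    {comul : H →ₗ[R] H ⊗[R] H} {counit : H →ₗ[R] R} {n}

noncomputable def extAct (ha : ModAlgAction R H comul counit (WeylAlgebra R n)) : ModAlgAction R H comul counit (WeylAlgebra S n) where
  act := extL R S n ∘ₗ ha.act
  one_act a := by
    have : ext0 R S n (ha.act 1) = LinearMap.id := hom_ext_wmap R S n (fun a => by simp [ext0_wmap, ha.one_act])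
    exact DFunLike.congr_fun this a
  mul_act g h a := by
    have : ext0 R S n (ha.act (g * h)) = ext0 R S n (ha.act g) ∘ₗ ext0 R S n (ha.act h) :=
      hom_ext_wmap R S n (fun a => by simp [ext0_wmap, ha.mul_act])
    exact DFunLike.congr_fun this a
  act_one h := by
    have := ext0_wmap R S n (ha.act h) 1
    rw [map_one] at this
    exact this.trans (by rw [ha.act_one]; simp)
  act_mul h a b := by
    let B : H ⊗[R] H →ₗ[R] (WeylAlgebra S n →ₗ[S] WeylAlgebra S n →ₗ[S] WeylAlgebra S n) :=
      TensorProduct.lift (LinearMap.mk₂ R (fun g h => 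
        ((LinearMap.mul S (WeylAlgebra S n)).comp (ext0 R S n (ha.act g))).compl₂ (ext0 R S n (ha.act h)))
        (fun x x' y => by 
          have h1 := (extL R S n).map_add (ha.act x) (ha.act x')
          ext a b
          have := DFunLike.congr_fun h1 a
          simp only [extL, LinearMap.coe_mk, AddHom.coe_mk, LinearMap.coe_restrictScalars, LinearMap.add_apply] at this
          simp [this, add_mul])
        (fun r x y => by
          have h1 := (extL R S n).map_smul r (ha.act x)
          ext a b
          have := DFunLike.congr_fun h1 a
          simp only [extL, LinearMap.coe_mk, AddHom.coe_mk, LinearMap.coe_restrictScalars, LinearMap.smul_apply] at this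
          simp [this])
        (fun x y y' => by
          have h1 := (extL R S n).map_add (ha.act y) (ha.act y')
          ext a b
          have := DFunLike.congr_fun h1 b
          simp only [extL, LinearMap.coe_mk, AddHom.coe_mk, LinearMap.coe_restrictScalars, LinearMap.add_apply] at this
          simp [this, mul_add])
        (fun r x y => by
          have h1 := (extL R S n).map_smul r (ha.act y)
          ext a b
          have := DFunLike.congr_fun h1 b
          simp only [extL, LinearMap.coe_mk, AddHom.coe_mk, LinearMap.coe_restrictScalars, LinearMap.smul_apply] at this
          simp [this]))
    have hB : ∀ z a b, B z a b = TensorProduct.lift (((LinearMap.mul R (WeylAlgebra S n)).comp ((extL R S n ∘ₗ ha.act).flip a)).compl₂ ((extL R S n ∘ₗ ha.act).flip b)) z := by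
      intro z a b
      induction z using TensorProduct.induction_on with
      | zero => simp
      | tmul x y => simp [B, extL]
      | add x y hx hy => simp only [map_add, LinearMap.add_apply, hx, hy]
    have key : (LinearMap.mul S (WeylAlgebra S n)).compr₂ (ext0 R S n (ha.act h)) = B (comul h) := by
      apply hom_ext_wmap R S n
      intro a
      apply hom_ext_wmap R S n
      intro b
      have h1 : ∀ z, B z (wmap R S n a) (wmap R S n b) = wmap R S n (TensorProduct.lift (((LinearMap.mul R (WeylAlgebra R n)).comp (ha.act.flip a)).compl₂ (ha.act.flip b)) z) := by
        intro z
        induction z using TensorProduct.induction_on with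
        | zero => simp
        | tmul x y => simp [B, ext0_wmap]
        | add x y hx hy => simp only [map_add, LinearMap.add_apply, hx, hy]
      rw [h1, ← ha.act_mul]
      simp [← map_mul, ext0_wmap]
    rw [← hB]
    exact DFunLike.congr_fun (DFunLike.congr_fun key a) b

lemma extAct_wmap (ha : ModAlgAction R H comul counit (WeylAlgebra R n)) (h a) :
    (extAct S ha).act h (wmap R S n a) = wmap R S n (ha.act h a) := ext0_wmap R S n _ _

lemma extAct_smul (ha : ModAlgAction R H comul counit (WeylAlgebra R n)) (h a) (s : S) :
    (extAct S ha).act h (s • a) = s • (extAct S ha).act h a := (ext0 R S n (ha.act h)).map_smul s a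
end ext
end WF

namespace WF
open TensorProduct Coalgebra WithConv

section conv
variable {R : Type} [CommRing R] {H : Type} [Ring H] [HopfAlgebra R H] {A : Type} [Ring A] [Algebra R A]

abbrev NN (R H A : Type) [CommRing R] [Ring H] [HopfAlgebra R H] [Ring A] [Algebra R A] := WithConv (H →ₗ[R] Module.End R A)

lemma NN_ext {f g : NN R H A} (h : ∀ x a, f x a = g x a) : f = g := by
  apply WithConv.ofConv_injective
  ext x a; exact h x a

lemma NN_mul (f g : NN R H A) (h : H) (a : A) : (f * g) h a = ∑ i ∈ (ℛ R h).index, f ((ℛ R h).left i) (g ((ℛ R h).right i) a) := by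
  rw [(ℛ R h).convMul_apply]; simp [LinearMap.sum_apply]

lemma act_mul_sum (ha : HopfAction R H A) (h : H) (a b : A) : ha.act h (a * b) =
    ∑ i ∈ (ℛ R h).index, ha.act ((ℛ R h).left i) a * ha.act ((ℛ R h).right i) b := by
  rw [ha.act_mul]
  conv_lhs => rw [← (ℛ R h).eq]
  simp

variable (ha : HopfAction R H A)

noncomputable def al : NN R H A := toConv ha.act
noncomputable def al' : NN R H A := toConv (ha.act ∘ₗ HopfAlgebra.antipode R)

@[simp] lemma al_apply (h a) : al ha h a = ha.act h a := rfl
@[simp] lemma al'_apply (h a) : al' ha h a = ha.act (HopfAlgebra.antipode R h) a := rfl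

lemma NN_one (h : H) (a : A) : (1 : NN R H A) h a = counit (R := R) h • a := by
  rw [LinearMap.convOne_apply]; simp [Module.algebraMap_end_apply]

lemma al_mul_al' : al ha * al' ha = 1 := by
  apply NN_ext; intro h a
  rw [NN_mul, NN_one]
  simp only [al_apply, al'_apply, ← ha.mul_act]
  rw [← LinearMap.sum_apply, ← map_sum, HopfAlgebra.sum_mul_antipode_eq_smul]
  simp [ha.one_act]

lemma al'_mul_al : al' ha * al ha = 1 := by
  apply NN_ext; intro h a
  rw [NN_mul, NN_one]
  simp only [al_apply, al'_apply, ← ha.mul_act]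
  rw [← LinearMap.sum_apply, ← map_sum, HopfAlgebra.sum_antipode_mul_eq_smul]
  simp [ha.one_act]

/-- `h ↦ ε(h) f` -/
noncomputable def ioE : Module.End R A →+* NN R H A where
  toFun f := toConv ((LinearMap.toSpanSingleton R (Module.End R A) f) ∘ₗ counit)
  map_one' := by apply NN_ext; intro h a; rw [NN_one]; simp
  map_zero' := by apply NN_ext; intro h a; simp
  map_add' f g := by apply NN_ext; intro h a; simp
  map_mul' f g := by
    apply NN_ext; intro h a; rw [NN_mul]
    simp only [LinearMap.comp_apply, LinearMap.toSpanSingleton_apply, LinearMap.smul_apply, Module.End.mul_apply, map_smul]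
    conv_lhs => rw [← Coalgebra.sum_counit_smul (R := R) (ℛ R h)]
    simp [smul_smul, Finset.sum_smul, mul_comm]

lemma ioE_apply (f : Module.End R A) (h : H) (a) : ioE f h a = counit (R := R) h • f a := rfl

noncomputable def io : A →+* NN R H A := (ioE (R := R) (H := H)).comp (Algebra.lmul R A).toRingHom
lemma io_apply (c : A) (h : H) (a) : io (R := R) c h a = counit (R := R) h • (c * a) := rfl

lemma ioE_mul (f : Module.End R A) (g : NN R H A) (h : H) (a) : ((ioE f : NN R H A) * g) h a = f (g h a) := by
  rw [NN_mul]
  simp only [ioE_apply]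
  conv_rhs => rw [← Coalgebra.sum_counit_smul (R := R) (ℛ R h)]
  simp [LinearMap.sum_apply]

lemma sum_counit_smul' (h : H) : ∑ i ∈ (ℛ R h).index, counit (R := R) ((ℛ R h).right i) • (ℛ R h).left i = h := by
  have := congrArg (TensorProduct.rid R H) (Coalgebra.sum_tmul_counit_eq (R := R) (ℛ R h))
  simp only [map_sum, TensorProduct.rid_tmul, one_smul] at this
  exact this

lemma mul_ioE (f : Module.End R A) (g : NN R H A) (h : H) (a) : (g * (ioE f : NN R H A)) h a = g h (f a) := by
  rw [NN_mul]
  simp only [ioE_apply]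
  conv_rhs => rw [← sum_counit_smul' (R := R) h]
  simp [LinearMap.sum_apply]

lemma io_mul (c : A) (g : NN R H A) (h : H) (a) : ((io c : NN R H A) * g) h a = c * g h a := ioE_mul _ _ _ _
lemma mul_io (c : A) (g : NN R H A) (h : H) (a) : (g * (io c : NN R H A)) h a = g h (c * a) := mul_ioE _ _ _ _

noncomputable def alU : (NN R H A)ˣ := ⟨al ha, al' ha, al_mul_al' ha, al'_mul_al ha⟩

noncomputable def ro : A →+* NN R H A where
  toFun a := al ha * io a * al' ha
  map_one' := by simp [al_mul_al']
  map_zero' := by simp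
  map_add' a b := by simp [mul_add, add_mul]
  map_mul' a b := by
    have := al'_mul_al ha
    calc _ = al ha * io a * 1 * io b * al' ha := by rw [map_mul]; noncomm_ring
      _ = _ := by rw [← this]; noncomm_ring

lemma ro_def (a) : ro ha a = al ha * io a * al' ha := rfl

lemma ro_apply (a : A) (h b) : ro ha a h b = ha.act h a * b := by
  let r : NN R H A := toConv ((Algebra.lmul R A).toLinearMap ∘ₗ (ha.act.flip a))
  have hr : ∀ h b, r h b = ha.act h a * b := fun h b => rfl
  have : al ha * (io a : NN R H A) = r * al ha := by
    apply NN_ext; intro h b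
    rw [mul_io, NN_mul, al_apply, act_mul_sum]; rfl
  rw [ro_def, this, mul_assoc, al_mul_al', mul_one, hr]

end conv
end WF

namespace WF
open TensorProduct Coalgebra WithConv

section dv
variable {A : Type} [Ring A]
lemma dvl {N : ℕ} {x : A} (h : (N : A) ∣ x) (y : A) : (N : A) ∣ y * x := by
  obtain ⟨z, rfl⟩ := h
  exact ⟨y * z, by rw [← mul_assoc, ← mul_assoc, (Nat.cast_commute N y).eq]⟩
lemma dvr {N : ℕ} {x : A} (h : (N : A) ∣ x) (y : A) : (N : A) ∣ x * y := Dvd.dvd.mul_right h y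

/-- central modulo `N` -/
def CM (N : ℕ) (w : A) : Prop := ∀ x, (N : A) ∣ w * x - x * w

structure Good (p : ℕ) (A : Type) [Ring A] : Prop where
  tf : ∀ a : A, (p : A) * a = 0 → a = 0
  prime : ∀ a b : A, (p : A) ∣ a * b → (p : A) ∣ a ∨ (p : A) ∣ b
  nt : ¬ (p : A) ∣ 1
  val : ∀ a : A, a ≠ 0 → ∃ (m : ℕ) (a' : A), a = ((p ^ m : ℕ) : A) * a' ∧ ¬ (p : A) ∣ a'
  rank : ∀ (d : ℕ) (M : Fin d → Fin (d+1) → A), ∃ c : Fin (d+1) → A, c ≠ 0 ∧ ∀ i, ∑ j, c j * M i j = 0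
  cmult : ∀ b : A, ¬ (p : A) ∣ b → ∃ a, ¬ (p : A) ∣ a * b ∧ CM p (a * b)
  index : ∀ (d s : ℕ), 1 ≤ s → d < p → ∀ E : Subring A, (∀ a : A, (p : A) * a ∈ E) → (∀ w : A, CM (p ^ s) w → w ∈ E) →
    (∀ u x : A, CM (p ^ s) u → ¬ (p : A) ∣ u → u * x ∈ E → x ∈ E) →
    (∀ v : Fin (d+1) → A, ∃ c : Fin (d+1) → A, (∀ j, c j ∈ E) ∧ (∃ j, CM (p ^ s) (c j) ∧ ¬ (p : A) ∣ c j) ∧ ∑ j, c j * v j = 0) →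
    ∀ x, x ∈ E

variable {p : ℕ} 

lemma Good.tfs (g : Good p A) (s : ℕ) (a : A) (h : ((p ^ s : ℕ) : A) * a = 0) : a = 0 := by
  induction s with
  | zero => simpa using h
  | succ s ih => 
    apply ih; apply g.tf
    rw [← h]; push_cast; rw [pow_succ']; noncomm_ring

lemma Good.primes (g : Good p A) (s : ℕ) (a b : A) (ha : ¬ (p : A) ∣ a) (h : ((p ^ s : ℕ) : A) ∣ a * b) : ((p ^ s : ℕ) : A) ∣ b := by
  induction s generalizing b with
  | zero => simp
  | succ s ih =>
    obtain ⟨z, hz⟩ := h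
    have h1 : (p : A) ∣ a * b := ⟨((p ^ s : ℕ) : A) * z, by rw [hz]; push_cast; rw [pow_succ']; noncomm_ring⟩
    rcases g.prime _ _ h1 with h2 | ⟨b', rfl⟩
    · exact absurd h2 ha
    have h3 : a * b' = ((p ^ s : ℕ) : A) * z := by
      apply sub_eq_zero.1; apply g.tf
      rw [mul_sub, sub_eq_zero, ← mul_assoc, (Nat.cast_commute p a).eq, mul_assoc, hz]
      push_cast; rw [pow_succ']; noncomm_ring
    obtain ⟨y, rfl⟩ := ih b' ⟨z, h3⟩
    exact ⟨y, by push_cast; rw [pow_succ']; noncomm_ring⟩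

lemma Good.dom (g : Good p A) (a b : A) (h : a * b = 0) : a = 0 ∨ b = 0 := by
  by_contra hc
  push Not at hc
  obtain ⟨m, a', rfl, ha⟩ := g.val a hc.1
  have h2 : a' * b = 0 := g.tfs m _ (by rw [← mul_assoc]; exact h)
  obtain ⟨m', b', rfl, hb⟩ := g.val b hc.2
  have h3 : a' * b' = 0 := g.tfs m' _ (by rw [← h2, ← mul_assoc, ← mul_assoc, (Nat.cast_commute _ a').eq])
  rcases g.prime a' b' (h3 ▸ dvd_zero _) with h | h
  · exact ha h
  · exact hb h

lemma Good.ore (g : Good p A) (e u : A) (hu : ¬ (p : A) ∣ u) : ∃ t t' : A, ¬ (p : A) ∣ t ∧ t * e = t' * u := by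
  obtain ⟨c, hc0, hc⟩ := g.rank 1 (fun _ => ![e, - u])
  have h1 := hc 0
  simp [Fin.sum_univ_two] at h1
  have h2 : c 0 * e = c 1 * u := by rw [← sub_eq_zero, ← h1]; abel
  have h0 : c 0 ≠ 0 := by
    intro h0
    rw [h0, zero_mul] at h2
    rcases g.dom _ _ h2.symm with h3 | h3
    · apply hc0; funext j; fin_cases j <;> simp [h0, h3]
    · exact hu (h3 ▸ dvd_zero _)
  obtain ⟨m, t, ht, htp⟩ := g.val _ h0
  rw [ht, mul_assoc] at h2
  have h4 : ∃ t', c 1 = ((p ^ m : ℕ) : A) * t' := by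
    clear hc0 hc h1 h0 ht
    have h5 : ((p ^ m : ℕ) : A) ∣ c 1 * u := ⟨_, h2.symm⟩
    generalize c 1 = x at *
    clear h2
    induction m generalizing x with
    | zero => exact ⟨x, by simp⟩
    | succ m ih =>
      obtain ⟨z, hz⟩ := h5
      have h1 : (p : A) ∣ x * u := ⟨((p ^ m : ℕ) : A) * z, by rw [hz]; push_cast; rw [pow_succ']; noncomm_ring⟩
      rcases g.prime _ _ h1 with ⟨x', rfl⟩ | h2
      swap; · exact absurd h2 hu
      have h3 : x' * u = ((p ^ m : ℕ) : A) * z := by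
        apply sub_eq_zero.1; apply g.tf
        rw [mul_sub, sub_eq_zero, ← mul_assoc, hz]
        push_cast; rw [pow_succ']; noncomm_ring
      obtain ⟨y, rfl⟩ := ih x' ⟨z, h3⟩
      exact ⟨y, by push_cast; rw [pow_succ']; noncomm_ring⟩
  obtain ⟨t', ht'⟩ := h4
  refine ⟨t, t', htp, sub_eq_zero.1 (g.tfs m _ ?_)⟩
  rw [mul_sub, h2, ht']; noncomm_ring

lemma CM_pow_succ {m : ℕ} (hm : 1 ≤ m) {t : A} (ht : CM (p ^ m) t) : CM (p ^ (m + 1)) (t ^ p) := by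
  intro x
  obtain ⟨y, hy⟩ := ht x
  -- t^i x - x t^i
  have key : ∀ i : ℕ, ∃ z, t ^ i * x - x * t ^ i = ((p ^ m : ℕ) : A) * ((i : A) * t ^ (i - 1) * y) + ((p ^ (m+1) : ℕ) : A) * z := by
    intro i
    induction i with
    | zero => exact ⟨0, by simp⟩
    | succ i ih =>
      obtain ⟨z, hz⟩ := ih
      have hty : (p : A) ∣ y * t ^ i - t ^ i * y := by
        have hcm : CM p t := fun x => (by
          obtain ⟨q, hq⟩ := ht x
          refine ⟨((p ^ (m-1) : ℕ) : A) * q, ?_⟩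
          rw [hq, ← mul_assoc, ← Nat.cast_mul, ← pow_succ', Nat.sub_add_cancel hm])
        have : ∀ i, (p : A) ∣ y * t ^ i - t ^ i * y := by
          intro i
          induction i with
          | zero => simp
          | succ i ih =>
            have e : y * t ^ (i+1) - t ^ (i+1) * y = (y * t ^ i - t ^ i * y) * t - t ^ i * (t * y - y * t) := by
              rw [pow_succ]; noncomm_ring
            rw [e]
            exact dvd_sub (dvr ih _) (dvl (hcm y) _)
        exact this i
      obtain ⟨z', hz'⟩ := hty
      refine ⟨t * z + z', ?_⟩
      have e : t ^ (i+1) * x - x * t ^ (i+1) = t * (t ^ i * x - x * t ^ i) + (t * x - x * t) * t ^ i := by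
        rw [pow_succ']; noncomm_ring
      rw [e, hz, hy, Nat.add_sub_cancel]
      have e2 : y * t ^ i = t ^ i * y + p * z' := by rw [← hz']; abel
      have e3 : (i : A) * (t * t ^ (i - 1)) = i * t ^ i := by
        cases i with
        | zero => simp
        | succ i => rw [Nat.add_sub_cancel, ← pow_succ']
      have c1 := (Nat.cast_commute (p ^ m) t).eq
      have c2 := (Nat.cast_commute (p ^ (m+1)) t).eq
      have c3 := (Nat.cast_commute i t).eq
      rw [mul_assoc _ y, e2]
      calc t * (((p ^ m : ℕ) : A) * (i * t ^ (i - 1) * y) + ((p ^ (m+1) : ℕ) : A) * z) + ((p ^ m : ℕ) : A) * (t ^ i * y + p * z')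
          = (t * ((p ^ m : ℕ) : A)) * (i * t ^ (i-1) * y) + (t * ((p ^ (m+1) : ℕ) : A)) * z + ((p ^ m : ℕ) : A) * t ^ i * y + ((p ^ m : ℕ) : A) * p * z' := by noncomm_ring
        _ = ((p ^ m : ℕ) : A) * ((t * i) * t ^ (i-1) * y) + ((p ^ (m+1) : ℕ) : A) * (t * z) + ((p ^ m : ℕ) : A) * t ^ i * y + ((p ^ m : ℕ) : A) * p * z' := by rw [← c1, ← c2]; noncomm_ring
        _ = ((p ^ m : ℕ) : A) * (i * (t * t ^ (i-1)) * y) + ((p ^ (m+1) : ℕ) : A) * (t * z) + ((p ^ m : ℕ) : A) * t ^ i * y + ((p ^ m : ℕ) : A) * p * z' := by rw [← c3]; noncomm_ring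
        _ = _ := by
          rw [e3, ← Nat.cast_mul, ← pow_succ]; push_cast; noncomm_ring
  obtain ⟨z, hz⟩ := key p
  rw [hz]
  refine dvd_add ⟨t ^ (p-1) * y, ?_⟩ ⟨z, rfl⟩
  rw [← mul_assoc, ← mul_assoc, ← Nat.cast_mul, ← pow_succ, mul_assoc]

lemma Good.cmults (g : Good p A) (s : ℕ) (b : A) (hb : ¬ (p : A) ∣ b) : ∃ a, ¬ (p : A) ∣ a * b ∧ CM (p ^ (s+1)) (a * b) := by
  induction s with
  | zero => simpa using g.cmult b hb
  | succ s ih =>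
    obtain ⟨a, h1, h2⟩ := ih
    have hnp : ∀ i, ¬ (p : A) ∣ (a * b) ^ i := by
      intro i
      induction i with
      | zero => simpa using g.nt
      | succ i ih => 
        rw [pow_succ]; intro h
        rcases g.prime _ _ h with h | h
        · exact ih h
        · exact h1 h
    have hp : p ≠ 0 := by
      rintro rfl
      obtain ⟨c, hc, h⟩ := g.rank 0 (fun i => i.elim0)
      exact hc (funext fun j => g.tf _ (by simp))
    refine ⟨(a * b) ^ (p - 1) * a, ?_, ?_⟩
    · rw [mul_assoc, ← pow_succ, Nat.sub_add_cancel (by omega)]; exact hnp p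
    · rw [mul_assoc, ← pow_succ, Nat.sub_add_cancel (by omega)]; exact CM_pow_succ (by omega) h2
end dv
end WF

namespace WF
open TensorProduct Coalgebra WithConv

lemma aux_comm {S : Type} [Ring S] (a b k : S) : a * (b * k - k * b) = (a * b * k - k * (a * b)) - (a * k - k * a) * b := by
  noncomm_ring

section core
variable {R : Type} [CommRing R] {H : Type} [Ring H] [HopfAlgebra R H] {A : Type} [Ring A] [Algebra R A]

noncomputable instance nnSemiring : Semiring (NN R H A) := Ring.toSemiring

/-- pointwise divisible elements -/
def JJ (N : ℕ) : Ideal (NN R H A) where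
  carrier := {f | ∀ h a, (N : A) ∣ f h a}
  zero_mem' := by intro h a; simp
  add_mem' := by intro f g hf hg h a; exact dvd_add (hf h a) (hg h a)
  smul_mem' := by
    intro f g hg h a
    rw [smul_eq_mul, NN_mul]
    apply Finset.dvd_sum
    intro i _
    obtain ⟨y, hy⟩ := hg ((ℛ R h).right i) a
    rw [hy]
    refine ⟨f ((ℛ R h).left i) y, ?_⟩
    rw [← nsmul_eq_mul, map_nsmul, nsmul_eq_mul]

lemma mem_JJ {N : ℕ} {f : NN R H A} : f ∈ (JJ N : Ideal (NN R H A)) ↔ ∀ h a, (N : A) ∣ f h a := Iff.rfl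

instance JJ2 (N : ℕ) : (JJ N : Ideal (NN R H A)).IsTwoSided := ⟨by
  intro f g hf h a
  rw [NN_mul]
  apply Finset.dvd_sum
  intro i _
  exact hf _ _⟩

noncomputable abbrev qq (N : ℕ) : NN R H A →+* NN R H A ⧸ (JJ N : Ideal (NN R H A)) := Ideal.Quotient.mk _

lemma qq_eq {N : ℕ} {f g : NN R H A} : qq N f = qq N g ↔ f - g ∈ (JJ N : Ideal (NN R H A)) := Ideal.Quotient.eq
lemma qq_eq0 {N : ℕ} {f : NN R H A} : qq N f = 0 ↔ f ∈ (JJ N : Ideal (NN R H A)) := Ideal.Quotient.eq_zero_iff_mem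

variable {p : ℕ} (ha : HopfAction R H A) (g : Good p A)

lemma io_cancel (g : Good p A) (s : ℕ) (u : A) (hu : ¬ (p : A) ∣ u) {f : NN R H A} (h : io u * f ∈ (JJ (p ^ s) : Ideal (NN R H A))) :
    f ∈ (JJ (p ^ s) : Ideal (NN R H A)) := by
  intro x a
  have := h x a
  rw [io_mul] at this
  exact g.primes s u _ hu this

lemma ro_cancel (g : Good p A) (s : ℕ) (u : A) (hu : ¬ (p : A) ∣ u) {f : NN R H A} (h : ro ha u * f ∈ (JJ (p ^ s) : Ideal (NN R H A))) :
    f ∈ (JJ (p ^ s) : Ideal (NN R H A)) := by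
  have h1 : io u * (al' ha * f) ∈ (JJ (p ^ s) : Ideal (NN R H A)) := by
    have := Ideal.mul_mem_left _ (al' ha) h
    rw [ro_def] at this
    convert this using 1
    calc io u * (al' ha * f) = 1 * (io u * (al' ha * f)) := (one_mul _).symm
      _ = _ := by rw [← al'_mul_al ha]; noncomm_ring
  have h2 := Ideal.mul_mem_left _ (al ha) (io_cancel g s u hu h1)
  rwa [← mul_assoc, al_mul_al', one_mul] at h2

def InvPair (N : ℕ) (u a : A) : Prop := ∀ h, (N : A) ∣ u * ha.act h a - ha.act h u * a

lemma InvPair.qq {N : ℕ} {u a : A} (h : InvPair ha N u a) : qq N (io u * ro ha a) = qq N (ro ha u * io a) := by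
  rw [qq_eq]
  intro x b
  have e : (io u * ro ha a - ro ha u * io a : NN R H A) x b = (io u * ro ha a : NN R H A) x b - (ro ha u * io a : NN R H A) x b := rfl
  rw [e, io_mul, mul_io, ro_apply, ro_apply, ← mul_assoc, ← mul_assoc, ← sub_mul]
  exact dvr (h x) b

lemma CM_io_qq {N : ℕ} {u : A} (hu : CM N u) (a : A) (h : H) : (N : A) ∣ (ha.act h a) * u - u * ha.act h a := by
  rw [← dvd_neg, neg_sub]; exact hu _

lemma CM.ro_io_qq {N : ℕ} {u : A} (hu : CM N u) (a : A) : qq N (ro ha a * io u) = qq N (io u * ro ha a) := by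
  rw [qq_eq]
  intro x b
  have e : (ro ha a * io u - io u * ro ha a : NN R H A) x b = (ro ha a * io u : NN R H A) x b - (io u * ro ha a : NN R H A) x b := rfl
  rw [e, io_mul, mul_io, ro_apply, ro_apply, ← mul_assoc, ← mul_assoc, ← sub_mul]
  exact dvr (CM_io_qq ha hu a x) b

lemma ro_dvd {N : ℕ} {a : A} (h : (N : A) ∣ a) : ro ha a ∈ (JJ N : Ideal (NN R H A)) := by
  intro x b
  rw [ro_apply]
  obtain ⟨c, rfl⟩ := h
  apply dvr
  rw [← nsmul_eq_mul, map_nsmul, nsmul_eq_mul]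
  exact ⟨_, rfl⟩

lemma CM.ro_qq {N : ℕ} {u : A} (hu : CM N u) (a : A) : qq N (ro ha a) * qq N (ro ha u) = qq N (ro ha u) * qq N (ro ha a) := by
  suffices h : qq N (ro ha a * ro ha u) = qq N (ro ha u * ro ha a) by simpa only [map_mul] using h
  rw [qq_eq, ← map_mul, ← map_mul]
  have e : ro ha (a * u - u * a) = ro ha (a * u) - ro ha (u * a) := map_sub (ro ha) _ _
  rw [← e]
  apply ro_dvd
  rw [← dvd_neg, neg_sub]; exact hu a

/-- the stable module of relations -/
def Wrel {d : ℕ} (v : Fin (d+1) → A) (c : Fin (d+1) → A) : Prop := ∀ h, ∑ j, c j * ha.act h (v j) = 0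

lemma Wrel.stable {d : ℕ} {v c : Fin (d+1) → A} (hc : Wrel ha v c) (h : H) : Wrel ha v (fun j => ha.act h (c j)) := by
  intro x
  have e : (∑ j, (ro ha (c j) * io (ha.act x (v j)) : NN R H A)) h 1 = ∑ j, ha.act h (c j) * ha.act x (v j) := by
    have : (∑ j, (ro ha (c j) * io (ha.act x (v j)) : NN R H A)) h 1 = ∑ j, (ro ha (c j) * io (ha.act x (v j)) : NN R H A) h 1 := by
      simp [LinearMap.sum_apply]
    rw [this]
    apply Finset.sum_congr rfl
    intro j _
    rw [mul_io, ro_apply, mul_one]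
  rw [← e]
  have e2 : (∑ j, ro ha (c j) * io (ha.act x (v j))) = al ha * ∑ j, (io (c j) * (al' ha * io (ha.act x (v j))) : NN R H A) := by
    rw [Finset.mul_sum]
    apply Finset.sum_congr rfl
    intro j _
    rw [ro_def]; noncomm_ring
  rw [e2, NN_mul]
  apply Finset.sum_eq_zero
  intro i _
  have e3 : ∀ y, (∑ j, (io (c j) * (al' ha * io (ha.act x (v j))) : NN R H A)) y 1 = 0 := by
    intro y
    have : (∑ j, (io (c j) * (al' ha * io (ha.act x (v j))) : NN R H A)) y 1 = ∑ j, (io (c j) * (al' ha * io (ha.act x (v j))) : NN R H A) y 1 := by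
      simp [LinearMap.sum_apply]
    rw [this, ← hc (HopfAlgebra.antipode R y * x)]
    apply Finset.sum_congr rfl
    intro j _
    rw [io_mul, mul_io, al'_apply, mul_one, ha.mul_act]
  rw [e3, map_zero]

lemma dep (g : Good p A) (d : ℕ) (hs : Fin d → H) (hspan : Submodule.span R (Set.range hs) = ⊤) (s : ℕ) (v : Fin (d+1) → A) :
    ∃ c : Fin (d+1) → A, (∃ j0, CM (p ^ (s+1)) (c j0) ∧ ¬ (p : A) ∣ c j0 ∧ ∀ j, InvPair ha (p ^ (s+1)) (c j0) (c j)) ∧ ∑ j, c j * v j = 0 := by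
  classical
  have hW0 : ∃ c, c ≠ 0 ∧ Wrel ha v c := by
    obtain ⟨c, hc, h⟩ := g.rank d (fun i j => ha.act (hs i) (v j))
    refine ⟨c, hc, ?_⟩
    intro x
    have hx : x ∈ Submodule.span R (Set.range hs) := by rw [hspan]; trivial
    induction hx using Submodule.span_induction with
    | mem x hx => obtain ⟨i, rfl⟩ := hx; exact h i
    | zero => simp
    | add x y _ _ hx hy => simp [mul_add, Finset.sum_add_distrib, hx, hy]
    | smul r x _ hx => simp [← Finset.smul_sum, hx]
  -- minimal support
  let sz : (Fin (d+1) → A) → ℕ := fun c => (Finset.univ.filter (fun j => c j ≠ 0)).card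
  have hmin : ∃ c, (c ≠ 0 ∧ Wrel ha v c) ∧ ∀ c', c' ≠ 0 → Wrel ha v c' → sz c ≤ sz c' := by
    have hne : ({c | c ≠ 0 ∧ Wrel ha v c} : Set (Fin (d+1) → A)).Nonempty := hW0
    refine ⟨Function.argminOn sz _ hne, Function.argminOn_mem sz _ hne, ?_⟩
    intro c' h1 h2
    exact Function.argminOn_le sz {c | c ≠ 0 ∧ Wrel ha v c} (show c' ∈ {c | c ≠ 0 ∧ Wrel ha v c} from ⟨h1, h2⟩)
  obtain ⟨c, ⟨hc0, hcW⟩, hcmin⟩ := hmin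
  -- divide by p
  have hdiv : ∃ c, (∃ j0, ¬ (p : A) ∣ c j0) ∧ Wrel ha v c ∧ ∀ c', c' ≠ 0 → Wrel ha v c' → sz c ≤ sz c' := by
    obtain ⟨j1, hj1⟩ : ∃ j, c j ≠ 0 := by by_contra hcon; push Not at hcon; exact hc0 (funext hcon)
    obtain ⟨m, a', ha', hpa'⟩ := g.val _ hj1
    clear hc0 hj1
    induction m generalizing c with
    | zero => exact ⟨c, ⟨j1, by simpa [ha'] using hpa'⟩, hcW, hcmin⟩
    | succ m ih =>
      by_cases hall : ∀ j, (p : A) ∣ c j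
      · choose c1 hc1 using hall
        have hz : ∀ j, c1 j = 0 ↔ c j = 0 := by
          intro j; rw [hc1 j]; exact ⟨fun h => by rw [h, mul_zero], fun h => g.tf _ h⟩
        refine ih c1 ?_ ?_ ?_
        rotate_left
        · intro x
          apply g.tf
          rw [← hcW x, Finset.mul_sum]
          apply Finset.sum_congr rfl; intro j _; rw [hc1 j, mul_assoc]
        rotate_left
        · intro c' h1 h2
          have : sz c1 = sz c := by simp only [sz]; congr 1; ext j; simp [hz]
          rw [this]; exact hcmin c' h1 h2
        · apply sub_eq_zero.1; apply g.tf
          rw [mul_sub, ← hc1, ha', pow_succ']; push_cast; noncomm_ring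
      · push Not at hall
        exact ⟨c, hall, hcW, hcmin⟩
  clear hc0 hcW hcmin
  obtain ⟨c, ⟨j0, hj0⟩, hcW, hcmin⟩ := hdiv
  obtain ⟨a, ha1, ha2⟩ := g.cmults s _ hj0
  have hW1 : Wrel ha v (fun j => a * c j) := by
    intro x; simp only [mul_assoc, ← Finset.mul_sum, hcW x, mul_zero]
  refine ⟨fun j => a * c j, ⟨j0, ha2, ha1, ?_⟩, ?_⟩
  swap
  · have := hW1 1; simpa [ha.one_act] using this
  have hmin1 : ∀ c', c' ≠ 0 → Wrel ha v c' → (∀ j, a * c j = 0 → c' j = 0) → c' j0 ≠ 0 := by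
    intro c' h1 h2 h3 h4
    have := hcmin c' h1 h2
    have hlt : sz c' < sz c := by
      apply Finset.card_lt_card
      refine ⟨?_, ?_⟩
      · intro j; simp only [Finset.mem_filter, Finset.mem_univ, true_and]
        intro h5 h6; apply h5; apply h3; rw [h6, mul_zero]
      · intro h5
        have : j0 ∈ Finset.univ.filter (fun j => c j ≠ 0) := by 
          simp; intro h; apply hj0; rw [h]; exact dvd_zero _
        have := h5 this
        simp [h4] at this
    omega
  set b : Fin (d+1) → A := fun j => a * c j with hb
  intro j x
  obtain ⟨e, he⟩ := ha2 (ha.act x (b j0))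
  obtain ⟨t, t', ht, hte⟩ := g.ore e (b j0) ha1
  -- combination
  let w : Fin (d+1) → A := fun j => t * (b j0 * ha.act x (b j) - ha.act x (b j0) * b j) - ((p ^ (s+1) : ℕ) : A) * (t' * b j)
  have hw : Wrel ha v w := by
    intro y
    have h1 := hW1 y
    have h2 := hW1.stable ha x y
    have : ∑ j, w j * ha.act y (v j) = t * b j0 * ∑ j, ha.act x (b j) * ha.act y (v j) - t * ha.act x (b j0) * (∑ j, b j * ha.act y (v j)) - ((p ^ (s+1) : ℕ) : A) * t' * ∑ j, b j * ha.act y (v j) := by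
      simp only [Finset.mul_sum, ← Finset.sum_sub_distrib, w]
      apply Finset.sum_congr rfl; intro j _; noncomm_ring
    rw [this, h2, h1]; simp
  have hw0 : w j0 = 0 := by
    simp only [w]
    have he' : b j0 * ha.act x (b j0) - ha.act x (b j0) * b j0 = ((p ^ (s+1) : ℕ) : A) * e := he
    rw [he', ← hte, ← mul_assoc, ← mul_assoc, (Nat.cast_commute _ t).eq, sub_self]
  have hwz : w = 0 := by
    by_contra hne
    apply hmin1 w hne hw _ hw0
    intro j hj
    have hj' : b j = 0 := hj
    simp [w, hj']
  have hwj := congrFun hwz j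
  simp only [w, Pi.zero_apply, sub_eq_zero] at hwj
  exact g.primes (s+1) t _ ht ⟨_, hwj⟩

/-- Step 1 -/
theorem step1 (g : Good p A) (d : ℕ) (hdp : d < p) (hs : Fin d → H) (hspan : Submodule.span R (Set.range hs) = ⊤) (s : ℕ) 
    (w : A) (hw : CM (p ^ (s+1)) w) (h : H) : CM (p ^ (s+1)) (ha.act h w) := by
  suffices hm : ∀ m ≤ s+1, ∀ h x, ((p ^ m : ℕ) : A) ∣ ha.act h w * x - x * ha.act h w from hm (s+1) le_rfl h
  intro m
  induction m with
  | zero => intro _ h x; simp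
  | succ m ih =>
    intro hms
    have ih := ih (by omega)
    have hdd : ∀ y : A, ((p ^ (s+1) : ℕ) : A) ∣ y → ((p ^ (m+1) : ℕ) : A) ∣ y := fun y hy =>
      dvd_trans (Nat.cast_dvd_cast (pow_dvd_pow p hms)) hy
    let E : Subring A := 
      { carrier := {x | ∀ h, ((p ^ (m+1) : ℕ) : A) ∣ ha.act h w * x - x * ha.act h w}
        one_mem' := by intro h; simp
        zero_mem' := by intro h; simp
        mul_mem' := by
          intro x y hx hy h
          have : ha.act h w * (x * y) - x * y * ha.act h w = (ha.act h w * x - x * ha.act h w) * y + x * (ha.act h w * y - y * ha.act h w) := by noncomm_ring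
          rw [this]; exact dvd_add (dvr (hx h) _) (dvl (hy h) _)
        add_mem' := by
          intro x y hx hy h
          have : ha.act h w * (x + y) - (x + y) * ha.act h w = (ha.act h w * x - x * ha.act h w) + (ha.act h w * y - y * ha.act h w) := by noncomm_ring
          rw [this]; exact dvd_add (hx h) (hy h)
        neg_mem' := by
          intro x hx h
          have : ha.act h w * (-x) - (-x) * ha.act h w = -(ha.act h w * x - x * ha.act h w) := by noncomm_ring
          rw [this, dvd_neg]; exact hx h }
    have hE : ∀ x, x ∈ E ↔ ∀ h, ((p ^ (m+1) : ℕ) : A) ∣ ha.act h w * x - x * ha.act h w := fun _ => Iff.rfl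
    have := g.index d (s+1) (by omega) hdp E ?_ ?_ ?_ ?_
    · intro h x; exact this x h
    · intro a h
      obtain ⟨y, hy⟩ := ih h a
      refine ⟨y, ?_⟩
      rw [(Nat.cast_commute p a).eq, ← mul_assoc, mul_assoc a, (Nat.cast_commute p _).eq, ← mul_assoc, ← sub_mul, hy, pow_succ]
      push_cast; rw [mul_assoc, mul_assoc, (Nat.cast_commute p y).eq]
    · intro w' hw' h
      apply hdd; rw [← dvd_neg, neg_sub]; exact hw' _
    · intro u x hu hpu hux h
      have h1 := hux h
      have h2 := hdd _ (hu (ha.act h w))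
      apply g.primes (m+1) u _ hpu
      have : u * (ha.act h w * x - x * ha.act h w) = (ha.act h w * (u * x) - u * x * ha.act h w) + (u * ha.act h w - ha.act h w * u) * x := by noncomm_ring
      rw [this]; exact dvd_add h1 (dvr h2 _)
    · intro v
      obtain ⟨c, ⟨j0, h1, h2, h3⟩, h4⟩ := dep ha g d hs hspan s v
      refine ⟨c, ?_, ⟨j0, h1, h2⟩, h4⟩
      intro j h
      apply hdd
      set u := c j0
      set a := c j
      have hI := (h3 j).qq ha
      have key : ro ha u * (ro ha w * io a - io a * ro ha w) ∈ (JJ (p ^ (s+1)) : Ideal (NN R H A)) := by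
        rw [← qq_eq0]
        have c1 := hw.ro_qq ha u
        have c2 := h1.ro_io_qq ha w
        have c3 := hw.ro_qq ha a
        rw [map_mul, map_mul] at hI c2
        rw [map_mul, map_sub, map_mul, map_mul, mul_sub, ← mul_assoc, ← mul_assoc, c1, mul_assoc, ← hI, ← mul_assoc, c2, mul_assoc, ← c3, ← mul_assoc, sub_self]
      have := ro_cancel ha g _ u h2 key h 1
      have e : (ro ha w * io a - io a * ro ha w : NN R H A) h 1 = (ro ha w * io a : NN R H A) h 1 - (io a * ro ha w : NN R H A) h 1 := rfl
      rw [e, io_mul, mul_io, ro_apply, ro_apply] at this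
      simpa using this

/-- Step 2 -/
theorem step2 (g : Good p A) (d : ℕ) (hdp : d < p) (hs : Fin d → H) (hspan : Submodule.span R (Set.range hs) = ⊤) (s : ℕ) 
    (κ : NN R H A) (hκ : ∀ a, κ * io a = io a * κ) 
    (hcen : ∀ w, CM (p ^ (s+1)) w → ro ha w * κ - κ * ro ha w ∈ (JJ p : Ideal (NN R H A))) (x : A) :
    ro ha x * κ - κ * ro ha x ∈ (JJ p : Ideal (NN R H A)) := by
  let E : Subring A := (Subring.centralizer {qq (R := R) (H := H) (A := A) p κ}).comap ((qq (R := R) (H := H) (A := A) p).comp (ro ha))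
  have hE : ∀ x, x ∈ E ↔ ro ha x * κ - κ * ro ha x ∈ (JJ p : Ideal (NN R H A)) := by
    intro x
    rw [← qq_eq0, map_sub, sub_eq_zero, map_mul, map_mul]
    simp [E, Subring.mem_centralizer_iff, eq_comm]
  have hdd : ∀ y : A, ((p ^ (s+1) : ℕ) : A) ∣ y → (p : A) ∣ y := fun y hy =>
      dvd_trans (Nat.cast_dvd_cast (dvd_pow_self p (by omega))) hy
  have hc1 : ∀ u f, ¬ (p : A) ∣ u → ro ha u * f ∈ (JJ p : Ideal (NN R H A)) → f ∈ (JJ p : Ideal (NN R H A)) := by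
    intro u f hu h
    have := ro_cancel ha g 1 u hu (f := f)
    rw [pow_one] at this; exact this h
  have hc2 : ∀ u f, ¬ (p : A) ∣ u → io u * f ∈ (JJ p : Ideal (NN R H A)) → f ∈ (JJ p : Ideal (NN R H A)) := by
    intro u f hu h
    have := io_cancel (R := R) (H := H) g 1 u hu (f := f)
    rw [pow_one] at this; exact this h
  rw [← hE]
  revert x
  apply g.index d (s+1) (by omega) hdp E
  · intro a
    rw [hE]
    have h1 : ro ha (p * a) ∈ (JJ p : Ideal (NN R H A)) := ro_dvd ha ⟨a, rfl⟩
    exact sub_mem (Ideal.mul_mem_right _ _ h1) (Ideal.mul_mem_left _ _ h1)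
  · intro w hw; rw [hE]; exact hcen w hw
  · intro u x hu hpu hux
    rw [hE] at hux ⊢
    have h2 := hcen u hu
    apply hc1 u _ hpu
    have : ro ha u * (ro ha x * κ - κ * ro ha x) = (ro ha (u * x) * κ - κ * ro ha (u * x)) - (ro ha u * κ - κ * ro ha u) * ro ha x := by
      rw [map_mul]; exact aux_comm (S := NN R H A) _ _ _
    rw [this]
    exact sub_mem hux (Ideal.mul_mem_right _ _ h2)
  · intro v
    obtain ⟨c, ⟨j0, h1, h2, h3⟩, h4⟩ := dep ha g d hs hspan s v
    refine ⟨c, ?_, ⟨j0, h1, h2⟩, h4⟩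
    intro j
    rw [hE]
    set u := c j0
    set a := c j
    have hI : qq p (io u * ro ha a) = qq p (ro ha u * io a) := InvPair.qq ha (fun h => hdd _ (h3 j h))
    have hu := hcen u h1
    rw [← qq_eq0, map_sub, sub_eq_zero, map_mul, map_mul] at hu
    apply hc2 u _ h2
    rw [← qq_eq0]
    have k1 : qq p κ * qq p (io a) = qq p (io a) * qq p κ := by rw [← map_mul, hκ, map_mul]
    have k2 : qq p κ * qq p (io u) = qq p (io u) * qq p κ := by rw [← map_mul, hκ, map_mul]
    rw [map_mul, map_mul] at hI
    rw [map_mul, map_sub, map_mul, map_mul, mul_sub, ← mul_assoc, ← mul_assoc, hI, mul_assoc, ← k1, ← mul_assoc, hu, mul_assoc, ← hI, ← mul_assoc, k2, sub_self]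

end core
end WF

namespace WF
open MvPolynomial

section dom
variable {S : Type} [CommRing S] {n : ℕ}

/-- total degree `< k` -/
def DD (k : ℕ) (P : Pol S n) : Prop := ∀ m, k ≤ Finsupp.degree m → coeff m P = 0

lemma DD.mono {k l : ℕ} (h : k ≤ l) {P : Pol S n} (hP : DD k P) : DD l P := fun m hm => hP m (h.trans hm)
lemma DD.add {k : ℕ} {P Q : Pol S n} (hP : DD k P) (hQ : DD k Q) : DD k (P + Q) := fun m hm => by
  rw [coeff_add, hP m hm, hQ m hm, add_zero]
lemma DD.smul {k : ℕ} {P : Pol S n} (s : S) (hP : DD k P) : DD k (s • P) := fun m hm => by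
  rw [coeff_smul, hP m hm, smul_zero]
lemma DD.sum {k : ℕ} {ι : Type*} (t : Finset ι) (f : ι → Pol S n) (h : ∀ i ∈ t, DD k (f i)) : DD k (∑ i ∈ t, f i) := fun m hm => by
  rw [coeff_sum]; exact Finset.sum_eq_zero fun i hi => h i hi m hm
lemma DD.monomial_mul {k : ℕ} {P : Pol S n} (hP : DD k P) (e) (s : S) : DD (Finsupp.degree e + k) (monomial e s * P) := fun m hm => by
  classical
  rw [coeff_monomial_mul']
  split_ifs with h
  · rw [hP, mul_zero]
    have : Finsupp.degree m = Finsupp.degree (m - e) + Finsupp.degree e := by rw [← map_add, tsub_add_cancel_of_le h]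
    omega
  · rfl
lemma DD.X_mul {k : ℕ} {P : Pol S n} (hP : DD k P) (v) : DD (k+1) (X v * P) := by
  have := hP.monomial_mul (Finsupp.single v 1) 1
  rwa [Finsupp.degree_single, add_comm] at this
lemma DD.pderiv {k : ℕ} {P : Pol S n} (hP : DD (k+1) P) (v) : DD k (pderiv v P) := fun m hm => by
  rw [coeff_pderiv, hP, zero_mul]
  rw [map_add, Finsupp.degree_single]; omega

lemma fs_ind {τ : Type*} {P : (τ →₀ ℕ) → Prop} (h0 : P 0) (hs : ∀ v e, P e → P (Finsupp.single v 1 + e)) (e : τ →₀ ℕ) : P e := by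
  classical
  induction e using Finsupp.induction with
  | zero => exact h0
  | single_add a b f _ _ h =>
    clear * - h hs
    induction b with
    | zero => simpa using h
    | succ b ih => rw [add_comm b 1, Finsupp.single_add, add_assoc]; exact hs _ _ ih

lemma tau_X_mul (v) (P : Pol S n) : (sg S n).symm (X v * P) = opL v ((sg S n).symm P) := tau0_X_mul v P
lemma tau_one : (sg S n).symm 1 = 1 := tau0_one
lemma monomial_single_add (v : Fin n ⊕ Fin n) (e) : (monomial (Finsupp.single v 1 + e) 1 : Pol S n) = X v * monomial e 1 := by
  rw [X, monomial_mul, one_mul]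

lemma DD.mono_mul (e : (Fin n ⊕ Fin n) →₀ ℕ) : ∀ (j : ℕ) (b : WeylAlgebra S n), DD (j+1) (sg S n b) →
    DD (Finsupp.degree e + j) (sg S n ((sg S n).symm (monomial e 1) * b) - monomial e 1 * sg S n b) := by
  induction e using fs_ind with
  | h0 => 
    intro j b hb
    have : (monomial 0 1 : Pol S n) = 1 := rfl
    rw [this, tau_one]
    simp only [one_mul, sub_self]
    intro m _; simp
  | hs v e ih =>
    intro j b hb
    rw [monomial_single_add, tau_X_mul, map_add, Finsupp.degree_single]
    rcases v with i | i
    · simp only [opL, LinearMap.mulLeft_apply]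
      rw [mul_assoc, sg_X_mul, mul_assoc, ← mul_sub]
      exact ((ih j b hb).X_mul _).mono (by omega)
    · simp only [opL, LinearMap.mulRight_apply]
      have hY : DD (j+1+1) (sg S n (WeylAlgebra.Y i * b)) := by
        rw [sg_Y_mul]
        exact (hb.X_mul _).add ((hb.mono (by omega : j + 1 ≤ j+2+1)).pderiv _)
      have h1 := ih (j+1) _ hY
      have h2 := (hb.pderiv (.inl i)).monomial_mul e 1
      have : sg S n ((sg S n).symm (monomial e 1) * WeylAlgebra.Y i * b) - X (.inr i) * monomial e 1 * sg S n b
        = (sg S n ((sg S n).symm (monomial e 1) * (WeylAlgebra.Y i * b)) - monomial e 1 * sg S n (WeylAlgebra.Y i * b)) + monomial e 1 * MvPolynomial.pderiv (.inl i) (sg S n b) := by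
        rw [mul_assoc, sg_Y_mul]; ring
      rw [this]
      exact (h1.mono (by omega)).add (h2.mono (by omega))

lemma DD.mul (i j : ℕ) (a b : WeylAlgebra S n) (ha : DD (i+1) (sg S n a)) (hb : DD (j+1) (sg S n b)) :
    DD (i + j) (sg S n (a * b) - sg S n a * sg S n b) := by
  obtain ⟨P, rfl⟩ := (sg S n).symm.surjective a
  rw [LinearEquiv.apply_symm_apply] at ha ⊢
  have hP : P = ∑ e ∈ P.support, coeff e P • monomial e 1 := by
    conv_lhs => rw [P.as_sum]
    apply Finset.sum_congr rfl; intro e _; rw [smul_monomial, smul_eq_mul, mul_one]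
  have : sg S n ((sg S n).symm P * b) - P * sg S n b = ∑ e ∈ P.support, coeff e P • (sg S n ((sg S n).symm (monomial e 1) * b) - monomial e 1 * sg S n b) := by
    conv_lhs => rw [hP]
    simp only [map_sum, Finset.sum_mul, ← Finset.sum_sub_distrib, map_smul, smul_mul_assoc, smul_sub]
  rw [this]
  apply DD.sum
  intro e he
  apply DD.smul
  apply (DD.mono_mul e j b hb).mono
  have : Finsupp.degree e < i + 1 := by
    by_contra hc
    exact (mem_support_iff.1 he) (ha e (by omega))
  omega

lemma DD_totalDegree (P : Pol S n) : DD (P.totalDegree + 1) P := by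
  intro m hm
  apply coeff_eq_zero_of_totalDegree_lt
  exact hm

instance weyl_domain [IsDomain S] : NoZeroDivisors (WeylAlgebra S n) := ⟨by
  intro a b hab
  by_contra hc
  push Not at hc
  have ha : sg S n a ≠ 0 := by simpa using hc.1
  have hb : sg S n b ≠ 0 := by simpa using hc.2
  have h := DD.mul _ _ a b (DD_totalDegree _) (DD_totalDegree _)
  rw [hab, map_zero, zero_sub, ← totalDegree_mul_of_isDomain ha hb] at h
  obtain ⟨m, hm, hm2⟩ := Finset.exists_mem_eq_sup _ (support_nonempty.2 (mul_ne_zero ha hb)) (fun s => s.sum fun _ e => e)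
  have := h m (le_of_eq hm2)
  rw [coeff_neg, neg_eq_zero] at this
  exact (mem_support_iff.1 hm) this⟩

/-- box filtration -/
def BX (N : ℕ) (P : Pol S n) : Prop := ∀ m, (∃ v, N ≤ m v) → coeff m P = 0
lemma BX.mono {k l : ℕ} (h : k ≤ l) {P : Pol S n} (hP : BX k P) : BX l P := fun m ⟨v, hv⟩ => hP m ⟨v, h.trans hv⟩
lemma BX.add {k : ℕ} {P Q : Pol S n} (hP : BX k P) (hQ : BX k Q) : BX k (P + Q) := fun m hm => by
  rw [coeff_add, hP m hm, hQ m hm, add_zero]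
lemma BX.smul {k : ℕ} {P : Pol S n} (s : S) (hP : BX k P) : BX k (s • P) := fun m hm => by
  rw [coeff_smul, hP m hm, smul_zero]
lemma BX.X_mul {k : ℕ} {P : Pol S n} (hP : BX k P) (v) : BX (k+1) (X v * P) := fun m hm => by
  classical
  rw [coeff_X_mul']
  split_ifs with h
  · apply hP
    obtain ⟨u, hu⟩ := hm
    refine ⟨u, ?_⟩
    simp only [Finsupp.tsub_apply, Finsupp.single_apply]
    split_ifs <;> omega
  · rfl
lemma BX.pderiv {k : ℕ} {P : Pol S n} (hP : BX k P) (v) : BX k (pderiv v P) := fun m hm => by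
  rw [coeff_pderiv, hP, zero_mul]
  obtain ⟨u, hu⟩ := hm
  exact ⟨u, by simp; omega⟩

lemma BX_mul (M : WeylAlgebra S n) : ∃ e, ∀ N b, BX N (sg S n b) → BX (N + e) (sg S n (b * M)) := by
  induction M using windL with
  | h1 => exact ⟨0, fun N b h => by simpa using h⟩
  | hX i a h =>
    obtain ⟨e, he⟩ := h
    refine ⟨e + 1, fun N b h => ?_⟩
    rw [← mul_assoc]
    apply (he (N + 1) _ _).mono (by omega)
    rw [sg_mul_X]
    exact (h.X_mul _).add ((h.pderiv _).mono (by omega))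
  | hY i a h =>
    obtain ⟨e, he⟩ := h
    refine ⟨e + 1, fun N b h => ?_⟩
    rw [← mul_assoc]
    apply (he (N + 1) _ _).mono (by omega)
    rw [sg_mul_Y]
    exact (h.X_mul _)
  | hadd a b h h' =>
    obtain ⟨e, he⟩ := h
    obtain ⟨e', he'⟩ := h'
    refine ⟨e + e', fun N b h => ?_⟩
    rw [mul_add, map_add]
    exact ((he N b h).mono (by omega)).add ((he' N b h).mono (by omega))
  | hs s a h =>
    obtain ⟨e, he⟩ := h
    refine ⟨e, fun N b h => ?_⟩
    rw [mul_smul_comm, map_smul]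
    exact (he N b h).smul s

lemma BX_exists (M : WeylAlgebra S n) : ∃ N, BX N (sg S n M) := by
  obtain ⟨e, he⟩ := BX_mul M
  refine ⟨1 + e, ?_⟩
  have := he 1 1 (by
    rw [sg_one]; intro m ⟨v, hv⟩
    rw [coeff_one, if_neg]; rintro rfl; simp at hv)
  simpa using this

lemma num_ineq (d e t : ℕ) : ∃ N, d * (N + e) ^ t < (d + 1) * N ^ t := by
  obtain ⟨e, rfl⟩ | rfl : (∃ e', e = e' + 1) ∨ e = 0 := by cases e <;> simp
  swap
  · exact ⟨1, by simp⟩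
  set K := t * (d + 1) + 1
  refine ⟨(e + 1) * K, ?_⟩
  have h1 : d * (K + 1) ^ t < (d + 1) * K ^ t := by
    have hb := one_add_mul_le_pow (a := - (1 : ℚ) / (K + 1)) (by
      rw [le_div_iff₀ (by positivity)]; have : (0 : ℚ) ≤ K := by positivity
      linarith) t
    have h2 : (1 + -(1 : ℚ) / (K + 1)) = K / (K + 1) := by field_simp; ring
    rw [h2, div_pow, le_div_iff₀ (by positivity)] at hb
    have h3 : (d : ℚ) < (d + 1) * (1 + t * (-1 / (K + 1))) := by
      have : (1 + t * (-1 / (K + 1)) : ℚ) = (K + 1 - t) / (K + 1) := by field_simp; ring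
      rw [this, ← mul_div_assoc, lt_div_iff₀ (by positivity)]
      simp only [K]; push_cast; ring_nf; nlinarith
    have h4 : (d * (K + 1) ^ t : ℚ) < (d + 1) * K ^ t := by
      have h5 : (0 : ℚ) < (K + 1) ^ t := by positivity
      calc (d * (K + 1) ^ t : ℚ) < (d + 1) * (1 + t * (-1 / (K + 1))) * (K + 1) ^ t := by gcongr
        _ = (d + 1) * ((1 + t * (-1 / (K + 1))) * (K + 1) ^ t) := by ring
        _ ≤ _ := by gcongr
    exact_mod_cast h4
  calc d * ((e + 1) * K + (e + 1)) ^ t = (e + 1) ^ t * (d * (K + 1) ^ t) := by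
        rw [show (e + 1) * K + (e + 1) = (e + 1) * (K + 1) by ring, mul_pow]; ring
    _ < (e + 1) ^ t * ((d + 1) * K ^ t) := by gcongr
    _ = _ := by rw [mul_pow]; ring

/-- rank lemma -/
lemma weyl_rank [Nontrivial S] (d : ℕ) (M : Fin d → Fin (d+1) → WeylAlgebra S n) : 
    ∃ c : Fin (d+1) → WeylAlgebra S n, c ≠ 0 ∧ ∀ i, ∑ j, c j * M i j = 0 := by
  classical
  choose e he using fun i j => BX_mul (M i j)
  set E := ∑ i, ∑ j, e i j
  have hE : ∀ i j, e i j ≤ E := fun i j => 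
    (Finset.single_le_sum (f := fun j => e i j) (fun _ _ => Nat.zero_le _) (Finset.mem_univ j)).trans 
      (Finset.single_le_sum (f := fun i => ∑ j, e i j) (fun _ _ => Nat.zero_le _) (Finset.mem_univ i))
  obtain ⟨N, hN⟩ := num_ineq d E (Fintype.card (Fin n ⊕ Fin n))
  by_contra hcon
  push Not at hcon
  let T (N : ℕ) := Fin n ⊕ Fin n → Fin N
  let fs : ∀ {N}, T N → (Fin n ⊕ Fin n) →₀ ℕ := fun r => Finsupp.equivFunOnFinite.symm (fun v => (r v : ℕ))
  let mk : (T N → S) →ₗ[S] WeylAlgebra S n := 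
    { toFun := fun f => ∑ r, f r • (sg S n).symm (monomial (fs r) 1)
      map_add' := by intro f g; simp [add_smul, Finset.sum_add_distrib]
      map_smul' := by intro s f; simp [mul_smul, Finset.smul_sum] }
  have mkc : ∀ f r, cf (fs r) (mk f) = f r := by
    intro f r
    simp only [mk, LinearMap.coe_mk, AddHom.coe_mk, map_sum, map_smul, cf_apply, LinearEquiv.apply_symm_apply, coeff_monomial]
    rw [Finset.sum_eq_single r]
    · simp
    · intro b _ hb
      rw [if_neg, smul_zero]
      intro h; apply hb; funext v
      have := DFunLike.congr_fun h v
      exact Fin.ext this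
    · simp
  have mkb : ∀ f, BX N (sg S n (mk f)) := by
    intro f m ⟨v, hv⟩
    rw [← cf_apply]
    simp only [mk, LinearMap.coe_mk, AddHom.coe_mk, map_sum, map_smul, cf_apply, LinearEquiv.apply_symm_apply, coeff_monomial]
    apply Finset.sum_eq_zero
    intro r _
    rw [if_neg, smul_zero]
    rintro rfl
    have := (r v).2
    have h2 : (fs r) v = (r v : ℕ) := rfl
    omega
  let L : (Fin (d+1) × T N → S) →ₗ[S] (Fin d × T (N + E) → S) :=
    { toFun := fun f x => cf (fs x.2) (∑ j, mk (fun r => f (j, r)) * M x.1 j)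
      map_add' := by 
        intro f g; funext x
        have : ∀ j, mk (fun r => (f + g) (j, r)) = mk (fun r => f (j, r)) + mk (fun r => g (j, r)) := fun j => map_add mk _ _
        simp only [this, add_mul, Finset.sum_add_distrib, map_add]; rfl
      map_smul' := by 
        intro s f; funext x
        have : ∀ j, mk (fun r => (s • f) (j, r)) = s • mk (fun r => f (j, r)) := fun j => map_smul mk _ _
        simp only [this, smul_mul_assoc, ← Finset.smul_sum, map_smul, RingHom.id_apply]; rfl }
  have hL : Function.Injective L := by
    rw [← LinearMap.ker_eq_bot, LinearMap.ker_eq_bot']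
    intro f hf
    by_contra hf0
    obtain ⟨⟨j, r⟩, hjr⟩ : ∃ x, f x ≠ 0 := by by_contra hc; push Not at hc; exact hf0 (funext hc)
    obtain ⟨i, hi⟩ := hcon (fun j => mk (fun r => f (j, r))) (by
      intro h
      have := congrFun h j
      have h2 := mkc (fun r => f (j, r)) r
      simp only [this, Pi.zero_apply, map_zero] at h2
      exact hjr h2.symm)
    apply hi
    have hbx : BX (N + E) (sg S n (∑ j, mk (fun r => f (j, r)) * M i j)) := by
      intro m hm
      rw [map_sum, coeff_sum]
      apply Finset.sum_eq_zero
      intro j _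
      exact (he i j N _ (mkb _)).mono (by have := hE i j; omega) m hm
    apply cf_ext
    intro m
    rw [map_zero]
    by_cases hm : ∃ v, N + E ≤ m v
    · exact hbx m hm
    · push Not at hm
      have := congrFun hf (i, fun v => ⟨m v, hm v⟩)
      have h2 : fs (fun v => (⟨m v, hm v⟩ : Fin (N + E))) = m := by ext v; rfl
      simpa [L, h2] using this
  have hcard := card_le_of_injective S L hL
  simp only [T, Fintype.card_prod, Fintype.card_fin, Fintype.card_fun] at hcard
  omega

end dom
end WF

namespace WF
open MvPolynomial

section zeta
variable {S : Type} [CommRing S] {n : ℕ}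

lemma coeff_expand_mul (q : ℕ) (G P : Pol S n) (hP : BX q P) (Q r : (Fin n ⊕ Fin n) →₀ ℕ) (hr : ∀ v, r v < q) :
    coeff (q • Q + r) (expand q G * P) = coeff Q G * coeff r P := by
  classical
  induction G using MvPolynomial.induction_on' with
  | add G G' h h' => rw [map_add, add_mul, coeff_add, h, h', coeff_add, add_mul]
  | monomial d c =>
    rw [expand_monomial, coeff_monomial_mul', coeff_monomial]
    by_cases hd : d = Q
    · subst hd; simp
    · rw [if_neg hd, zero_mul]
      split_ifs with hle
      · rw [hP, mul_zero]
        have hdQ : ∀ v, d v ≤ Q v := by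
          intro v
          have := hle v
          simp only [Finsupp.smul_apply, Finsupp.add_apply, smul_eq_mul] at this
          have h2 := hr v
          by_contra hc
          have h3 : q * (Q v + 1) ≤ q * d v := Nat.mul_le_mul_left q (by omega)
          rw [mul_add] at h3; omega
        obtain ⟨v, hv⟩ : ∃ v, d v < Q v := by
          by_contra hc; push Not at hc
          exact hd (Finsupp.ext fun v => le_antisymm (hdQ v) (hc v))
        refine ⟨v, ?_⟩
        simp only [Finsupp.smul_apply, Finsupp.add_apply, Finsupp.tsub_apply, smul_eq_mul]
        have h3 : q * (d v + 1) ≤ q * Q v := Nat.mul_le_mul_left q (by omega)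
        rw [mul_add] at h3; omega
      · rfl

lemma exists_expand (q : ℕ) (hq : q ≠ 0) (P : Pol S n) (h : ∀ m v, ¬ q ∣ m v → coeff m P = 0) : ∃ G, expand q G = P := by
  classical
  have : ∀ m, coeff m P ≠ 0 → ∃ Q : (Fin n ⊕ Fin n) →₀ ℕ, q • Q = m := by
    intro m hm
    have h1 : ∀ v, q ∣ m v := fun v => by by_contra hc; exact hm (h m v hc)
    refine ⟨Finsupp.equivFunOnFinite.symm (fun v => m v / q), Finsupp.ext fun v => ?_⟩
    simp [Nat.mul_div_cancel' (h1 v)]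
  rw [P.as_sum]
  have h2 : ∀ t : Finset ((Fin n ⊕ Fin n) →₀ ℕ), ∃ G, expand q G = ∑ m ∈ t, monomial m (coeff m P) := by
    intro t
    induction t using Finset.induction_on with
    | empty => exact ⟨0, by simp⟩
    | insert m t hm ih =>
      obtain ⟨G, hG⟩ := ih
      rw [Finset.sum_insert hm]
      by_cases hc : coeff m P = 0
      · exact ⟨G, by simp [hc, hG]⟩
      · obtain ⟨Q, hQ⟩ := this m hc
        exact ⟨monomial Q (coeff m P) + G, by rw [map_add, hG, expand_monomial, hQ]⟩
  exact h2 _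

variable {p : ℕ} [CharP S p] (s : ℕ) 

lemma sg_X_pow_mul (i) (q : ℕ) (a : WeylAlgebra S n) : sg S n (WeylAlgebra.X i ^ q * a) = X (.inl i) ^ q * sg S n a := by
  induction q generalizing a with
  | zero => simp
  | succ q ih => rw [pow_succ, mul_assoc, ih, sg_X_mul]; ring
lemma sg_mul_Y_pow (i) (q : ℕ) (a : WeylAlgebra S n) : sg S n (a * WeylAlgebra.Y i ^ q) = X (.inr i) ^ q * sg S n a := by
  induction q generalizing a with
  | zero => simp
  | succ q ih => rw [pow_succ', ← mul_assoc, ih, sg_mul_Y]; ring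

lemma gen_pow_central (hs : 1 ≤ s) (v : Fin n ⊕ Fin n) (a : WeylAlgebra S n) : Commute a (gen v ^ (p ^ s)) := by
  have hp0 : ∀ u (w : Fin n ⊕ Fin n), pderiv u (X w ^ (p ^ s) : Pol S n) = 0 := by
    intro u w
    rw [Derivation.leibniz_pow, nsmul_eq_mul]
    have : ((p ^ s : ℕ) : Pol S n) = 0 := by
      push_cast; rw [CharP.cast_eq_zero, zero_pow (by omega)]
    rw [this, zero_mul]
  apply center_of_gen
  · intro i
    rcases v with j | j
    · exact Commute.pow_right (XX i j) _
    · apply (sg S n).injective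
      simp only [gen]
      have h1 : sg S n (WeylAlgebra.Y j ^ (p ^ s)) = X (.inr j) ^ (p ^ s) := by
        have := sg_mul_Y_pow j (p ^ s) (1 : WeylAlgebra S n)
        rwa [one_mul, sg_one, mul_one] at this
      rw [sg_X_mul, sg_mul_X, h1, hp0, add_zero]
  · intro i
    rcases v with j | j
    · apply (sg S n).injective
      simp only [gen]
      have h1 : sg S n (WeylAlgebra.X j ^ (p ^ s)) = X (.inl j) ^ (p ^ s) := by
        have := sg_X_pow_mul j (p ^ s) (1 : WeylAlgebra S n)
        rwa [mul_one, sg_one, mul_one] at this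
      rw [sg_mul_Y, sg_Y_mul, h1, hp0, add_zero]
    · exact Commute.pow_right (YY i j) _

/-- the p-center map -/
noncomputable def zeta (p : ℕ) [CharP S p] (hs : 1 ≤ s) : Pol S n →+* WeylAlgebra S n :=
  (Subalgebra.center S (WeylAlgebra S n)).val.toRingHom.comp
    (aeval (fun v => (⟨gen v ^ (p ^ s), by
      rw [Subalgebra.mem_center_iff]; intro b; exact gen_pow_central (p := p) s hs v b⟩ : Subalgebra.center S (WeylAlgebra S n)))).toRingHom

lemma zeta_comm (hs : 1 ≤ s) (P : Pol S n) (a) : zeta s p hs P * a = a * zeta s p hs P := by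
  have : zeta s p hs P ∈ Subalgebra.center S (WeylAlgebra S n) := Subtype.property _
  exact ((Subalgebra.mem_center_iff.1 this) a).symm

lemma zeta_X (hs : 1 ≤ s) (v) : zeta s p hs (X v : Pol S n) = gen v ^ (p ^ s) := by
  simp [zeta]
lemma zeta_C (hs : 1 ≤ s) (c : S) : zeta s p hs (C c : Pol S n) = algebraMap S _ c := by
  simp only [zeta, RingHom.comp_apply]
  change (Subalgebra.center S (WeylAlgebra S n)).val (aeval _ (C c)) = _
  rw [aeval_C]; rfl

lemma sg_zeta_mul (hs : 1 ≤ s) (P : Pol S n) (a : WeylAlgebra S n) : sg S n (zeta s p hs P * a) = expand (p ^ s) P * sg S n a := by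
  induction P using MvPolynomial.induction_on generalizing a with
  | C c => rw [zeta_C, expand_C, ← Algebra.smul_def, map_smul, smul_eq_C_mul]
  | add P Q hP hQ => simp only [map_add, add_mul, hP, hQ]
  | mul_X P v hP =>
    rw [map_mul (zeta s p hs), mul_assoc, hP, map_mul (expand (p ^ s)), expand_X, zeta_X, mul_assoc]
    congr 1
    rcases v with i | i
    · exact sg_X_pow_mul i _ a
    · rw [← (gen_pow_central s hs _ a).eq]; exact sg_mul_Y_pow i _ a

lemma sg_zeta (hs : 1 ≤ s) (P : Pol S n) : sg S n (zeta s p hs P) = expand (p ^ s) P := by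
  have := sg_zeta_mul s hs P 1
  rwa [mul_one, sg_one, mul_one] at this

lemma zeta_inj [Fact p.Prime] (hs : 1 ≤ s) : Function.Injective (zeta s p hs : Pol S n → WeylAlgebra S n) := by
  intro P Q h
  have := congrArg (sg S n) h
  rw [sg_zeta, sg_zeta] at this
  exact expand_injective (pow_pos (Fact.out : p.Prime).pos s) this

noncomputable abbrev zalg (p : ℕ) [CharP S p] (hs : 1 ≤ s) : Algebra (Pol S n) (WeylAlgebra S n) :=
  (zeta s p hs).toAlgebra' (zeta_comm s hs)

noncomputable def zbasis (p : ℕ) [Fact p.Prime] [CharP S p] (hs : 1 ≤ s) : letI := zalg (S := S) (n := n) s p hs; 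
    Module.Basis (Fin n ⊕ Fin n → Fin (p ^ s)) (Pol S n) (WeylAlgebra S n) := by
  letI := zalg (S := S) (n := n) s p hs
  let fs : (Fin n ⊕ Fin n → Fin (p ^ s)) → (Fin n ⊕ Fin n) →₀ ℕ := fun r => Finsupp.equivFunOnFinite.symm (fun v => (r v : ℕ))
  have hsm : ∀ (P : Pol S n) (a : WeylAlgebra S n), P • a = zeta s p hs P * a := fun _ _ => rfl
  refine Module.Basis.mk (v := fun r => (sg S n).symm (monomial (fs r) 1)) ?_ ?_
  · rw [Fintype.linearIndependent_iff]
    intro g hg r'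
    ext Q
    have := congrArg (fun a => coeff ((p ^ s) • Q + fs r') (sg S n a)) hg
    simp only [map_sum, hsm, sg_zeta_mul, LinearEquiv.apply_symm_apply, coeff_sum, map_zero, coeff_zero] at this
    have hB : ∀ r, BX (p ^ s) (monomial (fs r) 1 : Pol S n) := by
      intro r m ⟨v, hv⟩
      classical
      rw [coeff_monomial, if_neg]
      rintro rfl
      have := (r v).2
      have h2 : fs r v = (r v : ℕ) := rfl
      omega
    have h3 : ∀ r, coeff ((p ^ s) • Q + fs r') (expand (p ^ s) (g r) * monomial (fs r) 1) = coeff Q (g r) * coeff (fs r') (monomial (fs r) 1) := by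
      intro r
      exact coeff_expand_mul _ _ _ (hB r) _ _ (fun v => (r' v).2)
    classical
    simp only [h3, coeff_monomial] at this
    rw [Finset.sum_eq_single r'] at this
    · simpa using this
    · intro b _ hb
      rw [if_neg, mul_zero]
      intro h; apply hb; funext v
      exact Fin.ext (DFunLike.congr_fun h v)
    · simp
  · rintro a -
    obtain ⟨P, rfl⟩ := (sg S n).symm.surjective a
    induction P using MvPolynomial.induction_on' with
    | add P Q hP hQ => rw [map_add]; exact Submodule.add_mem _ hP hQ
    | monomial m c =>
      have hpos := pow_pos (Fact.out : p.Prime).pos s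
      let r : Fin n ⊕ Fin n → Fin (p ^ s) := fun v => ⟨m v % (p ^ s), Nat.mod_lt _ hpos⟩
      let Q : (Fin n ⊕ Fin n) →₀ ℕ := Finsupp.equivFunOnFinite.symm (fun v => m v / (p ^ s))
      have : (sg S n).symm (monomial m c) = (monomial Q c : Pol S n) • (sg S n).symm (monomial (fs r) 1) := by
        rw [LinearEquiv.symm_apply_eq, hsm, sg_zeta_mul, LinearEquiv.apply_symm_apply, expand_monomial, monomial_mul, mul_one]
        congr 2
        ext v
        simp [Q, fs, r, Nat.div_add_mod]
      rw [this]
      exact Submodule.smul_mem _ _ (Submodule.subset_span ⟨r, rfl⟩)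

end zeta
end WF

namespace WF
open MvPolynomial

section L
variable {F : Type} [Field F] {n : ℕ} {p : ℕ} [Fact p.Prime] [CharP F p] (s : ℕ) (hs : 1 ≤ s)

lemma zmult (b : WeylAlgebra F n) (hb : b ≠ 0) (E : Subring (WeylAlgebra F n)) (hE : ∀ P, zeta s p hs P ∈ E) (hbE : b ∈ E) :
    ∃ a ∈ E, ∃ z : Pol F n, z ≠ 0 ∧ a * b = zeta s p hs z := by
  letI := zalg (S := F) (n := n) s p hs
  haveI : Module.Finite (Pol F n) (WeylAlgebra F n) := Module.Finite.of_basis (zbasis s p hs)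
  have key : ∀ N, ∀ f : Polynomial (Pol F n), f ≠ 0 → f.natDegree ≤ N → Polynomial.aeval b f = 0 → ∃ a ∈ E, ∃ z : Pol F n, z ≠ 0 ∧ a * b = zeta s p hs z := by
    intro N
    induction N with
    | zero =>
      intro f hf hN h0
      rw [Polynomial.eq_C_of_natDegree_le_zero hN] at h0 hf
      rw [Polynomial.aeval_C] at h0
      exfalso; apply hf
      have : f.coeff 0 = 0 := zeta_inj (p := p) s hs (by rw [map_zero]; exact h0)
      rw [this, map_zero]
    | succ N ih =>
      intro f hf hN h0
      have hdiv := Polynomial.divX_mul_X_add f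
      by_cases hc : f.coeff 0 = 0
      · rw [hc, map_zero, add_zero] at hdiv
        apply ih f.divX
        · intro h; rw [h, zero_mul] at hdiv; exact hf hdiv.symm
        · rw [Polynomial.natDegree_divX_eq_natDegree_tsub_one]; omega
        · rw [← hdiv, map_mul, Polynomial.aeval_X] at h0
          exact (mul_eq_zero.1 h0).resolve_right hb
      · refine ⟨- Polynomial.aeval b f.divX, ?_, f.coeff 0, hc, ?_⟩
        · apply E.neg_mem
          rw [Polynomial.aeval_eq_sum_range]
          apply E.sum_mem
          intro i _
          exact E.mul_mem (hE _) (E.pow_mem hbE i)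
        · rw [← hdiv, map_add, map_mul, Polynomial.aeval_X, Polynomial.aeval_C] at h0
          rw [neg_mul, neg_eq_iff_add_eq_zero]
          exact h0
  obtain ⟨f, hf, h0⟩ := IsIntegral.of_finite (Pol F n) b
  exact key _ f hf.ne_zero le_rfl h0

lemma finrank_fun (R M : Type) [CommRing R] [IsDomain R] [AddCommGroup M] [Module R M] [Module.Finite R M] (m : ℕ) :
    Module.finrank R (Fin m → M) = m * Module.finrank R M := by
  induction m with
  | zero => rw [zero_mul]; exact Module.finrank_zero_of_subsingleton
  | succ m ih =>
    have e := (Fin.consLinearEquiv R (fun _ : Fin (m+1) => M)).finrank_eq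
    rw [← e]
    have h1 := Submodule.finrank_quotient_add_finrank (LinearMap.ker (LinearMap.fst R M (Fin m → M)))
    have h2 := (LinearMap.quotKerEquivOfSurjective (LinearMap.fst R M (Fin m → M)) LinearMap.fst_surjective).finrank_eq
    rw [LinearMap.ker_fst] at h1
    have h3 := LinearMap.finrank_range_of_inj (LinearMap.inr_injective (R := R) (M := M) (M₂ := Fin m → M))
    rw [LinearMap.ker_fst] at h2
    rw [h2, h3, ih] at h1
    rw [← h1]; ring

lemma zcount (E : Subring (WeylAlgebra F n)) (hE : ∀ P, zeta s p hs P ∈ E) (m : ℕ) (b : Fin m → WeylAlgebra F n)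
    (hb : ∀ e : Fin m → WeylAlgebra F n, (∀ i, e i ∈ E) → ∑ i, e i * b i = 0 → ∀ i, e i = 0)
    (hsp : ∀ x, ∃ z : Pol F n, z ≠ 0 ∧ ∃ e : Fin m → WeylAlgebra F n, (∀ i, e i ∈ E) ∧ zeta s p hs z * x = ∑ i, e i * b i) :
    ∃ t, m * t = p ^ (s * (2 * n)) := by
  letI := zalg (S := F) (n := n) s p hs
  haveI : Module.Finite (Pol F n) (WeylAlgebra F n) := Module.Finite.of_basis (zbasis s p hs)
  have hsm : ∀ (P : Pol F n) (a : WeylAlgebra F n), P • a = zeta s p hs P * a := fun _ _ => rfl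
  let M : Submodule (Pol F n) (WeylAlgebra F n) := 
    { E.toAddSubgroup.toAddSubmonoid with
      smul_mem' := fun P x hx => E.mul_mem (hE P) hx }
  let L : (Fin m → M) →ₗ[Pol F n] WeylAlgebra F n :=
    { toFun := fun f => ∑ i, (f i : WeylAlgebra F n) * b i
      map_add' := by intro f g; simp [add_mul, Finset.sum_add_distrib]
      map_smul' := by intro P f; simp [hsm, Finset.mul_sum, mul_assoc] }
  have hL : Function.Injective L := by
    rw [← LinearMap.ker_eq_bot, LinearMap.ker_eq_bot']
    intro f hf
    funext i
    exact Subtype.ext (hb (fun i => f i) (fun i => (f i).2) hf i)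
  have h1 := Submodule.finrank_quotient_add_finrank (LinearMap.range L)
  have h2 : Module.finrank (Pol F n) (WeylAlgebra F n ⧸ LinearMap.range L) = 0 := by
    rw [Module.finrank_eq_zero_iff_isTorsion]
    intro x
    obtain ⟨x, rfl⟩ := Submodule.mkQ_surjective _ x
    obtain ⟨z, hz, e, he, hze⟩ := hsp x
    refine ⟨⟨z, mem_nonZeroDivisors_of_ne_zero hz⟩, ?_⟩
    change z • (LinearMap.range L).mkQ x = 0
    rw [← map_smul, Submodule.mkQ_apply, Submodule.Quotient.mk_eq_zero]
    exact ⟨fun i => ⟨e i, he i⟩, hze.symm⟩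
  rw [h2, zero_add, LinearMap.finrank_range_of_inj hL, finrank_fun] at h1
  refine ⟨_, h1.trans ?_⟩
  rw [Module.finrank_eq_card_basis (zbasis s p hs)]
  simp [pow_mul, two_mul]

/-- core of the index argument in `A_n(F)` -/
lemma zindex (d : ℕ) (hd : d < p) (E : Subring (WeylAlgebra F n)) (hE : ∀ P, zeta s p hs P ∈ E)
    (hdep : ∀ v : Fin (d+1) → WeylAlgebra F n, ∃ c : Fin (d+1) → WeylAlgebra F n, (∀ j, c j ∈ E) ∧ c ≠ 0 ∧ ∑ j, c j * v j = 0) (x : WeylAlgebra F n) :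
    ∃ z : Pol F n, z ≠ 0 ∧ zeta s p hs z * x ∈ E := by
  classical
  haveI : Nontrivial (WeylAlgebra F n) := (sg F n).toEquiv.nontrivial
  let Ind (m : ℕ) : Prop := ∃ b : Fin m → WeylAlgebra F n, 
    ∀ e : Fin m → WeylAlgebra F n, (∀ i, e i ∈ E) → ∑ i, e i * b i = 0 → ∀ i, e i = 0
  have hbd : ¬ Ind (d + 1) := by
    rintro ⟨b, hb⟩
    obtain ⟨c, h1, h2, h3⟩ := hdep b
    exact h2 (funext (hb c h1 h3))
  have h1 : Ind 1 := ⟨fun _ => 1, fun e _ h i => by fin_cases i; simpa using h⟩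
  -- maximal
  obtain ⟨m, hm, hm1⟩ : ∃ m, Ind m ∧ ¬ Ind (m + 1) ∧ 1 ≤ m ∧ m ≤ d := by
    have hex : ∃ m, ¬ Ind (m + 1) := ⟨d, hbd⟩
    have hf := Nat.find_spec hex
    have hle := Nat.find_min' hex hbd
    have hpos : Nat.find hex ≠ 0 := by intro h; rw [h] at hf; exact hf h1
    obtain ⟨m', hm'⟩ := Nat.exists_eq_succ_of_ne_zero hpos
    have := Nat.find_min hex (m := m') (by omega)
    push Not at this
    refine ⟨m' + 1, this, ?_, by omega, by omega⟩
    rw [← Nat.succ_eq_add_one m', ← hm']; exact hf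
  obtain ⟨b, hb⟩ := hm
  obtain ⟨hmax, hm1, hmd⟩ := hm1
  have hsp : ∀ x, ∃ z : Pol F n, z ≠ 0 ∧ ∃ e : Fin m → WeylAlgebra F n, (∀ i, e i ∈ E) ∧ zeta s p hs z * x = ∑ i, e i * b i := by
    intro x
    have : ∃ e : Fin (m+1) → WeylAlgebra F n, (∀ i, e i ∈ E) ∧ ∑ i, e i * (Fin.cons x b : Fin (m+1) → _) i = 0 ∧ ∃ i, e i ≠ 0 := by
      by_contra hc; push Not at hc
      exact hmax ⟨_, hc⟩
    obtain ⟨e, he, hsum, i, hi⟩ := this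
    rw [Fin.sum_univ_succ] at hsum
    simp only [Fin.cons_zero, Fin.cons_succ] at hsum
    have h0 : e 0 ≠ 0 := by
      intro h0
      rw [h0, zero_mul, zero_add] at hsum
      have := hb (fun i => e i.succ) (fun i => he _) hsum
      apply hi
      rcases Fin.eq_zero_or_eq_succ i with rfl | ⟨j, rfl⟩
      · exact h0
      · exact this j
    obtain ⟨a, haE, z, hz, haz⟩ := zmult s hs (e 0) h0 E hE (he 0)
    refine ⟨z, hz, fun i => - (a * e i.succ), fun i => E.neg_mem (E.mul_mem haE (he _)), ?_⟩
    rw [← haz, mul_assoc, eq_neg_of_add_eq_zero_left hsum, mul_neg, Finset.mul_sum, ← Finset.sum_neg_distrib]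
    apply Finset.sum_congr rfl; intro i _; rw [neg_mul, mul_assoc]
  obtain ⟨t, ht⟩ := zcount s hs E hE m b hb hsp
  have hm' : m = 1 := by
    obtain ⟨j, _, hj⟩ := (Nat.dvd_prime_pow (Fact.out : p.Prime)).1 (Dvd.intro t ht)
    rcases j with _ | j
    · simpa using hj
    · have : p ≤ m := by rw [hj]; exact Nat.le_self_pow (by omega) p
      omega
  subst hm'
  obtain ⟨z, hz, e, he, hze⟩ := hsp x
  obtain ⟨z', hz', e', he', hze'⟩ := hsp 1
  simp only [Finset.univ_unique, Fin.default_eq_zero, Finset.sum_singleton] at hze hze'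
  have hz0 : zeta s p hs z' ≠ 0 := by
    intro h; exact hz' (zeta_inj (p := p) s hs (by rw [map_zero]; exact h))
  have he0 : e' 0 ≠ 0 := by
    intro h; rw [h, zero_mul, mul_one] at hze'; exact hz0 hze'
  obtain ⟨a, haE, w, hw, haw⟩ := zmult s hs (e' 0) he0 E hE (he' 0)
  refine ⟨w * z, mul_ne_zero hw hz, ?_⟩
  have : zeta s p hs (w * z) * x = e 0 * (a * zeta s p hs z') := by
    rw [map_mul, mul_assoc, hze, ← mul_assoc, zeta_comm, mul_assoc, ← haw, mul_assoc, ← hze', mul_one]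
  rw [this]
  exact E.mul_mem (he 0) (E.mul_mem haE (hE _))

end L
end WF

namespace WF
open MvPolynomial

section red
variable {S F : Type} [CommRing S] [IsDomain S] [Field F] [Algebra S F] {p : ℕ} [Fact p.Prime] [CharP F p] {n : ℕ}

lemma ndvd_iff {S : Type} [CommRing S] {n : ℕ} (N : ℕ) (a : WeylAlgebra S n) : (N : WeylAlgebra S n) ∣ a ↔ ∀ m, (N : S) ∣ cf m a := by
  constructor
  · rintro ⟨b, rfl⟩ m
    rw [← nsmul_eq_mul, map_nsmul, nsmul_eq_mul]
    exact dvd_mul_right _ _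
  · intro h
    have h2 : C (N : S) ∣ sg S n a := (C_dvd_iff_dvd_coeff _ _).2 h
    obtain ⟨Q, hQ⟩ := h2
    refine ⟨(sg S n).symm Q, (sg S n).injective ?_⟩
    rw [← nsmul_eq_mul, map_nsmul, LinearEquiv.apply_symm_apply, hQ, nsmul_eq_mul]; simp

lemma sg_comm_Y {S : Type} [CommRing S] {n : ℕ} (i) (w : WeylAlgebra S n) : sg S n (w * WeylAlgebra.Y i - WeylAlgebra.Y i * w) = - pderiv (.inl i) (sg S n w) := by
  rw [map_sub, sg_Y_mul, sg_mul_Y]; ring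
lemma sg_comm_X {S : Type} [CommRing S] {n : ℕ} (i) (w : WeylAlgebra S n) : sg S n (w * WeylAlgebra.X i - WeylAlgebra.X i * w) = pderiv (.inr i) (sg S n w) := by
  rw [map_sub, sg_X_mul, sg_mul_X]; ring

lemma CMc {S : Type} [CommRing S] {n : ℕ} (N : ℕ) (w : WeylAlgebra S n) : CM N w ↔ ∀ m v, (N : S) ∣ (m v : S) * cf m w := by
  have key : (∀ v m, (N : S) ∣ coeff m (pderiv v (sg S n w))) ↔ ∀ m v, (N : S) ∣ (m v : S) * cf m w := by
    constructor
    · intro h m v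
      by_cases hm : m v = 0
      · simp [hm]
      · have := h v (m - Finsupp.single v 1)
        rw [coeff_pderiv] at this
        have e : m - Finsupp.single v 1 + Finsupp.single v 1 = m := by
          apply tsub_add_cancel_of_le
          intro u; by_cases hu : u = v
          · subst hu; simp; omega
          · simp [Finsupp.single_apply, Ne.symm hu]
        rw [e] at this
        have e2 : (((m - Finsupp.single v 1 : (Fin n ⊕ Fin n) →₀ ℕ) v : ℕ) : S) + 1 = (m v : S) := by
          have : (m - Finsupp.single v 1 : (Fin n ⊕ Fin n) →₀ ℕ) v + 1 = m v := by simp; omega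
          exact_mod_cast congrArg (Nat.cast (R := S)) this
        rw [e2] at this
        rwa [mul_comm, cf_apply]
    · intro h v m
      rw [coeff_pderiv]
      have := h (m + Finsupp.single v 1) v
      rw [mul_comm]
      simpa [cf_apply] using this
  rw [← key]
  constructor
  · intro h v m
    rcases v with i | i
    · have := (ndvd_iff N _).1 (h (WeylAlgebra.Y i)) m
      rw [cf_apply, sg_comm_Y, coeff_neg, dvd_neg] at this; exact this
    · have := (ndvd_iff N _).1 (h (WeylAlgebra.X i)) m
      rw [cf_apply, sg_comm_X] at this; exact this
  · intro h x
    have hY : ∀ i, (N : WeylAlgebra S n) ∣ w * WeylAlgebra.Y i - WeylAlgebra.Y i * w := fun i => 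
      (ndvd_iff N _).2 fun m => by rw [cf_apply, sg_comm_Y, coeff_neg, dvd_neg]; exact h _ _
    have hX : ∀ i, (N : WeylAlgebra S n) ∣ w * WeylAlgebra.X i - WeylAlgebra.X i * w := fun i => 
      (ndvd_iff N _).2 fun m => by rw [cf_apply, sg_comm_X]; exact h _ _
    induction x using windL with
    | h1 => simp
    | hX i a h => 
      have e : w * (WeylAlgebra.X i * a) - WeylAlgebra.X i * a * w = (w * WeylAlgebra.X i - WeylAlgebra.X i * w) * a + WeylAlgebra.X i * (w * a - a * w) := by noncomm_ring
      rw [e]; exact dvd_add (dvr (hX i) _) (dvl h _)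
    | hY i a h => 
      have e : w * (WeylAlgebra.Y i * a) - WeylAlgebra.Y i * a * w = (w * WeylAlgebra.Y i - WeylAlgebra.Y i * w) * a + WeylAlgebra.Y i * (w * a - a * w) := by noncomm_ring
      rw [e]; exact dvd_add (dvr (hY i) _) (dvl h _)
    | hadd a b h1 h2 =>
      have e : w * (a + b) - (a + b) * w = (w * a - a * w) + (w * b - b * w) := by noncomm_ring
      rw [e]; exact dvd_add h1 h2
    | hs s a h => 
      rw [mul_smul_comm, smul_mul_assoc, ← smul_sub]
      obtain ⟨z, hz⟩ := h
      exact ⟨s • z, by rw [hz, mul_smul_comm]⟩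

structure RedH (S F : Type) [CommRing S] [Field F] [Algebra S F] (p : ℕ) : Prop where
  p0 : (p : S) ≠ 0
  ker : ∀ s : S, algebraMap S F s = 0 ↔ (p : S) ∣ s
  surj : Function.Surjective (algebraMap S F)
  val : ∀ s : S, s ≠ 0 → ∃ m : ℕ, ¬ (p : S) ^ m ∣ s

lemma red_zero (r : RedH S F p) (a : WeylAlgebra S n) : wmap S F n a = 0 ↔ (p : WeylAlgebra S n) ∣ a := by
  rw [ndvd_iff]
  constructor
  · intro h m; rw [← r.ker, ← cf_wmap, h, map_zero]
  · intro h; apply cf_ext; intro m; rw [cf_wmap, (r.ker _).2 (h m), map_zero]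

lemma red_surj (r : RedH S F p) : Function.Surjective (wmap S F n) := by
  intro b
  obtain ⟨P, hP⟩ := MvPolynomial.map_surjective _ r.surj (sg F n b)
  exact ⟨(sg S n).symm P, (sg F n).injective (by rw [sg_wmap, LinearEquiv.apply_symm_apply, hP])⟩

lemma CM_zeta (r : RedH S F p) (s : ℕ) (hs : 1 ≤ s) (w : WeylAlgebra S n) (hw : CM (p ^ s) w) : ∃ P, wmap S F n w = zeta s p hs P := by
  have hp : p.Prime := Fact.out
  have := exists_expand (p^s) (pow_ne_zero _ hp.ne_zero) (sg F n (wmap S F n w)) (by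
    intro m v hv
    have h := (CMc _ _).1 hw m v
    rw [sg_wmap, coeff_map, r.ker, ← cf_apply]
    have hmv : m v ≠ 0 := fun h => hv (h ▸ dvd_zero _)
    obtain ⟨t, u, hu, e⟩ := Nat.exists_eq_pow_mul_and_not_dvd hmv p hp.ne_one
    have hts : t < s := by
      by_contra hc
      exact hv (e ▸ (pow_dvd_pow p (not_lt.1 hc)).mul_right u)
    have h0 := r.p0
    obtain ⟨z, hz⟩ := h
    · have : (u : S) * cf m w = p * (p ^ (s - t - 1) * z) := by
        apply mul_left_cancel₀ (pow_ne_zero t h0)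
        rw [e] at hz; push_cast at hz
        rw [← mul_assoc, hz]
        have : s = t + 1 + (s - t - 1) := by omega
        conv_lhs => rw [this]
        ring
      have h3 := (r.ker _).2 ⟨_, this⟩
      rw [map_mul, map_natCast, mul_eq_zero] at h3
      rcases h3 with h3 | h3
      · exact absurd ((CharP.cast_eq_zero_iff F p u).1 h3) hu
      · exact (r.ker _).1 h3)
  obtain ⟨G, hG⟩ := this
  exact ⟨G, (sg F n).injective (by rw [sg_zeta, hG])⟩

lemma zeta_CM (r : RedH S F p) (s : ℕ) (hs : 1 ≤ s) (P : Pol F n) : ∃ w : WeylAlgebra S n, CM (p ^ s) w ∧ wmap S F n w = zeta s p hs P := by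
  obtain ⟨Q, hQ⟩ := MvPolynomial.map_surjective _ r.surj P
  have hp : p.Prime := Fact.out
  refine ⟨(sg S n).symm (expand (p^s) Q), (CMc _ _).2 ?_, (sg F n).injective (by rw [sg_wmap, LinearEquiv.apply_symm_apply, map_expand, hQ, sg_zeta])⟩
  intro m v
  rw [cf_apply, LinearEquiv.apply_symm_apply]
  by_cases h : p ^ s ∣ m v
  · exact Dvd.dvd.mul_right (Nat.cast_dvd_cast h) _
  · rw [coeff_expand_of_not_dvd _ h]; simp

theorem good_of_red (r : RedH S F p) : Good p (WeylAlgebra S n) where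
  tf := by
    intro a h
    apply cf_ext; intro m
    have := congrArg (cf m) h
    rw [← nsmul_eq_mul, map_nsmul, nsmul_eq_mul, map_zero] at this
    rw [map_zero]
    exact (mul_eq_zero.1 this).resolve_left r.p0
  prime := by
    intro a b h
    rw [← red_zero r] at h ⊢
    rw [← red_zero r]
    rw [map_mul] at h
    exact mul_eq_zero.1 h
  nt := by
    rw [← red_zero r, map_one]
    haveI : Nontrivial (WeylAlgebra F n) := (sg F n).toEquiv.nontrivial
    exact one_ne_zero
  val := by
    intro a ha
    have : ∃ m, cf m a ≠ 0 := by
      by_contra hc; push Not at hc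
      exact ha (cf_ext fun m => by rw [hc, map_zero])
    obtain ⟨m, hm⟩ := this
    obtain ⟨N, hN⟩ := r.val _ hm
    have hex : ∃ N : ℕ, ¬ ((p ^ N : ℕ) : WeylAlgebra S n) ∣ a := ⟨N, fun h => hN (by
      have := (ndvd_iff _ _).1 h m; exact_mod_cast this)⟩
    classical
    obtain ⟨k, hk⟩ : ∃ k, Nat.find hex = k + 1 := Nat.exists_eq_succ_of_ne_zero (by
      intro h0; have := Nat.find_spec hex; rw [h0] at this; simp at this)
    have h1 : ((p ^ k : ℕ) : WeylAlgebra S n) ∣ a := not_not.1 (Nat.find_min hex (by omega))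
    obtain ⟨b, hb⟩ := h1
    refine ⟨k, b, hb, fun ⟨c, hc⟩ => Nat.find_spec hex ?_⟩
    rw [hk, hb, hc]
    exact ⟨c, by push_cast; rw [pow_succ]; noncomm_ring⟩
  rank := fun d M => weyl_rank d M
  cmult := by
    intro b hb
    rw [← red_zero r] at hb
    obtain ⟨a, -, z, hz, e⟩ := zmult 1 le_rfl _ hb ⊤ (fun _ => trivial) trivial
    obtain ⟨a, rfl⟩ := red_surj r a
    refine ⟨a, ?_, ?_⟩
    · rw [← red_zero r, map_mul, e]; intro h
      exact hz (zeta_inj 1 le_rfl (by rw [h, map_zero]))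
    · intro x
      rw [← red_zero r, map_sub, map_mul _ (a*b) x, map_mul _ x (a*b), map_mul _ a b, e, zeta_comm, sub_self]
  index := by
    intro d s hs hd E hpE hCE hsat hdep x
    have hmem : ∀ a, wmap S F n a ∈ E.map (wmap S F n).toRingHom → a ∈ E := by
      rintro a ⟨b, hb, e⟩
      have : wmap S F n (a - b) = 0 := by rw [map_sub, sub_eq_zero]; exact e.symm
      obtain ⟨c, hc⟩ := (red_zero r _).1 this
      have e2 : a = (p : WeylAlgebra S n) * c + b := by rw [← hc]; abel
      rw [e2]; exact E.add_mem (hpE c) hb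
    obtain ⟨z, hz, hzx⟩ := zindex s hs d hd (E.map (wmap S F n).toRingHom) (by
      intro P
      obtain ⟨w, hw, e⟩ := zeta_CM r s hs P
      exact ⟨w, hCE w hw, e⟩) (by
      intro v
      choose v' hv' using fun j => red_surj r (v j)
      obtain ⟨c, h1, ⟨j, -, h2⟩, h3⟩ := hdep v'
      refine ⟨fun j => wmap S F n (c j), fun j => ⟨c j, h1 j, rfl⟩, fun h0 => h2 ((red_zero r _).1 (congrFun h0 j)), ?_⟩
      simp_rw [← hv', ← map_mul, ← map_sum, h3, map_zero]) (wmap S F n x)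
    obtain ⟨u, hu, e⟩ := zeta_CM r s hs z
    rw [← e, ← map_mul] at hzx
    refine hsat u x hu (fun h => ?_) (hmem _ hzx)
    rw [← red_zero r, e] at h
    exact hz (zeta_inj s hs (by rw [h, map_zero]))
end red

section padic
variable (p : ℕ) [Fact p.Prime]
noncomputable abbrev padAlg : Algebra ℤ_[p] (ZMod p) := PadicInt.toZMod.toAlgebra
lemma padRed : letI := padAlg p; RedH ℤ_[p] (ZMod p) p := by
  letI := padAlg p
  refine ⟨?_, ?_, ?_, ?_⟩
  · exact_mod_cast (Fact.out : p.Prime).ne_zero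
  · intro s
    change PadicInt.toZMod s = 0 ↔ _
    rw [← RingHom.mem_ker, PadicInt.ker_toZMod, PadicInt.maximalIdeal_eq_span_p, Ideal.mem_span_singleton]
  · exact ZMod.ringHom_surjective _
  · intro s hs
    refine ⟨s.valuation + 1, fun h => ?_⟩
    rw [← Ideal.mem_span_singleton, PadicInt.mem_span_pow_iff_le_valuation s hs] at h
    omega
theorem good_padic (n : ℕ) : Good p (WeylAlgebra ℤ_[p] n) := by
  letI := padAlg p
  exact good_of_red (F := ZMod p) (padRed p)
end padic
end WF

namespace WF
open TensorProduct Coalgebra WithConv MvPolynomial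

section concl
variable {R : Type} [CommRing R] {H : Type} [Ring H] [HopfAlgebra R H]
  {S F : Type} [CommRing S] [IsDomain S] [Field F] [Algebra R S] [Algebra S F] {p : ℕ} [Fact p.Prime] [CharP F p] {n : ℕ}
  (ha : HopfAction R H (WeylAlgebra S n))

noncomputable def bet {R : Type} [CommRing R] {H : Type} [Ring H] [HopfAlgebra R H]
  {S : Type} [CommRing S] [Algebra R S] {n : ℕ}
  (ha : HopfAction R H (WeylAlgebra S n)) (f : WeylAlgebra S n) (r : (Fin n ⊕ Fin n) →₀ ℕ) : H →ₗ[R] S :=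
  (cf r).restrictScalars R ∘ₗ ha.act.flip f
lemma bet_apply (f r) (h : H) : bet ha f r h = cf r (ha.act h f) := rfl

noncomputable def kap (f : WeylAlgebra S n) (r : (Fin n ⊕ Fin n) →₀ ℕ) : NN R H (WeylAlgebra S n) :=
  toConv ((Algebra.lsmul R R (WeylAlgebra S n) : S →ₐ[R] Module.End R (WeylAlgebra S n)).toLinearMap ∘ₗ bet ha f r)
lemma kap_apply (f r) (h : H) (a) : kap ha f r h a = bet ha f r h • a := rfl

lemma box_all (d : ℕ) (hs : Fin d → H) (hspan : Submodule.span R (Set.range hs) = ⊤) (f : WeylAlgebra S n) :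
    ∃ s, ∀ h, BX (p ^ (s+1)) (sg S n (ha.act h f)) := by
  have hp : p.Prime := Fact.out
  choose N hN using fun i => BX_exists (ha.act (hs i) f)
  refine ⟨∑ i, N i, fun h => ?_⟩
  have hx : h ∈ Submodule.span R (Set.range hs) := by rw [hspan]; trivial
  induction hx using Submodule.span_induction with
  | mem x hx => 
    obtain ⟨i, rfl⟩ := hx
    refine (hN i).mono ?_
    calc N i ≤ ∑ i, N i := Finset.single_le_sum (fun _ _ => Nat.zero_le _) (Finset.mem_univ i)
      _ ≤ ∑ i, N i + 1 := Nat.le_succ _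
      _ ≤ p ^ (∑ i, N i + 1) := (Nat.lt_pow_self hp.one_lt).le
  | zero => intro m _; simp
  | add x y _ _ hx hy => simpa using hx.add hy
  | smul r x _ hx => 
    have := hx.smul (algebraMap R S r)
    rwa [← map_smul, algebraMap_smul, ← LinearMap.smul_apply, ← map_smul] at this

theorem conclusion (r : RedH S F p) (d : ℕ) (hdp : d < p) (hs : Fin d → H) (hspan : Submodule.span R (Set.range hs) = ⊤)
    (f x : WeylAlgebra S n) (m r' : (Fin n ⊕ Fin n) →₀ ℕ) (h : H) :
    (p : S) ∣ ∑ i ∈ (ℛ R h).index, bet ha x m ((ℛ R h).left i) * bet ha f r' ((ℛ R h).right i) -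
      ∑ i ∈ (ℛ R h).index, bet ha f r' ((ℛ R h).left i) * bet ha x m ((ℛ R h).right i) := by
  have hp : p.Prime := Fact.out
  have g := good_of_red (n := n) r
  obtain ⟨s, hbox⟩ := box_all (p := p) ha d hs hspan f
  set q := p ^ (s+1) with hq
  have hq0 : q ≠ 0 := pow_ne_zero _ hp.ne_zero
  have hio : ∀ a, kap ha f r' * io a = io a * kap ha f r' := by
    intro a; apply NN_ext; intro h b
    rw [mul_io, io_mul, kap_apply, kap_apply, mul_smul_comm]
  have h2 := step2 ha g d hdp hs hspan s (kap ha f r') hio ?_ x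
  · have h3 := (ndvd_iff _ _).1 (mem_JJ.1 h2 h 1) m
    have e : (ro ha x * kap ha f r' - kap ha f r' * ro ha x : NN R H (WeylAlgebra S n)) h 1 = 
      (ro ha x * kap ha f r' : NN R H (WeylAlgebra S n)) h 1 - (kap ha f r' * ro ha x : NN R H (WeylAlgebra S n)) h 1 := rfl
    rw [e, NN_mul, NN_mul] at h3
    simp only [ro_apply, kap_apply, map_sub, map_sum, mul_smul_comm, mul_one, map_smul, smul_eq_mul] at h3
    simp only [bet_apply] at h3 ⊢
    rw [Finset.sum_congr rfl (fun i _ => mul_comm _ _)]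
    exact h3
  · intro w hw
    rw [mem_JJ]
    intro h a
    have e : (ro ha w * kap ha f r' - kap ha f r' * ro ha w : NN R H (WeylAlgebra S n)) h a = 
      (ro ha w * kap ha f r' : NN R H (WeylAlgebra S n)) h a - (kap ha f r' * ro ha w : NN R H (WeylAlgebra S n)) h a := rfl
    rw [e, NN_mul, NN_mul]
    simp only [ro_apply, kap_apply, mul_smul_comm, ← smul_mul_assoc]
    rw [← Finset.sum_mul, ← Finset.sum_mul, ← sub_mul]
    apply dvr
    choose Q hQ using fun h => CM_zeta r (s+1) (by omega) _ (step1 ha g d hdp hs hspan s w hw h)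
    have hQc : ∀ h b, wmap S F n b * zeta (s+1) p (by omega) (Q h) = zeta (s+1) p (by omega) (Q h) * wmap S F n b := fun h b => (zeta_comm _ _ _ _).symm
    -- key
    have key : ∑ i ∈ (ℛ R h).index, zeta (s+1) p (by omega) (Q ((ℛ R h).left i)) * wmap S F n (ha.act ((ℛ R h).right i) f) =
        ∑ i ∈ (ℛ R h).index, zeta (s+1) p (by omega) (Q ((ℛ R h).right i)) * wmap S F n (ha.act ((ℛ R h).left i) f) := by
      obtain ⟨z, hz⟩ := hw f
      have h3 := congrArg (fun y => wmap S F n (ha.act h y)) hz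
      simp only [map_sub] at h3
      have h4 : wmap S F n (ha.act h (((p ^ (s+1) : ℕ) : WeylAlgebra S n) * z)) = 0 := by
        rw [← nsmul_eq_mul, map_nsmul, red_zero r, nsmul_eq_mul]
        refine Dvd.dvd.mul_right ?_ _
        exact Nat.cast_dvd_cast (dvd_pow_self _ (by omega))
      rw [h4, sub_eq_zero, act_mul_sum, act_mul_sum, map_sum, map_sum] at h3
      simp only [map_mul, hQ, hQc] at h3
      exact h3
    by_cases hr : ∀ v, r' v < q
    · rw [← red_zero r]
      apply cf_ext; intro M
      rw [map_zero, map_sub, map_sum, map_sum]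
      have h5 : ∀ (c : S) y, cf M (wmap S F n (c • ha.act y w)) = algebraMap S F c * coeff M (expand q (Q y)) := by
        intro c y
        have : wmap S F n (c • ha.act y w) = algebraMap S F c • wmap S F n (ha.act y w) := by
          rw [map_smul, algebraMap_smul]
        rw [this, map_smul, hQ, smul_eq_mul, cf_apply, sg_zeta]
      rw [map_sub, map_sum, map_sum]
      simp only [h5]
      by_cases hM : ∀ v, q ∣ M v
      · obtain ⟨M', rfl⟩ : ∃ M', M = q • M' := ⟨M.mapRange (· / q) (by simp), by
          ext v; simp [Nat.mul_div_cancel' (hM v)]⟩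
        simp only [coeff_expand_smul _ hq0]
        have h6 := congrArg (cf (q • M' + r')) key
        rw [map_sum, map_sum] at h6
        have h7 : ∀ y y', cf (q • M' + r') (zeta (s+1) p (by omega) (Q y) * wmap S F n (ha.act y' f)) = algebraMap S F (bet ha f r' y') * coeff M' (Q y) := by
          intro y y'
          rw [cf_apply, sg_zeta_mul, coeff_expand_mul _ _ _ _ _ _ hr, sg_wmap, coeff_map, mul_comm]; rfl
          intro m hm
          rw [sg_wmap, coeff_map, hbox _ _ hm, map_zero]
        simp only [h7] at h6
        rw [h6, sub_self]
      · push Not at hM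
        obtain ⟨v, hv⟩ := hM
        simp [coeff_expand_of_not_dvd _ hv]
    · push Not at hr
      have : ∀ y, bet ha f r' y = 0 := fun y => hbox _ _ hr
      simp [this]
end concl
end WF

namespace WF
open NumberField

lemma nf_places (L : Type) [Field L] [NumberField L] (s : Finset L) (d : ℕ) :
    ∃ (p : ℕ) (_ : Fact p.Prime), d < p ∧ ∃ (S F : Type) (_ : CommRing S) (_ : IsDomain S) (_ : Field F) (_ : Algebra S F) (_ : CharP F p),
      RedH S F p ∧ ∃ e : S →+* L, Function.Injective e ∧ ∀ x ∈ s, x ∈ e.range := by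
  obtain ⟨y, hy0, hy⟩ := exists_integral_multiples ℤ ℚ (L := L) s
  obtain ⟨p, hpd, hp⟩ := Nat.exists_infinite_primes (d + 1 + (discr L).natAbs + y.natAbs)
  haveI : Fact p.Prime := ⟨hp⟩
  have hpz : Prime (p : ℤ) := Nat.prime_iff_prime_int.1 hp
  have hd : ¬ (p : ℤ) ∣ discr L := by
    intro h
    have h1 : p ∣ (discr L).natAbs := Int.natCast_dvd.1 h
    have := Nat.le_of_dvd (Int.natAbs_pos.2 (discr_ne_zero L)) h1
    omega
  have hyp : ¬ (p : ℤ) ∣ y := by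
    intro h
    have h1 : p ∣ y.natAbs := Int.natCast_dvd.1 h
    have := Nat.le_of_dvd (Int.natAbs_pos.2 hy0) h1
    omega
  haveI hsp : (Ideal.span {(p : ℤ)}).IsPrime := (Ideal.span_singleton_prime hpz.ne_zero).2 hpz
  haveI hspm : (Ideal.span {(p : ℤ)}).IsMaximal := hsp.isMaximal (by simpa using hp.ne_zero)
  obtain ⟨P, -, hPp, hPc⟩ := Ideal.exists_ideal_over_prime_of_isIntegral (S := 𝓞 L) (Ideal.span {(p : ℤ)}) ⊥ (by
    rw [← RingHom.ker_eq_comap_bot]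
    rw [(RingHom.injective_iff_ker_eq_bot _).1 (algebraMap ℤ (𝓞 L)).injective_int]; exact bot_le)
  haveI hlo : P.LiesOver (Ideal.span {(p : ℤ)}) := ⟨hPc.symm⟩
  haveI hPm : P.IsMaximal := Ideal.isMaximal_of_isIntegral_of_isMaximal_comap P (by rw [hPc]; exact hspm)
  haveI hunr := (not_dvd_discr_iff_forall_liesOver L (𝓞 L) hpz).1 hd P hPm hlo
  have hP0 : P ≠ ⊥ := by
    rintro rfl
    have : (p : ℤ) ∈ (⊥ : Ideal (𝓞 L)).comap (algebraMap ℤ (𝓞 L)) := by rw [hPc]; exact Ideal.mem_span_singleton_self _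
    simp at this; exact hp.ne_zero this
  let S := Localization.AtPrime P
  haveI hDVR : IsDiscreteValuationRing S := IsLocalization.AtPrime.isDiscreteValuationRing_of_dedekind_domain (𝓞 L) hP0 S
  letI : Algebra (Localization.AtPrime (Ideal.span {(p : ℤ)})) S := Localization.AtPrime.algebraOfLiesOver _ _
  have hmax : (Ideal.span {(p : ℤ)}).map (algebraMap ℤ S) = IsLocalRing.maximalIdeal S := 
    ((Algebra.isUnramifiedAt_iff_map_eq ℤ (Ideal.span {(p : ℤ)}) P).1 hunr).2
  rw [Ideal.map_span, Set.image_singleton] at hmax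
  have hmax' : IsLocalRing.maximalIdeal S = Ideal.span {(p : S)} := by rw [← hmax]; simp
  have hker : ∀ s : S, IsLocalRing.residue S s = 0 ↔ (p : S) ∣ s := by
    intro s; rw [IsLocalRing.residue_eq_zero_iff, hmax', Ideal.mem_span_singleton]
  have hp0 : (p : S) ≠ 0 := by
    intro h0
    apply IsDiscreteValuationRing.not_a_field S
    rw [hmax', h0]; simp
  refine ⟨p, ⟨hp⟩, by omega, S, IsLocalRing.ResidueField S, inferInstance, inferInstance, inferInstance, inferInstance, ?_, ⟨hp0, hker, IsLocalRing.residue_surjective, ?_⟩, ?_⟩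
  · rw [CharP.charP_iff_prime_eq_zero hp, ← map_natCast (IsLocalRing.residue S)]
    exact (hker _).2 dvd_rfl
  · intro s hs
    have hnu : ¬ IsUnit (p : S) := by
      intro hu
      apply (hker 1).not.1 (by simp)
      exact hu.dvd
    obtain ⟨m, hm⟩ := FiniteMultiplicity.of_not_isUnit hnu hs
    exact ⟨m+1, hm⟩
  · have hu : ∀ z : P.primeCompl, IsUnit (algebraMap (𝓞 L) L z) := by
      intro z
      apply IsUnit.mk0
      intro h
      have : (z : 𝓞 L) = 0 := RingOfIntegers.coe_injective (by simpa using h)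
      exact z.2 (by rw [this]; exact P.zero_mem)
    refine ⟨IsLocalization.lift (M := P.primeCompl) (S := S) (g := algebraMap (𝓞 L) L) hu, ?_, ?_⟩
    · rw [IsLocalization.lift_injective_iff]
      intro x y
      rw [(IsLocalization.injective S P.primeCompl_le_nonZeroDivisors).eq_iff, RingOfIntegers.coe_injective.eq_iff]
    · intro x hx
      have hyP : (algebraMap ℤ (𝓞 L) y) ∈ P.primeCompl := by
        intro h
        have : y ∈ P.comap (algebraMap ℤ (𝓞 L)) := h
        rw [hPc, Ideal.mem_span_singleton] at this
        exact hyp this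
      refine ⟨IsLocalization.mk' S (show 𝓞 L from ⟨y • x, hy x hx⟩) (⟨_, hyP⟩ : P.primeCompl), ?_⟩
      rw [IsLocalization.lift_mk'_spec]
      simp

lemma max_nf (T : Type) [CommRing T] [Nontrivial T] [Algebra ℚ T] [Algebra.FiniteType ℚ T] : 
    ∃ (L : Type) (_ : Field L) (_ : NumberField L), Nonempty (T →+* L) := by
  obtain ⟨m, hm⟩ := Ideal.exists_maximal T
  letI : Field (T ⧸ m) := Ideal.Quotient.field m
  haveI h1 : Module.Finite ℚ (T ⧸ m) := finite_of_finite_type_of_isJacobsonRing ℚ (T ⧸ m)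
  haveI : CharZero (T ⧸ m) := algebraRat.charZero _
  refine ⟨T ⧸ m, inferInstance, @NumberField.mk _ _ inferInstance ?_, ⟨Ideal.Quotient.mk m⟩⟩
  convert h1
  exact Subsingleton.elim _ _

theorem arith {k : Type} [Field k] [CharZero k] (R : Subring k) (hfg : ∃ s : Finset k, Subring.closure (s : Set k) = R)
    (c : R) (hc : c ≠ 0) (d : ℕ) : 
    ∃ (p : ℕ) (_ : Fact p.Prime), d < p ∧ ∃ (S F : Type) (_ : CommRing S) (_ : IsDomain S) (_ : Field F) (_ : Algebra S F) (_ : CharP F p),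
      RedH S F p ∧ ∃ φ : R →+* S, IsUnit (φ c) := by
  classical
  obtain ⟨s, hs⟩ := hfg
  let T : Subalgebra ℚ k := Algebra.adjoin ℚ ((insert (c : k)⁻¹ s : Finset k) : Set k)
  haveI : Algebra.FiniteType ℚ T := (Subalgebra.fg_iff_finiteType T).1 ⟨_, rfl⟩
  have hRT : ∀ r : R, (r : k) ∈ T := by
    intro r
    have h1 : R ≤ T.toSubring := by
      rw [← hs, Subring.closure_le]
      intro x hx
      exact Algebra.subset_adjoin (by simp [Finset.mem_coe.1 hx])
    exact h1 r.2
  let f : R →+* T := R.subtype.codRestrict T.toSubring hRT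
  have hcT : (c : k)⁻¹ ∈ T := Algebra.subset_adjoin (by simp)
  obtain ⟨L, iL1, iL2, ⟨π⟩⟩ := max_nf T
  let g : R →+* L := π.comp f
  have hfc : f c * ⟨_, hcT⟩ = 1 := by
    apply Subtype.ext
    exact mul_inv_cancel₀ (fun h => hc (Subtype.ext h))
  let ci : L := π ⟨_, hcT⟩
  have hgc : g c * ci = 1 := by rw [← map_one π, ← hfc, map_mul]; rfl
  have hsR : ∀ x ∈ s, x ∈ R := fun x hx => hs ▸ Subring.subset_closure hx
  obtain ⟨p, hp, hpd, S, F, i1, i2, i3, i4, i5, hred, e, he, her⟩ := nf_places L (insert ci (s.attach.image (fun x : {x // x ∈ s} => g ⟨x.1, hsR x.1 x.2⟩))) d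
  refine ⟨p, hp, hpd, S, F, i1, i2, i3, i4, i5, hred, ?_⟩
  have hrange : ∀ r, g r ∈ e.range := by
    rintro ⟨r, hr⟩
    have hr' := hr
    rw [← hs] at hr'
    induction hr' using Subring.closure_induction with
    | mem x hx => exact her _ (by
        apply Finset.mem_insert_of_mem
        exact Finset.mem_image.2 ⟨⟨x, hx⟩, Finset.mem_attach _ _, rfl⟩)
    | zero => exact (map_zero g : g 0 = 0) ▸ e.range.zero_mem
    | one => exact (map_one g : g 1 = 1) ▸ e.range.one_mem
    | add x y hx hy h1 h2 => 
      rw [hs] at hx hy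
      have := e.range.add_mem (h1 hx) (h2 hy)
      rw [← map_add] at this; exact this
    | neg x hx h1 => 
      rw [hs] at hx
      have := e.range.neg_mem (h1 hx)
      rw [← map_neg] at this; exact this
    | mul x y hx hy h1 h2 => 
      rw [hs] at hx hy
      have := e.range.mul_mem (h1 hx) (h2 hy)
      rw [← map_mul] at this; exact this
  let eq := RingEquiv.ofBijective e.rangeRestrict ⟨fun a b h => he (congrArg Subtype.val h), e.rangeRestrict_surjective⟩
  have heq : ∀ x, e (eq.symm x) = x := fun x => congrArg Subtype.val (eq.apply_symm_apply x)
  refine ⟨(eq.symm : e.range →+* S).comp (g.codRestrict e.range hrange), ?_⟩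
  obtain ⟨y, hy⟩ := her ci (Finset.mem_insert_self _ _)
  refine IsUnit.of_mul_eq_one y (he ?_)
  rw [map_mul, map_one, hy, ← hgc]
  congr 1
  exact heq _
end WF

namespace WF
open TensorProduct Coalgebra WithConv

section prim
variable {k H : Type} [Field k] [CharZero k] [Ring H] [HopfAlgebra k H] [FiniteDimensional k H]

lemma prim_zero (η : H) (hη : comul (R := k) η = η ⊗ₜ 1 + 1 ⊗ₜ η) : η = 0 := by
  classical
  rcases subsingleton_or_nontrivial H with hsub | hnt
  · exact Subsingleton.elim _ _
  have hε : counit (R := k) η = 0 := by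
    have h1 := Coalgebra.rTensor_counit_comul (R := k) η
    rw [hη, map_add, LinearMap.rTensor_tmul, LinearMap.rTensor_tmul, Bialgebra.counit_one] at h1
    have h2 := congrArg (TensorProduct.lid k H) h1
    simp only [map_add, TensorProduct.lid_tmul, one_smul] at h2
    have h3 : counit (R := k) η • (1 : H) = 0 := by simpa using h2
    have h4 := congrArg (counit (R := k)) h3
    simpa using h4
  have hint : IsIntegral k η := Algebra.IsIntegral.isIntegral η
  set f := minpoly k η with hf
  set N := f.natDegree with hN
  have hN1 : 1 ≤ N := minpoly.natDegree_pos hint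
  rcases Nat.lt_or_ge 1 N with hN2 | hN2
  swap
  · have hfm : f.Monic := minpoly.monic hint
    have h1 : f.natDegree = 1 := by omega
    have h2 : f = Polynomial.X + Polynomial.C (f.coeff 0) := Polynomial.Monic.eq_X_add_C hfm h1
    have h3 : Polynomial.aeval η f = 0 := minpoly.aeval k η
    rw [h2] at h3
    simp only [map_add, Polynomial.aeval_X, Polynomial.aeval_C] at h3
    have h4 := congrArg (counit (R := k)) h3
    rw [map_add, hε, Bialgebra.counit_algebraMap, zero_add, map_zero] at h4
    rw [h4] at h3; simpa using h3
  exfalso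
  have hli := linearIndependent_pow (K := k) η
  -- functional
  obtain ⟨lam, hlam⟩ : ∃ lam : H →ₗ[k] k, ∀ j < N, lam (η ^ j) = if j = 1 then 1 else 0 := by
    let b := Module.Basis.extend hli.linearIndepOn_id
    have h1 : ∀ j : Fin f.natDegree, η ^ (j : ℕ) ∈ hli.linearIndepOn_id.extend (Set.subset_univ _) := fun j =>
      hli.linearIndepOn_id.subset_extend _ ⟨j, rfl⟩
    have hb : ∀ j : Fin f.natDegree, b ⟨_, h1 j⟩ = η ^ (j : ℕ) := fun j => by simp [b, Module.Basis.extend_apply_self]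
    refine ⟨b.coord ⟨_, h1 ⟨1, hN2⟩⟩, ?_⟩
    intro j hj
    rw [← hb ⟨j, hj⟩, Module.Basis.coord_apply, Module.Basis.repr_self, Finsupp.single_apply]
    congr 1
    rw [Subtype.mk.injEq, eq_iff_iff]
    constructor
    · intro h
      have := hli.injective (a₁ := ⟨j, hj⟩) (a₂ := ⟨1, hN2⟩) h
      simpa using this
    · rintro rfl; rfl
  let D : H →ₗ[k] H := (TensorProduct.rid k H).toLinearMap ∘ₗ (LinearMap.lTensor H lam) ∘ₗ comul
  have hD : ∀ M, D (η ^ M) = ∑ j ∈ Finset.range (M+1), (M.choose j * lam (η ^ j)) • η ^ (M - j) := by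
    intro M
    have h1 : comul (R := k) (η ^ M) = ∑ j ∈ Finset.range (M+1), (M.choose j : k) • ((η ^ (M-j)) ⊗ₜ[k] (η ^ j)) := by
      rw [Bialgebra.comul_pow, hη, add_comm, (Commute.add_pow (by simp [Commute, SemiconjBy]))]
      apply Finset.sum_congr rfl; intro j _
      simp only [Algebra.TensorProduct.tmul_pow, one_pow, Algebra.TensorProduct.tmul_mul_tmul, one_mul, mul_one]
      rw [← nsmul_eq_mul', Nat.cast_smul_eq_nsmul]
    simp only [D, LinearMap.comp_apply, h1, map_sum, map_smul, LinearMap.lTensor_tmul]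
    apply Finset.sum_congr rfl; intro j _
    simp [smul_smul]
  have hD1 : ∀ M < N, D (η ^ M) = (M : k) • η ^ (M - 1) := by
    intro M hM
    rw [hD]
    rcases Nat.eq_zero_or_pos M with h0 | h0
    · subst h0; simp; have := hlam 0 (by omega); simpa using this
    rw [Finset.sum_eq_single 1]
    · rw [hlam 1 hN2]; simp
    · intro j hj hj1
      rw [hlam j (by simp at hj; omega), if_neg hj1]; simp
    · intro h; simp at h; omega
  have hDN : D (η ^ N) = (N : k) • η ^ (N - 1) + lam (η ^ N) • 1 := by
    rw [hD, Finset.sum_range_succ, Finset.sum_eq_single 1]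
    · rw [hlam 1 hN2]; simp
    · intro j hj hj1
      rw [hlam j (by simpa using hj), if_neg hj1]; simp
    · intro h; simp at h; omega
  have hfm : f.Monic := minpoly.monic hint
  have h0 : D (Polynomial.aeval η f) = 0 := by rw [minpoly.aeval, map_zero]
  have key : Polynomial.aeval η (f.derivative + Polynomial.C (lam (η ^ N))) = 0 := by
    rw [← h0]
    conv_rhs => rw [Polynomial.aeval_eq_sum_range, Finset.sum_range_succ, map_add, map_sum, map_smul, hDN, hfm.coeff_natDegree, one_smul]
    rw [map_add, Polynomial.aeval_C, Algebra.algebraMap_eq_smul_one, ← add_assoc]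
    congr 1
    rw [Polynomial.derivative_apply, Polynomial.sum_over_range _ (by simp), Finset.sum_range_succ, map_add, map_sum]
    congr 1
    · apply Finset.sum_congr rfl; intro x hx
      rw [map_smul, hD1 x (by simpa using hx)]
      simp [Algebra.smul_def, mul_assoc]
    · rw [hfm.coeff_natDegree]; simp [Algebra.smul_def, ← hN]
  have hdeg : (f.derivative + Polynomial.C (lam (η ^ N))).natDegree < N := by
    refine lt_of_le_of_lt (Polynomial.natDegree_add_le _ _) ?_
    rw [Polynomial.natDegree_C]
    exact max_lt (Polynomial.natDegree_derivative_lt (by omega)) (by omega)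
  have hz : f.derivative + Polynomial.C (lam (η ^ N)) = 0 := by
    by_contra hne
    have := Polynomial.natDegree_le_natDegree (minpoly.degree_le_of_ne_zero k η hne key)
    rw [← hf] at this
    omega
  have hc := congrArg (fun q => Polynomial.coeff q (N - 1)) hz
  simp only [Polynomial.coeff_add, Polynomial.coeff_zero, Polynomial.coeff_derivative] at hc
  rw [Polynomial.coeff_C, if_neg (by omega), show N - 1 + 1 = N by omega, hfm.coeff_natDegree] at hc
  have : ((N - 1 : ℕ) : k) + 1 = 0 := by simpa using hc
  have h5 : ((N - 1 + 1 : ℕ) : k) = 0 := by push_cast; exact this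
  exact Nat.succ_ne_zero _ (Nat.cast_eq_zero.mp h5)
end prim
end WF

namespace WF
open TensorProduct Coalgebra WithConv

lemma red_of_noder {k B : Type} [Field k] [IsAlgClosed k] [CommRing B] [Algebra k B] [FiniteDimensional k B]
    (hder : ∀ (χ : B →ₐ[k] k) (δ : B →ₗ[k] k), (∀ a b, δ (a * b) = χ a * δ b + δ a * χ b) → δ = 0)
    (b : B) (hb : ∀ χ : B →ₐ[k] k, χ b = 0) : b = 0 := by
  have hN : IsNoetherianRing B := IsNoetherianRing.of_finite k B
  have main : ∀ m : Ideal B, m.IsMaximal → ∃ χ : B →ₐ[k] k, (∀ x, χ x = 0 ↔ x ∈ m) := by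
    intro m hm
    letI : Field (B ⧸ m) := Ideal.Quotient.field m
    have hbij : Function.Bijective (algebraMap k (B ⧸ m)) := IsAlgClosed.algebraMap_bijective_of_isIntegral
    let e := AlgEquiv.ofBijective (Algebra.ofId k (B ⧸ m)) hbij
    refine ⟨e.symm.toAlgHom.comp (Ideal.Quotient.mkₐ k m), fun x => ?_⟩
    have : (e.symm.toAlgHom.comp (Ideal.Quotient.mkₐ k m)) x = e.symm (Ideal.Quotient.mk m x) := rfl
    rw [this, EmbeddingLike.map_eq_zero_iff, Ideal.Quotient.eq_zero_iff_mem]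
  have idem : ∀ m : Ideal B, m.IsMaximal → m * m = m := by
    intro m hm
    obtain ⟨χ, hχ⟩ := main m hm
    apply le_antisymm Ideal.mul_le_left
    intro b0 hb0
    by_contra hn
    obtain ⟨f, hf0, hf⟩ := Submodule.exists_le_ker_of_notMem (p := (m * m).restrictScalars k) (v := b0) hn
    let δ : B →ₗ[k] k := f - (f 1) • χ.toLinearMap
    have hd : δ = 0 := by
      apply hder χ
      intro a b
      have hm1 : ∀ a : B, a - algebraMap k B (χ a) ∈ m := fun a => by
        rw [← hχ, map_sub, AlgHom.commutes]; simp
      have h2 : f ((a - algebraMap k B (χ a)) * (b - algebraMap k B (χ b))) = 0 :=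
        hf (Ideal.mul_mem_mul (hm1 a) (hm1 b))
      have h3 : (a - algebraMap k B (χ a)) * (b - algebraMap k B (χ b)) =
         a * b - χ a • b - χ b • a + (χ a * χ b) • 1 := by
        simp only [Algebra.smul_def, map_mul]; ring
      rw [h3] at h2
      simp only [map_add, map_sub, map_smul, smul_eq_mul] at h2
      simp only [δ, LinearMap.sub_apply, LinearMap.smul_apply, AlgHom.toLinearMap_apply, map_mul, smul_eq_mul]
      linear_combination h2
    have h4 : δ b0 = f b0 := by simp [δ, (hχ b0).2 hb0]
    rw [hd] at h4
    exact hf0 h4.symm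
  by_contra hne
  let J : Ideal B := (Ideal.span {b}).annihilator
  have hJ : J ≠ ⊤ := by
    intro h
    have : (1 : B) ∈ J := h ▸ trivial
    rw [Submodule.mem_annihilator] at this
    have := this b (Ideal.mem_span_singleton_self b)
    exact hne (by simpa using this)
  obtain ⟨m, hm, hJm⟩ := Ideal.exists_le_maximal J hJ
  obtain ⟨e, he, hme⟩ := (Ideal.isIdempotentElem_iff_of_fg m (IsNoetherian.noetherian m)).1 (idem m hm)
  obtain ⟨χ, hχ⟩ := main m hm
  have hbm := (hχ b).1 (hb χ)
  have hme' := hbm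
  rw [hme] at hme'
  obtain ⟨c, hc⟩ := Ideal.mem_span_singleton'.1 hme'
  have h1 : 1 - e ∈ J := by
    rw [Submodule.mem_annihilator]
    intro y hy
    obtain ⟨d, hd⟩ := Ideal.mem_span_singleton'.1 hy
    rw [← hd, ← hc, smul_eq_mul]
    have : e * e = e := he
    linear_combination (-d * c) * this
  have h2 : e ∈ m := by
    rw [hme]
    exact Ideal.mem_span_singleton_self e
  apply hm.ne_top
  rw [Ideal.eq_top_iff_one]
  have := m.add_mem (hJm h1) h2
  simpa using this

section
variable {k H : Type} [Field k] [Ring H] [HopfAlgebra k H] [FiniteDimensional k H]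

lemma sep1 {V : Type} [AddCommGroup V] [Module k V] (x y : V) (h : ∀ f : V →ₗ[k] k, f x = f y) : x = y := by
  rw [← sub_eq_zero]
  rw [← Module.forall_dual_apply_eq_zero_iff k]
  intro f
  rw [map_sub, h f, sub_self]

lemma sep2 (x y : H ⊗[k] H) (h : ∀ f g : H →ₗ[k] k,
    LinearMap.mul' k k (TensorProduct.map f g x) = LinearMap.mul' k k (TensorProduct.map f g y)) : x = y := by
  apply sep1 (k := k)
  intro F
  obtain ⟨G, rfl⟩ := (TensorProduct.dualDistribEquiv k H H).surjective F
  induction G using TensorProduct.induction_on with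
  | zero => simp
  | add a b ha hb => simp only [map_add, LinearMap.add_apply, ha, hb]
  | tmul f g =>
    have : ∀ z : H ⊗[k] H, (TensorProduct.dualDistribEquiv k H H) (f ⊗ₜ[k] g) z = LinearMap.mul' k k (TensorProduct.map f g z) := by
      intro z
      induction z using TensorProduct.induction_on with
      | zero => simp
      | add a b ha hb => simp only [map_add, ha, hb]
      | tmul a b =>
        rw [TensorProduct.map_tmul, LinearMap.mul'_apply]
        exact TensorProduct.dualDistrib_apply f g a b
    rw [this, this]; exact h f g

lemma ev_exists (L : WithConv (H →ₗ[k] k) →ₗ[k] k) : ∃ g : H, ∀ f : H →ₗ[k] k, L (toConv f) = f g := by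
  let L' : Module.Dual k (Module.Dual k H) := L ∘ₗ (WithConv.linearEquiv k (H →ₗ[k] k)).symm.toLinearMap
  refine ⟨(Module.evalEquiv k H).symm L', fun f => ?_⟩
  have := Module.apply_evalEquiv_symm_apply (R := k) (M := H) f L'
  rw [this]; rfl

theorem grouplike_span [IsAlgClosed k] [CharZero k] (hc : ∀ b b' : WithConv (H →ₗ[k] k), b * b' = b' * b) :
    Submodule.span k {g : H | IsGroupLikeElem k g} = ⊤ := by
  letI : CommRing (WithConv (H →ₗ[k] k)) := { (inferInstance : Ring (WithConv (H →ₗ[k] k))) with mul_comm := hc }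
  haveI : FiniteDimensional k (WithConv (H →ₗ[k] k)) :=
    Module.Finite.equiv (WithConv.linearEquiv k (H →ₗ[k] k)).symm
  have hG : ∀ χ : WithConv (H →ₗ[k] k) →ₐ[k] k, ∃ g : H, IsGroupLikeElem k g ∧ ∀ f : H →ₗ[k] k, χ (toConv f) = f g := by
    intro χ
    obtain ⟨g, hg⟩ := ev_exists χ.toLinearMap
    refine ⟨g, ⟨?_, ?_⟩, hg⟩
    · have := hg (ofConv 1)
      rw [toConv_ofConv] at this
      have h2 : χ 1 = _ := this
      rw [map_one] at h2
      rw [h2]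
      simp [LinearMap.convOne_def]
    · apply sep2
      intro f f'
      have h1 : χ (toConv f * toConv f') = _ := hg (ofConv (toConv f * toConv f'))
      rw [map_mul] at h1
      have h2 : χ (toConv f) = f g := hg f
      have h3 : χ (toConv f') = f' g := hg f'
      rw [h2, h3] at h1
      rw [TensorProduct.map_tmul, LinearMap.mul'_apply, h1]
      rfl
  by_contra hne
  obtain ⟨b, hb0, hb⟩ := Submodule.exists_le_ker_of_lt_top _ (lt_top_iff_ne_top.2 hne)
  apply hb0
  have h0 : (toConv b : WithConv (H →ₗ[k] k)) = 0 := by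
    apply red_of_noder (k := k)
    · intro χ δ hδ
      obtain ⟨g, hg, hgχ⟩ := hG χ
      obtain ⟨ξ, hξ⟩ := ev_exists δ
      have hcξ : comul (R := k) ξ = g ⊗ₜ ξ + ξ ⊗ₜ g := by
        apply sep2
        intro f f'
        have h1 : δ (toConv f * toConv f') = _ := hξ (ofConv (toConv f * toConv f'))
        rw [hδ, hgχ, hgχ, hξ, hξ] at h1
        rw [map_add, map_add, TensorProduct.map_tmul, LinearMap.mul'_apply, TensorProduct.map_tmul, LinearMap.mul'_apply, h1]
        rfl
      set g' := HopfAlgebra.antipode k g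
      have hg' : IsGroupLikeElem k g' := hg.antipode
      have e1 : g' * g = 1 := hg.antipode_mul_cancel
      have e2 : g * g' = 1 := hg.mul_antipode_cancel
      have hη : g' * ξ = 0 := by
        apply prim_zero (k := k)
        rw [Bialgebra.comul_mul, hg'.comul_eq_tmul_self, hcξ, mul_add, Algebra.TensorProduct.tmul_mul_tmul, Algebra.TensorProduct.tmul_mul_tmul, e1, add_comm]
      have hξ0 : ξ = 0 := by
        rw [← one_mul ξ, ← e2, mul_assoc, hη, mul_zero]
      ext f
      have := hξ (ofConv f)
      rw [hξ0, map_zero] at this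
      exact this
    · intro χ
      obtain ⟨g, hg, hgχ⟩ := hG χ
      rw [hgχ]
      exact hb (Submodule.subset_span hg)
  exact congrArg ofConv h0
end
end WF

namespace WF
open TensorProduct Coalgebra WithConv

section
variable {k H : Type} [Field k] [Ring H] [HopfAlgebra k H] [FiniteDimensional k H]

lemma sep3 {V : Type} [AddCommGroup V] [Module k V] [FiniteDimensional k V] (x y : V ⊗[k] V) (h : ∀ f g : V →ₗ[k] k,
    LinearMap.mul' k k (TensorProduct.map f g x) = LinearMap.mul' k k (TensorProduct.map f g y)) : x = y := by
  apply sep1 (k := k)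
  intro F
  obtain ⟨G, rfl⟩ := (TensorProduct.dualDistribEquiv k V V).surjective F
  induction G using TensorProduct.induction_on with
  | zero => simp
  | add a b ha hb => simp only [map_add, LinearMap.add_apply, ha, hb]
  | tmul f g =>
    have : ∀ z : V ⊗[k] V, (TensorProduct.dualDistribEquiv k V V) (f ⊗ₜ[k] g) z = LinearMap.mul' k k (TensorProduct.map f g z) := by
      intro z
      induction z using TensorProduct.induction_on with
      | zero => simp
      | add a b ha hb => simp only [map_add, ha, hb]
      | tmul a b =>
        rw [TensorProduct.map_tmul, LinearMap.mul'_apply]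
        exact TensorProduct.dualDistrib_apply f g a b
    rw [this, this]; exact h f g

noncomputable def ltr (x : H) (b : WithConv (H →ₗ[k] k)) : WithConv (H →ₗ[k] k) :=
  toConv (b.ofConv ∘ₗ LinearMap.mulLeft k x)
noncomputable def rtr (x : H) (b : WithConv (H →ₗ[k] k)) : WithConv (H →ₗ[k] k) :=
  toConv (b.ofConv ∘ₗ LinearMap.mulRight k x)

lemma ltr_mul (x : H) (b b' : WithConv (H →ₗ[k] k)) :
    ltr x (b * b') = ∑ i ∈ (ℛ k x).index, ltr ((ℛ k x).left i) b * ltr ((ℛ k x).right i) b' := by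
  apply ofConv_injective
  ext h
  rw [ofConv_sum, LinearMap.sum_apply]
  change LinearMap.mul' k k (TensorProduct.map b.ofConv b'.ofConv (comul (x * h))) = 
    ∑ i ∈ (ℛ k x).index, LinearMap.mul' k k (TensorProduct.map _ _ (comul (R := k) h))
  rw [Bialgebra.comul_mul, ← (ℛ k x).eq, Finset.sum_mul, map_sum, map_sum]
  apply Finset.sum_congr rfl; intro i _
  generalize comul (R := k) h = z
  induction z using TensorProduct.induction_on with
  | zero => simp
  | add a b ha hb => simp only [map_add, mul_add, ha, hb]
  | tmul a b => simp [ltr]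

lemma rtr_mul (x : H) (b b' : WithConv (H →ₗ[k] k)) :
    rtr x (b * b') = ∑ i ∈ (ℛ k x).index, rtr ((ℛ k x).left i) b * rtr ((ℛ k x).right i) b' := by
  apply ofConv_injective
  ext h
  rw [ofConv_sum, LinearMap.sum_apply]
  change LinearMap.mul' k k (TensorProduct.map b.ofConv b'.ofConv (comul (h * x))) = 
    ∑ i ∈ (ℛ k x).index, LinearMap.mul' k k (TensorProduct.map _ _ (comul (R := k) h))
  rw [Bialgebra.comul_mul, ← (ℛ k x).eq, Finset.mul_sum, map_sum, map_sum]
  apply Finset.sum_congr rfl; intro i _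
  generalize comul (R := k) h = z
  induction z using TensorProduct.induction_on with
  | zero => simp
  | add a b ha hb => simp only [map_add, add_mul, ha, hb]
  | tmul a b => simp [rtr]

variable {A : Type} [Ring A] [Algebra k A]
noncomputable def mc (ha : HopfAction k H A) (l : A →ₗ[k] k) (a : A) : WithConv (H →ₗ[k] k) :=
  toConv (l ∘ₗ ha.act.flip a)

noncomputable def BP (ha : HopfAction k H A) : Subalgebra k (WithConv (H →ₗ[k] k)) :=
  Algebra.adjoin k {b | ∃ l a, b = mc ha l a}

lemma ltr_mem (ha : HopfAction k H A) (b : WithConv (H →ₗ[k] k)) (hb : b ∈ BP ha) : ∀ x, ltr x b ∈ BP ha := by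
  induction hb using Algebra.adjoin_induction with
  | mem b h =>
    intro x
    obtain ⟨l, a, rfl⟩ := h
    apply Algebra.subset_adjoin
    refine ⟨l ∘ₗ ha.act x, a, ?_⟩
    apply ofConv_injective
    ext h
    change l (ha.act (x * h) a) = l (ha.act x (ha.act h a))
    rw [ha.mul_act]
  | algebraMap r =>
    intro x
    have : ltr x (algebraMap k _ r) = algebraMap k (WithConv (H →ₗ[k] k)) (r * counit (R := k) x) := by
      apply ofConv_injective
      ext h
      change r • counit (R := k) (x * h) = (r * counit (R := k) x) • counit (R := k) h
      simp [mul_assoc]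
    rw [this]; exact Subalgebra.algebraMap_mem _ _
  | add b b' _ _ h1 h2 => intro x; exact (BP ha).add_mem (h1 x) (h2 x)
  | mul b b' _ _ h1 h2 =>
    intro x
    rw [ltr_mul]
    exact Subalgebra.sum_mem _ fun i _ => Subalgebra.mul_mem _ (h1 _) (h2 _)

lemma rtr_mem (ha : HopfAction k H A) (b : WithConv (H →ₗ[k] k)) (hb : b ∈ BP ha) : ∀ x, rtr x b ∈ BP ha := by
  induction hb using Algebra.adjoin_induction with
  | mem b h =>
    intro x
    obtain ⟨l, a, rfl⟩ := h
    apply Algebra.subset_adjoin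
    refine ⟨l, ha.act x a, ?_⟩
    apply ofConv_injective
    ext h
    change l (ha.act (h * x) a) = l (ha.act h (ha.act x a))
    rw [ha.mul_act]
  | algebraMap r =>
    intro x
    have : rtr x (algebraMap k _ r) = algebraMap k (WithConv (H →ₗ[k] k)) (r * counit (R := k) x) := by
      apply ofConv_injective
      ext h
      change r • counit (R := k) (h * x) = (r * counit (R := k) x) • counit (R := k) h
      simp; ring
    rw [this]; exact Subalgebra.algebraMap_mem _ _
  | add b b' _ _ h1 h2 => intro x; exact (BP ha).add_mem (h1 x) (h2 x)
  | mul b b' _ _ h1 h2 =>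
    intro x
    rw [rtr_mul]
    exact Subalgebra.sum_mem _ fun i _ => Subalgebra.mul_mem _ (h1 _) (h2 _)

lemma tensorIdeal_of_ker (I : Submodule k H) (z : H ⊗[k] H) (hz : TensorProduct.map I.mkQ I.mkQ z = 0) :
    z ∈ tensorIdeal k H I := by
  have h1 := TensorProduct.map_ker (g := I.mkQ) (g' := I.mkQ) (f := I.subtype) (f' := I.subtype)
    (by rw [LinearMap.exact_iff]; simp) (Submodule.mkQ_surjective I)
    (by rw [LinearMap.exact_iff]; simp) (Submodule.mkQ_surjective I)
  have h2 : z ∈ LinearMap.ker (TensorProduct.map I.mkQ I.mkQ) := hz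
  rw [h1] at h2
  have h3 : LinearMap.range (I.subtype.lTensor H) ⊔ LinearMap.range (I.subtype.rTensor H) ≤ tensorIdeal k H I := by
    apply sup_le
    · rintro _ ⟨w, rfl⟩
      induction w using TensorProduct.induction_on with
      | zero => simp
      | add a b ha hb => rw [map_add]; exact Submodule.add_mem _ ha hb
      | tmul a b => exact Submodule.subset_span (Or.inr ⟨a, b, b.2, rfl⟩)
    · rintro _ ⟨w, rfl⟩
      induction w using TensorProduct.induction_on with
      | zero => simp
      | add a b ha hb => rw [map_add]; exact Submodule.add_mem _ ha hb
      | tmul a b => exact Submodule.subset_span (Or.inl ⟨a, a.2, b, rfl⟩)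
  exact h3 h2

/-- a biideal of a f.d. Hopf algebra over a field is stable under the antipode -/
lemma antipode_stable (I : Submodule k H) (h1 : ∀ x ∈ I, ∀ h : H, h * x ∈ I ∧ x * h ∈ I)
    (h2 : ∀ x ∈ I, comul (R := k) x ∈ tensorIdeal k H I) (h3 : ∀ x ∈ I, counit (R := k) x = 0) :
    ∀ x ∈ I, HopfAlgebra.antipode k x ∈ I := by
  let U : Submodule k (WithConv (H →ₗ[k] H)) :=
    { carrier := {u | ∀ x ∈ I, u.ofConv x ∈ I}
      add_mem' := fun {u v} hu hv x hx => I.add_mem (hu x hx) (hv x hx)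
      zero_mem' := fun x hx => I.zero_mem
      smul_mem' := fun c u hu x hx => I.smul_mem c (hu x hx) }
  have hUm : ∀ u v, u ∈ U → v ∈ U → u * v ∈ U := by
    intro u v hu hv x hx
    change LinearMap.mul' k H (TensorProduct.map u.ofConv v.ofConv (comul x)) ∈ I
    have : tensorIdeal k H I ≤ Submodule.comap (LinearMap.mul' k H ∘ₗ TensorProduct.map u.ofConv v.ofConv) I := by
      rw [tensorIdeal, Submodule.span_le]
      rintro z (⟨a, ha, b, rfl⟩ | ⟨a, b, hb, rfl⟩)
      · simpa using (h1 _ (hu a ha) _).2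
      · simpa using (h1 _ (hv b hb) _).1
    exact this (h2 x hx)
  have hU1 : (1 : WithConv (H →ₗ[k] H)) ∈ U := by
    intro x hx
    change algebraMap k H (counit (R := k) x) ∈ I
    rw [h3 x hx, map_zero]; exact I.zero_mem
  let i : WithConv (H →ₗ[k] H) := toConv LinearMap.id
  let s : WithConv (H →ₗ[k] H) := toConv (HopfAlgebra.antipode k)
  have hi : i ∈ U := fun x hx => hx
  have hsi : s * i = 1 := by
    apply ofConv_injective
    ext x
    rw [show (s * i).ofConv x = _ from (ℛ k x).convMul_apply s i, show (1 : WithConv (H →ₗ[k] H)).ofConv x = _ from LinearMap.convOne_apply x]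
    exact HopfAlgebra.sum_antipode_mul_eq_algebraMap_counit (ℛ k x)
  haveI : FiniteDimensional k (WithConv (H →ₗ[k] H)) :=
    Module.Finite.equiv (WithConv.linearEquiv k (H →ₗ[k] H)).symm
  let T : U →ₗ[k] U := (LinearMap.mulLeft k i).restrict (fun u hu => hUm _ _ hi hu)
  have hT : Function.Injective T := by
    intro u v huv
    have : i * u.1 = i * v.1 := congrArg Subtype.val huv
    have := congrArg (fun w => s * w) this
    simp only [← mul_assoc, hsi, one_mul] at this
    exact Subtype.ext this
  obtain ⟨u, hu⟩ := (LinearMap.injective_iff_surjective.1 hT) ⟨1, hU1⟩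
  have hu' : i * u.1 = 1 := congrArg Subtype.val hu
  have : s = u.1 := left_inv_eq_right_inv hsi hu'
  intro x hx
  have h := u.2 x hx
  rw [← this] at h
  exact h

theorem comm_of_inner (ha : HopfAction k H A) (hif : ha.InnerFaithful)
    (hC : ∀ l a l' a', mc ha l a * mc ha l' a' = mc ha l' a' * mc ha l a) :
    ∀ b b' : WithConv (H →ₗ[k] k), b * b' = b' * b := by
  let W : Submodule k (Module.Dual k H) := (Subalgebra.toSubmodule (BP ha)).map (WithConv.linearEquiv k (H →ₗ[k] k)).toLinearMap
  have hW : ∀ f : H →ₗ[k] k, f ∈ W ↔ toConv f ∈ BP ha := by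
    intro f
    constructor
    · rintro ⟨g, hg, rfl⟩; exact hg
    · intro h; exact ⟨toConv f, h, rfl⟩
  let I := W.dualCoannihilator
  have hI : ∀ x, x ∈ I ↔ ∀ b ∈ BP ha, b.ofConv x = 0 := by
    intro x
    rw [Submodule.mem_dualCoannihilator]
    constructor
    · intro h b hb; exact h b.ofConv ((hW _).2 hb)
    · intro h f hf; exact h _ ((hW f).1 hf)
  have hII : ∀ f : H →ₗ[k] k, (∀ x ∈ I, f x = 0) → toConv f ∈ BP ha := by
    intro f hf
    haveI : FiniteDimensional k (Module.Dual k H) := Subspace.instModuleDualFiniteDimensional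
    haveI : FiniteDimensional k W := FiniteDimensional.finiteDimensional_submodule W
    rw [← hW, ← Subspace.dualCoannihilator_dualAnnihilator_eq (W := W), Submodule.mem_dualAnnihilator]
    exact hf
  have c1 : ∀ x ∈ I, ∀ h : H, h * x ∈ I ∧ x * h ∈ I := by
    intro x hx h
    rw [hI] at hx
    exact ⟨(hI _).2 fun b hb => hx _ (ltr_mem ha b hb h), (hI _).2 fun b hb => hx _ (rtr_mem ha b hb h)⟩
  have c2 : ∀ x ∈ I, comul (R := k) x ∈ tensorIdeal k H I := by
    intro x hx
    apply tensorIdeal_of_ker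
    apply sep3 (k := k)
    intro f g
    rw [map_zero, map_zero, ← LinearMap.comp_apply (TensorProduct.map f g), ← TensorProduct.map_comp]
    have hf : toConv (f ∘ₗ I.mkQ) ∈ BP ha := hII _ (fun x hx => by simp [(Submodule.Quotient.mk_eq_zero I).2 hx])
    have hg : toConv (g ∘ₗ I.mkQ) ∈ BP ha := hII _ (fun x hx => by simp [(Submodule.Quotient.mk_eq_zero I).2 hx])
    exact (hI x).1 hx _ ((BP ha).mul_mem hf hg)
  have c3 : ∀ x ∈ I, counit (R := k) x = 0 := by
    intro x hx
    exact (hI x).1 hx _ (BP ha).one_mem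
  have hbot : I = ⊥ := by
    apply hif I ⟨c1, c2, c3, antipode_stable I c1 c2 c3⟩
    intro x hx a
    apply sep1 (k := k)
    intro l
    rw [map_zero]
    exact (hI x).1 hx (mc ha l a) (Algebra.subset_adjoin ⟨l, a, rfl⟩)
  have hall : ∀ b : WithConv (H →ₗ[k] k), b ∈ BP ha := by
    intro b
    have := hII b.ofConv (by rw [hbot]; intro x hx; rw [(Submodule.mem_bot k).1 hx, map_zero])
    simpa using this
  intro b b'
  have key : Commute b b' := Algebra.commute_of_mem_adjoin_of_forall_mem_commute (R := k) (hall b') (by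
    rintro _ ⟨l, a, rfl⟩
    exact (Algebra.commute_of_mem_adjoin_of_forall_mem_commute (R := k) (hall b) (by
      rintro _ ⟨l', a', rfl⟩
      exact hC _ _ _ _)).symm)
  exact key
end
end WF

namespace WF
open TensorProduct Coalgebra WithConv

theorem commR {k : Type} [Field k] [CharZero k] (R : Subring k) (hfg : ∃ s : Finset k, Subring.closure (s : Set k) = R)
    {HR : Type} [Ring HR] [HopfAlgebra R HR] [Module.Finite R HR] {n : ℕ} (haR : HopfAction R HR (WeylAlgebra R n))
    (f x : WeylAlgebra R n) (m r' : (Fin n ⊕ Fin n) →₀ ℕ) (h : HR) :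
    ∑ i ∈ (ℛ R h).index, cf m (haR.act ((ℛ R h).left i) x) * cf r' (haR.act ((ℛ R h).right i) f) =
      ∑ i ∈ (ℛ R h).index, cf r' (haR.act ((ℛ R h).left i) f) * cf m (haR.act ((ℛ R h).right i) x) := by
  rw [← sub_eq_zero]
  by_contra hne
  obtain ⟨d, hs, hspan⟩ := Module.Finite.exists_fin (R := R) (M := HR)
  obtain ⟨p, hp, hdp, S, F, _, _, _, _, _, hr, φ, hu⟩ := arith R hfg _ hne d
  letI := φ.toAlgebra
  have h1 := conclusion (extAct S haR) hr d hdp hs hspan (wmap R S n f) (wmap R S n x) m r' h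
  simp only [bet_apply, extAct_wmap, cf_wmap] at h1
  have h2 : ∀ r : R, algebraMap R S r = φ r := fun r => rfl
  simp only [h2, ← map_mul, ← map_sum, ← map_sub] at h1
  have h3 := (hr.ker _).2 h1
  have h4 := (hu.map (algebraMap S F)).ne_zero
  exact h4 h3

theorem grouplike_main
    (k : Type) [Field k] [IsAlgClosed k] [CharZero k]
    (H : Type) [Ring H] [HopfAlgebra k H] [FiniteDimensional k H]
    (n : ℕ) (ha : HopfAction k H (WeylAlgebra k n))
    (hif : ha.InnerFaithful)
    (R : Subring k) (hfg : ∃ s : Finset k, Subring.closure (s : Set k) = R)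
    (HR : Type) [Ring HR] [HopfAlgebra R HR] [Module.Finite R HR] 
    (ι : HR →ₗ[R] H) (horder : Function.Bijective (LinearMap.liftBaseChange k ι))
    (hcomul : ∀ x : HR, Coalgebra.comul (R := k) (ι x) =
        ordTensor R k H HR ι (Coalgebra.comul (R := R) x))
    (haR : HopfAction R HR (WeylAlgebra R n))
    (hj : ∀ (x : HR) (a : WeylAlgebra R n), ha.act (ι x) (wmap R k n a) = wmap R k n (haR.act x a)) :
    Submodule.span k {g : H | IsGroupLikeElem k g} = ⊤ := by
  apply grouplike_span
  apply comm_of_inner ha hif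
  have hspan : Submodule.span k (Set.range ι) = ⊤ := by
    rw [eq_top_iff]
    rintro h -
    obtain ⟨z, rfl⟩ := horder.2 h
    induction z using TensorProduct.induction_on with
    | zero => simp
    | add a b ha hb => rw [map_add]; exact Submodule.add_mem _ ha hb
    | tmul c x =>
      rw [LinearMap.liftBaseChange_tmul]
      exact Submodule.smul_mem _ _ (Submodule.subset_span ⟨x, rfl⟩)
  have s1 : ∀ m r x f, mc ha (cf m) (wmap R k n x) * mc ha (cf r) (wmap R k n f) = mc ha (cf r) (wmap R k n f) * mc ha (cf m) (wmap R k n x) := by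
    intro m r x f
    apply ofConv_injective
    apply LinearMap.ext_on_range hspan
    intro y
    have e : ∀ m r x f, (mc ha (cf m) (wmap R k n x) * mc ha (cf r) (wmap R k n f)).ofConv (ι y) = 
       algebraMap R k (∑ i ∈ (ℛ R y).index, cf m (haR.act ((ℛ R y).left i) x) * cf r (haR.act ((ℛ R y).right i) f)) := by
      intro m r x f
      change LinearMap.mul' k k (TensorProduct.map _ _ (comul (R := k) (ι y))) = _
      rw [hcomul, ← (ℛ R y).eq]
      simp only [map_sum]
      apply Finset.sum_congr rfl; intro i _
      have : ordTensor R k H HR ι ((ℛ R y).left i ⊗ₜ (ℛ R y).right i) = ι ((ℛ R y).left i) ⊗ₜ ι ((ℛ R y).right i) := rfl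
      rw [this, TensorProduct.map_tmul, LinearMap.mul'_apply, map_mul]
      change cf m (ha.act _ _) * cf r (ha.act _ _) = _
      rw [hj, hj, cf_wmap, cf_wmap]
    rw [e, e, commR R hfg haR]
  have ladd : ∀ l a b, mc ha l (a + b) = mc ha l a + mc ha l b := by
    intro l a b; apply ofConv_injective; ext h; simp [mc]
  have lsmul : ∀ l (c : k) b, mc ha l (c • b) = c • mc ha l b := by
    intro l a b; apply ofConv_injective; ext h; simp [mc]
  have lz : ∀ l, mc ha l 0 = 0 := by
    intro l; apply ofConv_injective; ext h; simp [mc]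
  have s2 : ∀ m r a f, Commute (mc ha (cf m) a) (mc ha (cf r) (wmap R k n f)) := by
    intro m r a f
    have : a ∈ Submodule.span k (Set.range (wmap R k n)) := by rw [span_wmap]; trivial
    induction this using Submodule.span_induction with
    | mem a h => obtain ⟨x, rfl⟩ := h; exact s1 m r x f
    | zero => rw [lz]; exact Commute.zero_left _
    | add a b _ _ h1 h2 => rw [ladd]; exact h1.add_left h2
    | smul c a _ h => rw [lsmul]; exact h.smul_left c
  have s3 : ∀ m r a b, Commute (mc ha (cf m) a) (mc ha (cf r) b) := by
    intro m r a b
    have : b ∈ Submodule.span k (Set.range (wmap R k n)) := by rw [span_wmap]; trivial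
    induction this using Submodule.span_induction with
    | mem b h => obtain ⟨x, rfl⟩ := h; exact s2 m r a x
    | zero => rw [lz]; exact Commute.zero_right _
    | add a b _ _ h1 h2 => rw [ladd]; exact h1.add_right h2
    | smul c a _ h => rw [lsmul]; exact h.smul_right c
  have hsp : ∀ l a, (mc ha l a).ofConv ∈ Submodule.span k (Set.range fun m => (mc ha (cf m) a).ofConv) := by
    intro l a
    set W : Submodule k (Module.Dual k H) := Submodule.span k (Set.range fun m => (mc ha (cf m) a).ofConv)
    haveI : FiniteDimensional k (Module.Dual k H) := Subspace.instModuleDualFiniteDimensional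
    haveI : FiniteDimensional k W := FiniteDimensional.finiteDimensional_submodule W
    change (mc ha l a).ofConv ∈ W
    rw [← Subspace.dualCoannihilator_dualAnnihilator_eq (W := W), Submodule.mem_dualAnnihilator]
    intro h hh
    rw [Submodule.mem_dualCoannihilator] at hh
    have : ha.act h a = 0 := by
      apply cf_ext; intro m
      rw [map_zero]
      exact hh _ (Submodule.subset_span ⟨m, rfl⟩)
    change l (ha.act h a) = 0
    rw [this, map_zero]
  have cz : ∀ (z : WithConv (H →ₗ[k] k)) a, (∀ m, Commute (mc ha (cf m) a) z) → ∀ l, Commute (mc ha l a) z := by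
    intro z a hz l
    have : ∀ u ∈ Submodule.span k (Set.range fun m => (mc ha (cf m) a).ofConv), Commute (toConv u) z := by
      intro u hu
      induction hu using Submodule.span_induction with
      | mem u h => obtain ⟨m, rfl⟩ := h; exact hz m
      | zero => exact Commute.zero_left z
      | add a b _ _ h1 h2 => rw [toConv_add]; exact h1.add_left h2
      | smul c a _ h => rw [toConv_smul]; exact h.smul_left c
    exact this _ (hsp l a)
  intro l a l' a'
  apply cz
  intro m
  exact (cz _ a' (fun r => (s3 m r a a').symm) l').symm
end WF

namespace WF
open TensorProduct Coalgebra WithConv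

lemma exists_val {k : Type} [Field k] (R : Subring k) (P : Ideal R) [P.IsPrime] :
    ∃ V : ValuationSubring k, (∀ r : R, (r : k) ∈ V) ∧ (∀ r : R, V.valuation (r : k) < 1 ↔ r ∈ P) := by
  obtain ⟨V, hV⟩ := (LocalSubring.ofPrime R P).exists_le_valuationSubring
  have hR : ∀ r : R, (r : k) ∈ V := fun r => hV.1 (LocalSubring.le_ofPrime R P r.2)
  refine ⟨V, hR, fun r => ?_⟩
  constructor
  · intro h
    by_contra hr
    have hu : IsUnit (algebraMap R (LocalSubring.ofPrime R P).toSubring r) :=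
      IsLocalization.map_units (M := P.primeCompl) _ ⟨r, hr⟩
    have h1 := hu.map (Subring.inclusion hV.1)
    have h2 : V.valuation (r : k) = 1 := (V.valuation_eq_one_iff ⟨(r : k), hR r⟩).1 h1
    exact absurd h2 h.ne
  · intro hr
    have hnu : ¬ IsUnit (algebraMap R (LocalSubring.ofPrime R P).toSubring r) := by
      rw [IsLocalization.AtPrime.isUnit_to_map_iff (LocalSubring.ofPrime R P).toSubring P r]
      exact fun h => h hr
    obtain ⟨_, hloc⟩ := hV
    have h1 : ¬ IsUnit (⟨(r : k), hR r⟩ : V) := fun h => hnu (hloc.map_nonunit _ h)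
    have h2 := (V.valuation_lt_one_iff ⟨(r : k), hR r⟩).1 ((IsLocalRing.mem_maximalIdeal _).2 h1)
    exact h2

lemma lemmaN {k : Type} [Field k] (R : Subring k) (P : Ideal R) [P.IsPrime]
    (M : Type) [AddCommGroup M] [Module R M] [Module.Finite R M] [Module.Projective R M] :
    ∃ (d : ℕ) (y : Fin d → M) (lam : Fin d → M →ₗ[R] k), (∀ s t, lam s (y t) = if s = t then 1 else 0) ∧
      ∀ z : M, ∃ (t : R) (c : Fin d → R), t ∉ P ∧ t • z = ∑ s, c s • y s := by
  classical
  let Rp := Localization.AtPrime P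
  let Mp := LocalizedModule P.primeCompl M
  let mk := LocalizedModule.mkLinearMap P.primeCompl M
  haveI : Module.Flat Rp Mp := Module.Flat.localizedModule P.primeCompl
  haveI : Module.Finite Rp Mp := Module.Finite.of_isLocalizedModule P.primeCompl mk
  haveI : Module.Free Rp Mp := Module.free_of_flat_of_isLocalRing
  let e0 := Module.finBasis Rp Mp
  have h0 := fun s => IsLocalizedModule.surj P.primeCompl mk (e0 s)
  choose yt hyt using h0
  have hu : ∀ s, IsUnit (algebraMap R Rp (yt s).2) := fun s => IsLocalization.map_units (M := P.primeCompl) Rp (yt s).2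
  let e := e0.isUnitSMul hu
  have he : ∀ s, e s = mk (yt s).1 := by
    intro s
    rw [Module.Basis.isUnitSMul_apply, ← hyt s, algebraMap_smul]; rfl
  have hg : ∀ t : P.primeCompl, IsUnit (R.subtype t) := by
    intro t
    refine IsUnit.mk0 _ ?_
    intro h
    have : (t : R) = 0 := Subtype.ext h
    exact t.2 (this ▸ P.zero_mem)
  let φ : Rp →+* k := IsLocalization.lift hg
  have hφ : ∀ r : R, φ (algebraMap R Rp r) = r := fun r => IsLocalization.lift_eq hg r
  have hφs : ∀ (r : R) (x : Rp), φ (r • x) = r • φ x := by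
    intro r x
    rw [Algebra.smul_def, map_mul, hφ]; rfl
  let φl : Rp →ₗ[R] k := { toFun := φ, map_add' := map_add φ, map_smul' := hφs }
  refine ⟨_, fun s => (yt s).1, fun s => φl ∘ₗ (e.coord s).restrictScalars R ∘ₗ mk, ?_, ?_⟩
  · intro s t
    change φ (e.coord s (mk (yt t).1)) = _
    rw [← he, Module.Basis.coord_apply, Module.Basis.repr_self, Finsupp.single_apply, apply_ite φ, map_one, map_zero]
    simp only [eq_comm]
  · intro z
    obtain ⟨b, hb⟩ := IsLocalization.exist_integer_multiples_of_finset P.primeCompl (Finset.univ.image (fun s => e.repr (mk z) s))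
    have hb' : ∀ s, ∃ c : R, algebraMap R Rp c = (b : R) • e.repr (mk z) s := fun s => hb _ (Finset.mem_image_of_mem _ (Finset.mem_univ s))
    choose c hc using hb'
    have h1 : mk ((b : R) • z) = mk (∑ s, c s • (yt s).1) := by
      rw [map_smul, map_sum]
      conv_lhs => rw [← e.sum_repr (mk z), Finset.smul_sum]
      apply Finset.sum_congr rfl; intro s _
      rw [map_smul, ← he, ← smul_assoc, ← hc s, algebraMap_smul]
    obtain ⟨t, ht⟩ := (IsLocalizedModule.eq_iff_exists P.primeCompl mk).1 h1
    refine ⟨(t : R) * b, fun s => (t : R) * c s, ?_, ?_⟩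
    · exact (t * b).2
    · have ht' : (t : R) • ((b : R) • z) = (t : R) • ∑ s, c s • (yt s).1 := ht
      rw [mul_smul, ht', Finset.smul_sum]
      simp only [mul_smul]
end WF

namespace WF
open TensorProduct Coalgebra WithConv

lemma conv_gl {k H : Type} [Field k] [Ring H] [HopfAlgebra k H] (f f' : H →ₗ[k] k) (g : H) (hg : IsGroupLikeElem k g) :
    (toConv f * toConv f').ofConv g = f g * f' g := by
  change LinearMap.mul' k k (TensorProduct.map f f' (comul (R := k) g)) = _
  rw [hg.comul_eq_tmul_self]; simp

lemma gl_coord {k H : Type} [Field k] [Ring H] [HopfAlgebra k H] (V : ValuationSubring k) {d : ℕ} (B : Module.Basis (Fin d) k H)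
    (h1 : ∀ s t r, (toConv (B.coord s) * toConv (B.coord t)).ofConv (B r) ∈ V)
    (h2 : ∀ r, counit (R := k) (B r) ∈ V) (g : H) (hg : IsGroupLikeElem k g) (s : Fin d) : B.coord s g ∈ V := by
  classical
  let N : Submodule V k := Submodule.span V (Set.range fun t => B.coord t g)
  have hexp : ∀ F : H →ₗ[k] k, F g = ∑ r, F (B r) * B.coord r g := by
    intro F
    conv_lhs => rw [← B.sum_repr g, map_sum]
    apply Finset.sum_congr rfl; intro r _
    rw [map_smul, smul_eq_mul, mul_comm]; rfl
  have hN : ∀ c : Fin d → k, (∀ r, c r ∈ V) → ∑ r, c r * B.coord r g ∈ N := by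
    intro c hc
    apply Submodule.sum_mem
    intro r _
    exact Submodule.smul_mem N (⟨c r, hc r⟩ : V) (Submodule.subset_span ⟨r, rfl⟩)
  have hone : (1 : k) ∈ N := by
    rw [← hg.counit_eq_one, hexp (counit (R := k))]
    exact hN _ h2
  have hint : IsIntegral V (B.coord s g) := by
    refine isIntegral_of_smul_mem_submodule (N := N) ?_ (Submodule.fg_span (Set.finite_range _)) _ ?_
    · intro h; rw [h] at hone; exact one_ne_zero ((Submodule.mem_bot _).1 hone)
    · intro x hx
      induction hx using Submodule.span_induction with
      | mem x h =>
        obtain ⟨t, rfl⟩ := h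
        change B.coord s g * B.coord t g ∈ N
        rw [← conv_gl _ _ g hg, hexp]
        exact hN _ (h1 s t)
      | zero => simp
      | add a b _ _ ha hb => rw [smul_add]; exact Submodule.add_mem _ ha hb
      | smul c a _ h => rw [smul_comm]; exact Submodule.smul_mem _ _ h
  obtain ⟨v, hv⟩ := IsIntegrallyClosed.isIntegral_iff.1 hint
  rw [← hv]; exact v.2

section
variable {k : Type} [Field k] (R : Subring k) {H : Type} [Ring H] [HopfAlgebra k H]
  {HR : Type} [Ring HR] [HopfAlgebra R HR]
  (ι : HR →ₗ[R] H) (horder : Function.Bijective (LinearMap.liftBaseChange k ι))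

noncomputable def bk (b : HR →ₗ[R] k) : H →ₗ[k] k :=
  LinearMap.liftBaseChange k b ∘ₗ (LinearEquiv.ofBijective (LinearMap.liftBaseChange k ι) horder).symm.toLinearMap

lemma bk_ι (b : HR →ₗ[R] k) (z : HR) : bk R ι horder b (ι z) = b z := by
  have : (LinearEquiv.ofBijective (LinearMap.liftBaseChange k ι) horder).symm (ι z) = 1 ⊗ₜ z := by
    rw [LinearEquiv.symm_apply_eq]; simp
  simp [bk, this]

lemma conv_ι (hcomul : ∀ x : HR, Coalgebra.comul (R := k) (ι x) = ordTensor R k H HR ι (Coalgebra.comul (R := R) x))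
    (f f' : H →ₗ[k] k) (y : HR) : (toConv f * toConv f').ofConv (ι y) = 
      ∑ i ∈ (ℛ R y).index, f (ι ((ℛ R y).left i)) * f' (ι ((ℛ R y).right i)) := by
  change LinearMap.mul' k k (TensorProduct.map _ _ (comul (R := k) (ι y))) = _
  rw [hcomul, ← (ℛ R y).eq]
  simp only [map_sum]
  apply Finset.sum_congr rfl; intro i _
  have : ordTensor R k H HR ι ((ℛ R y).left i ⊗ₜ (ℛ R y).right i) = ι ((ℛ R y).left i) ⊗ₜ ι ((ℛ R y).right i) := rfl
  rw [this, TensorProduct.map_tmul, LinearMap.mul'_apply]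

lemma span_ι (horder : Function.Bijective (LinearMap.liftBaseChange k ι)) : Submodule.span k (Set.range ι) = ⊤ := by
  rw [eq_top_iff]
  rintro h -
  obtain ⟨z, rfl⟩ := horder.2 h
  induction z using TensorProduct.induction_on with
  | zero => simp
  | add a b ha hb => rw [map_add]; exact Submodule.add_mem _ ha hb
  | tmul c x =>
    rw [LinearMap.liftBaseChange_tmul]
    exact Submodule.smul_mem _ _ (Submodule.subset_span ⟨x, rfl⟩)

theorem setup [Module.Finite R HR] [Module.Projective R HR] (P : Ideal R) [P.IsPrime] (V : ValuationSubring k) (hV : ∀ r : R, (r : k) ∈ V)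
    (hVP : ∀ r : R, V.valuation (r : k) < 1 ↔ r ∈ P)
    (hcomul : ∀ x : HR, Coalgebra.comul (R := k) (ι x) = ordTensor R k H HR ι (Coalgebra.comul (R := R) x))
    (hcounit : ∀ x : HR, Coalgebra.counit (R := k) (ι x) = algebraMap R k (Coalgebra.counit (R := R) x))
    (horder : Function.Bijective (LinearMap.liftBaseChange k ι)) :
    ∃ (d : ℕ) (y : Fin d → HR) (B : Module.Basis (Fin d) k H), (∀ s, B s = ι (y s)) ∧
      (∀ z : HR, ∃ (t : R) (c : Fin d → R), t ∉ P ∧ t • z = ∑ s, c s • y s) ∧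
      ∀ g, IsGroupLikeElem k g → ∀ s, B.coord s g ∈ V := by
  classical
  obtain ⟨d, y, lam, hlam, hz⟩ := lemmaN R P HR
  have hli : LinearIndependent k (fun s => ι (y s)) := by
    rw [Fintype.linearIndependent_iff]
    intro a h s
    have := congrArg (bk R ι horder (lam s)) h
    simpa [map_sum, bk_ι, hlam] using this
  have hzk : ∀ z : HR, ∃ (t : R) (c : Fin d → R), t ∉ P ∧ ι z = ∑ s, ((c s : k) / t) • ι (y s) := by
    intro z
    obtain ⟨t, c, ht, h⟩ := hz z
    refine ⟨t, c, ht, ?_⟩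
    have h0 : (t : k) ≠ 0 := fun h => ht (by
      have : t = 0 := Subtype.ext h
      rw [this]; exact P.zero_mem)
    have h' := congrArg ι h
    simp only [map_sum, map_smul] at h'
    have h2 : (t : k) • ι z = ∑ s, (c s : k) • ι (y s) := h'
    have h3 := congrArg (fun w => (t : k)⁻¹ • w) h2
    simp only [Finset.smul_sum, smul_smul, inv_mul_cancel₀ h0, one_smul] at h3
    rw [h3]
    simp only [div_eq_inv_mul]
  have hsp : ⊤ ≤ Submodule.span k (Set.range fun s => ι (y s)) := by
    rw [← span_ι R ι horder, Submodule.span_le]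
    rintro _ ⟨z, rfl⟩
    obtain ⟨t, c, _, h⟩ := hzk z
    rw [h]
    exact Submodule.sum_mem _ fun s _ => Submodule.smul_mem _ _ (Submodule.subset_span ⟨s, rfl⟩)
  let B := Module.Basis.mk hli hsp
  have hB : ∀ s, B s = ι (y s) := fun s => Module.Basis.mk_apply hli hsp s
  have hcV : ∀ z s, B.coord s (ι z) ∈ V := by
    intro z s
    obtain ⟨t, c, ht, h⟩ := hzk z
    have e : B.coord s (ι z) = (c s : k) / t := by
      rw [h]
      simp only [← hB, map_sum, map_smul, Module.Basis.coord_apply, Module.Basis.repr_self]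
      simp [Finsupp.single_apply]
    rw [e, ← V.valuation_le_one_iff, map_div₀]
    have : V.valuation (t : k) = 1 := le_antisymm ((V.valuation_le_one_iff _).2 (hV t)) (not_lt.1 (fun h => ht ((hVP t).1 h)))
    rw [this, div_one, V.valuation_le_one_iff]; exact hV _
  refine ⟨d, y, B, hB, hz, fun g hg s => gl_coord V B ?_ ?_ g hg s⟩
  · intro s t r
    rw [hB, conv_ι R ι hcomul]
    exact sum_mem fun i _ => mul_mem (hcV _ _) (hcV _ _)
  · intro r
    rw [hB, hcounit]; exact hV _

/-- evaluation of a functional on the order at an element of `H`. -/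
noncomputable def ev (g : H) (b : WithConv (HR →ₗ[R] R)) : k := bk R ι horder (Algebra.linearMap R k ∘ₗ b.ofConv) g

lemma ev_mul (hcomul : ∀ x : HR, Coalgebra.comul (R := k) (ι x) = ordTensor R k H HR ι (Coalgebra.comul (R := R) x))
    (g : H) (hg : IsGroupLikeElem k g) (b b' : WithConv (HR →ₗ[R] R)) :
    ev R ι horder g (b * b') = ev R ι horder g b * ev R ι horder g b' := by
  unfold ev
  rw [← conv_gl _ _ g hg]
  have : bk R ι horder (Algebra.linearMap R k ∘ₗ (b * b').ofConv) = (toConv (bk R ι horder (Algebra.linearMap R k ∘ₗ b.ofConv)) * toConv (bk R ι horder (Algebra.linearMap R k ∘ₗ b'.ofConv))).ofConv := by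
    apply LinearMap.ext_on_range (span_ι R ι horder)
    intro z
    rw [conv_ι R ι hcomul, bk_ι]
    simp only [bk_ι]
    rw [LinearMap.comp_apply, (ℛ R z).convMul_apply]
    simp
  rw [this]

lemma ev_one (hcounit : ∀ x : HR, Coalgebra.counit (R := k) (ι x) = algebraMap R k (Coalgebra.counit (R := R) x))
    (g : H) (hg : IsGroupLikeElem k g) : ev R ι horder g (1 : WithConv (HR →ₗ[R] R)) = 1 := by
  unfold ev
  have : bk R ι horder (Algebra.linearMap R k ∘ₗ (1 : WithConv (HR →ₗ[R] R)).ofConv) = counit (R := k) := by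
    apply LinearMap.ext_on_range (span_ι R ι horder)
    intro z
    rw [bk_ι, hcounit]; rfl
  rw [this, hg.counit_eq_one]

lemma ev_basis {d : ℕ} (y : Fin d → HR) (B : Module.Basis (Fin d) k H) (hB : ∀ s, B s = ι (y s)) (g : H) (b : WithConv (HR →ₗ[R] R)) :
    ev R ι horder g b = ∑ s, B.coord s g * (b.ofConv (y s) : k) := by
  unfold ev
  conv_lhs => rw [← B.sum_repr g, map_sum]
  apply Finset.sum_congr rfl; intro s _
  rw [map_smul, hB, bk_ι]; rfl

lemma ev_mc {n : ℕ} (ha : HopfAction k H (WeylAlgebra k n)) (haR : HopfAction R HR (WeylAlgebra R n))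
    (hj : ∀ (x : HR) (a : WeylAlgebra R n), ha.act (ι x) (wmap R k n a) = wmap R k n (haR.act x a)) (g : H) (f : WeylAlgebra R n) (r) :
    ev R ι horder g (toConv (cf r ∘ₗ haR.act.flip f)) = cf r (ha.act g (wmap R k n f)) := by
  unfold ev
  have : bk R ι horder (Algebra.linearMap R k ∘ₗ (toConv (cf r ∘ₗ haR.act.flip f)).ofConv) = cf r ∘ₗ ha.act.flip (wmap R k n f) := by
    apply LinearMap.ext_on_range (span_ι R ι horder)
    intro z
    rw [bk_ι]
    simp only [LinearMap.comp_apply, LinearMap.flip_apply, hj, cf_wmap]; rfl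
  rw [this]; rfl

end
end WF

namespace WF
open TensorProduct Coalgebra WithConv

lemma gl_act_inj {k H : Type} [Field k] [Ring H] [HopfAlgebra k H] [FiniteDimensional k H] {A : Type} [Ring A] [Algebra k A]
    (ha : HopfAction k H A) (hif : ha.InnerFaithful) (hsp : Submodule.span k {g : H | IsGroupLikeElem k g} = ⊤)
    (g h : H) (hg : IsGroupLikeElem k g) (hh : IsGroupLikeElem k h) (e : ha.act g = ha.act h) : g = h := by
  let I : Submodule k H := Submodule.span k {x | ∃ g h, IsGroupLikeElem k g ∧ IsGroupLikeElem k h ∧ ha.act g = ha.act h ∧ x = g - h}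
  have gen : ∀ g h, IsGroupLikeElem k g → IsGroupLikeElem k h → ha.act g = ha.act h → g - h ∈ I :=
    fun g h h1 h2 h3 => Submodule.subset_span ⟨g, h, h1, h2, h3, rfl⟩
  have am : ∀ x y : H, ha.act (x * y) = ha.act x ∘ₗ ha.act y := fun x y => LinearMap.ext fun a => ha.mul_act x y a
  have c1 : ∀ x ∈ I, ∀ h : H, h * x ∈ I ∧ x * h ∈ I := by
    intro x hx u
    have hu : u ∈ Submodule.span k {g : H | IsGroupLikeElem k g} := by rw [hsp]; trivial
    induction hu using Submodule.span_induction with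
    | zero => simp
    | add a b _ _ h1 h2 => rw [add_mul, mul_add]; exact ⟨I.add_mem h1.1 h2.1, I.add_mem h1.2 h2.2⟩
    | smul c a _ h => rw [smul_mul_assoc, mul_smul_comm]; exact ⟨I.smul_mem c h.1, I.smul_mem c h.2⟩
    | mem u hu =>
      induction hx using Submodule.span_induction with
      | zero => simp
      | add a b _ _ h1 h2 => rw [add_mul, mul_add]; exact ⟨I.add_mem h1.1 h2.1, I.add_mem h1.2 h2.2⟩
      | smul c a _ h => rw [smul_mul_assoc, mul_smul_comm]; exact ⟨I.smul_mem c h.1, I.smul_mem c h.2⟩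
      | mem x hx =>
        obtain ⟨g, h, hg, hh, e, rfl⟩ := hx
        rw [mul_sub, sub_mul]
        exact ⟨gen _ _ (IsGroupLikeElem.mul hu hg) (IsGroupLikeElem.mul hu hh) (by rw [am, am, e]),
          gen _ _ (IsGroupLikeElem.mul hg hu) (IsGroupLikeElem.mul hh hu) (by rw [am, am, e])⟩
  have c2 : ∀ x ∈ I, comul (R := k) x ∈ tensorIdeal k H I := by
    intro x hx
    induction hx using Submodule.span_induction with
    | zero => simp
    | add a b _ _ h1 h2 => rw [map_add]; exact Submodule.add_mem _ h1 h2
    | smul c a _ h => rw [map_smul]; exact Submodule.smul_mem _ c h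
    | mem x hx =>
      obtain ⟨g, h, hg, hh, e, rfl⟩ := hx
      have : comul (R := k) (g - h) = (g - h) ⊗ₜ[k] g + h ⊗ₜ[k] (g - h) := by
        rw [map_sub, hg.comul_eq_tmul_self, hh.comul_eq_tmul_self, TensorProduct.sub_tmul, TensorProduct.tmul_sub]; abel
      rw [this]
      exact Submodule.add_mem _ (Submodule.subset_span (Or.inl ⟨_, gen _ _ hg hh e, _, rfl⟩))
        (Submodule.subset_span (Or.inr ⟨_, _, gen _ _ hg hh e, rfl⟩))
  have c3 : ∀ x ∈ I, counit (R := k) x = 0 := by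
    intro x hx
    induction hx using Submodule.span_induction with
    | zero => simp
    | add a b _ _ h1 h2 => rw [map_add, h1, h2, add_zero]
    | smul c a _ h => rw [map_smul, h, smul_zero]
    | mem x hx =>
      obtain ⟨g, h, hg, hh, e, rfl⟩ := hx
      rw [map_sub, hg.counit_eq_one, hh.counit_eq_one, sub_self]
  have hbot : I = ⊥ := by
    apply hif I ⟨c1, c2, c3, antipode_stable I c1 c2 c3⟩
    intro x hx
    suffices h : ha.act x = 0 by intro a; rw [h]; rfl
    induction hx using Submodule.span_induction with
    | zero => simp
    | add a b _ _ h1 h2 => rw [map_add, h1, h2, add_zero]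
    | smul c a _ h => rw [map_smul, h, smul_zero]
    | mem x hx =>
      obtain ⟨g, h, hg, hh, e, rfl⟩ := hx
      rw [map_sub, e, sub_self]
  have := gen g h hg hh e
  rw [hbot] at this
  exact sub_eq_zero.1 ((Submodule.mem_bot k).1 this)

section
variable {k : Type} [Field k] (R : Subring k) {n : ℕ} (V : ValuationSubring k)
open MvPolynomial

lemma cf_mono {S : Type} [CommRing S] (m' m : (Fin n ⊕ Fin n) →₀ ℕ) : 
    cf m' ((sg S n).symm (monomial m 1)) = if m = m' then 1 else 0 := by
  classical
  rw [cf_apply, LinearEquiv.apply_symm_apply, coeff_monomial]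

lemma exp_wmap (a : WeylAlgebra k n) : a = ∑ m ∈ (sg k n a).support, cf m a • wmap R k n ((sg R n).symm (monomial m 1)) := by
  classical
  apply cf_ext
  intro m'
  simp only [map_sum, map_smul, cf_wmap, cf_mono]
  simp only [smul_eq_mul, apply_ite (algebraMap R k), map_one, map_zero, mul_ite, mul_one, mul_zero, Finset.sum_ite_eq']
  split_ifs with h
  · rfl
  · simpa [cf_apply] using h

lemma spread (L : WeylAlgebra k n →ₗ[k] WeylAlgebra k n) (S S' S'' : k → Prop) (h0 : S'' 0) (hadd : ∀ x y, S'' x → S'' y → S'' (x + y))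
    (hmul : ∀ v w, S' v → S w → S'' (v * w)) (hL : ∀ f m, S (cf m (L (wmap R k n f)))) (a) (ha : ∀ m, S' (cf m a)) (m) : S'' (cf m (L a)) := by
  rw [exp_wmap R a]
  simp only [map_sum, map_smul]
  exact Finset.sum_induction _ S'' hadd h0 (fun m' _ => hmul _ _ (ha m') (hL _ _))

lemma unip (T : Module.End k (WeylAlgebra k n)) (r : ℕ) (hr : V.valuation (r : k) = 1) (hT : T ^ r = 1)
    (h1 : ∀ a, (∀ m, V.valuation (cf m a) ≤ 1) → ∀ m, V.valuation (cf m (T a)) ≤ 1)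
    (h2 : ∀ a, (∀ m, V.valuation (cf m a) ≤ 1) → ∀ m, V.valuation (cf m (T a - a)) < 1)
    (a : WeylAlgebra k n) (ha : ∀ m, V.valuation (cf m a) ≤ 1) : T a = a := by
  rw [← sub_eq_zero]
  by_contra hb
  set b := T a - a with hbdef
  have hne : (sg k n b).support.Nonempty := by
    rw [Finset.nonempty_iff_ne_empty, Ne, support_eq_empty]
    exact fun h => hb (by simpa using h)
  obtain ⟨m0, hm0, hmax⟩ := Finset.exists_max_image _ (fun m => V.valuation (cf m b)) hne
  have hc : cf m0 b ≠ 0 := by simpa [cf_apply] using hm0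
  have hmax' : ∀ m, V.valuation (cf m b) ≤ V.valuation (cf m0 b) := by
    intro m
    by_cases hm : m ∈ (sg k n b).support
    · exact hmax m hm
    · have : cf m b = 0 := by simpa [cf_apply] using hm
      rw [this, map_zero]; exact zero_le'
  set b0 := (cf m0 b)⁻¹ • b with hb0
  have hb0L : ∀ m, V.valuation (cf m b0) ≤ 1 := by
    intro m
    rw [hb0, map_smul, smul_eq_mul, map_mul, map_inv₀]
    have hpos : 0 < V.valuation (cf m0 b) := zero_lt_iff.2 ((Valuation.ne_zero_iff _).2 hc)
    rw [mul_comm, ← div_eq_mul_inv]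
    exact div_le_one_of_le₀ (hmax' m) zero_le'
  have hb01 : cf m0 b0 = 1 := by rw [hb0, map_smul, smul_eq_mul, inv_mul_cancel₀ hc]
  have hpow : ∀ i a, (∀ m, V.valuation (cf m a) ≤ 1) → ∀ m, V.valuation (cf m ((T ^ i) a - a)) < 1 := by
    intro i
    induction i with
    | zero => intro a ha m; simp
    | succ i ih =>
      intro a ha m
      have : (T ^ (i+1)) a - a = ((T ^ i) (T a) - T a) + (T a - a) := by
        rw [pow_succ, Module.End.mul_apply]; abel
      rw [this, map_add]
      exact Valuation.map_add_lt _ (ih _ (h1 a ha) m) (h2 a ha m)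
  have hsum : ∑ i ∈ Finset.range r, (T ^ i) b0 = 0 := by
    rw [hb0]
    simp only [map_smul, ← Finset.smul_sum]
    have : ∑ i ∈ Finset.range r, (T ^ i) b = 0 := by
      have h3 : ∀ i, (T ^ i) b = (T ^ (i+1)) a - (T ^ i) a := by
        intro i; rw [hbdef, map_sub, pow_succ, Module.End.mul_apply]
      simp only [h3]
      rw [Finset.sum_range_sub (fun i => (T ^ i) a), hT, pow_zero, sub_self]
    rw [this, smul_zero]
  have h4 : ((r : k)) = - ∑ i ∈ Finset.range r, cf m0 ((T ^ i) b0 - b0) := by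
    have := congrArg (cf m0) hsum
    simp only [map_sum, map_zero] at this
    simp only [map_sub, hb01, Finset.sum_sub_distrib, this]
    simp
  have h5 : V.valuation (r : k) < 1 := by
    rw [h4, Valuation.map_neg]
    exact Valuation.map_sum_lt _ one_ne_zero fun i _ => hpow i b0 hb0L m0
  exact h5.ne hr
end

section
variable {k : Type} [Field k] (R : Subring k) {n : ℕ} (V : ValuationSubring k) {H : Type} [Ring H] [HopfAlgebra k H] [FiniteDimensional k H]

theorem distinct (ha : HopfAction k H (WeylAlgebra k n)) (hif : ha.InnerFaithful) (hsp : Submodule.span k {g : H | IsGroupLikeElem k g} = ⊤)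
    (hr : ∀ r : ℕ, 0 < r → r ≤ Module.finrank k H → V.valuation (r : k) = 1)
    (hV : ∀ r : R, (r : k) ∈ V)
    (hgl : ∀ g, IsGroupLikeElem k g → ∀ f m, cf m (ha.act g (wmap R k n f)) ∈ V)
    (g h : H) (hg : IsGroupLikeElem k g) (hh : IsGroupLikeElem k h)
    (e : ∀ f m, V.valuation (cf m (ha.act g (wmap R k n f)) - cf m (ha.act h (wmap R k n f))) < 1) : g = h := by
  let h' := HopfAlgebra.antipode k h
  have hh' : IsGroupLikeElem k h' := hh.antipode
  have hu : IsGroupLikeElem k (h' * g) := IsGroupLikeElem.mul hh' hg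
  have hgl' : ∀ g, IsGroupLikeElem k g → ∀ a, (∀ m, V.valuation (cf m a) ≤ 1) → ∀ m, V.valuation (cf m (ha.act g a)) ≤ 1 := by
    intro g hg a ha' m
    refine spread R (ha.act g) (fun x => V.valuation x ≤ 1) (fun x => V.valuation x ≤ 1) (fun x => V.valuation x ≤ 1) (by simp) ?_ ?_ ?_ a ha' m
    · intro x y hx hy; exact Valuation.map_add_le _ hx hy
    · intro x y hx hy; rw [map_mul]; exact mul_le_one' hx hy
    · intro f m; rw [V.valuation_le_one_iff]; exact hgl g hg f m
  haveI : Finite (GroupLike k H) := (linearIndep_groupLikeVal (R := k) (A := H)).finite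
  haveI := Fintype.ofFinite (GroupLike k H)
  have hcard : Fintype.card (GroupLike k H) ≤ Module.finrank k H := (linearIndep_groupLikeVal (R := k) (A := H)).fintype_card_le_finrank
  have am : ∀ x y : H, ha.act (x * y) = ha.act x * ha.act y := fun x y => LinearMap.ext fun a => ha.mul_act x y a
  have a1 : ha.act 1 = 1 := LinearMap.ext fun a => ha.one_act a
  have hpow : ∀ i, ha.act ((h' * g) ^ i) = (ha.act (h' * g)) ^ i := by
    intro i
    induction i with
    | zero => simp [a1]
    | succ i ih => rw [pow_succ, am, ih, pow_succ]
  have hug : (h' * g) ^ Fintype.card (GroupLike k H) = 1 := by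
    let U : GroupLike k H := ⟨h' * g, hu⟩
    have := pow_card_eq_one (x := U)
    have := congrArg GroupLike.val this
    rw [GroupLike.val_pow, GroupLike.val_one] at this
    exact this
  have key : ∀ a, (∀ m, V.valuation (cf m a) ≤ 1) → ha.act (h' * g) a = a := by
    apply unip V (ha.act (h' * g)) _ (hr _ Fintype.card_pos hcard)
    · rw [← hpow, hug, a1]
    · exact hgl' _ hu
    · intro a ha' m
      have e1 : ha.act (h' * g) a - a = ha.act h' ((ha.act g - ha.act h) a) := by
        rw [LinearMap.sub_apply, map_sub, ← ha.mul_act, ← ha.mul_act, hh.antipode_mul_cancel, ha.one_act]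
      rw [e1]
      refine spread R (ha.act h') (fun x => V.valuation x ≤ 1) (fun x => V.valuation x < 1) (fun x => V.valuation x < 1) (by simp) ?_ ?_ ?_ _ ?_ m
      · intro x y hx hy; exact Valuation.map_add_lt _ hx hy
      · intro x y hx hy; rw [map_mul]; exact lt_of_le_of_lt (mul_le_of_le_one_right' hy) hx
      · intro f m; rw [V.valuation_le_one_iff]; exact hgl h' hh' f m
      · intro m
        refine spread R (ha.act g - ha.act h) (fun x => V.valuation x < 1) (fun x => V.valuation x ≤ 1) (fun x => V.valuation x < 1) (by simp) ?_ ?_ ?_ _ ha' m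
        · intro x y hx hy; exact Valuation.map_add_lt _ hx hy
        · intro x y hx hy; rw [map_mul]; exact lt_of_le_of_lt (mul_le_of_le_one_left' hx) hy
        · intro f m; rw [LinearMap.sub_apply, map_sub]; exact e f m
  have key2 : ha.act (h' * g) = 1 := by
    apply hom_ext_wmap R k n
    intro f
    rw [key]; rfl
    intro m
    rw [cf_wmap, V.valuation_le_one_iff]; exact hV _
  apply gl_act_inj ha hif hsp g h hg hh
  have : g = h * (h' * g) := by rw [← mul_assoc, hh.mul_antipode_cancel, one_mul]
  rw [this, am, key2, mul_one]
end
end WF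

namespace WF
open TensorProduct Coalgebra WithConv

lemma det_exists {κ : Type} [Field κ] {M : Type} [Monoid M] {D : Type} [Fintype D] {d : ℕ} (hD : Fintype.card D = d)
    (χ : D → (M →* κ)) (hχ : Function.Injective χ) (a : D → Fin d → κ) (w : M → Fin d → κ)
    (h : ∀ g b, χ g b = ∑ s, a g s * w b s) : ∃ b : Fin d → M, (Matrix.of fun i s => w (b i) s).det ≠ 0 := by
  classical
  have hli : LinearIndependent κ (fun g => (χ g : M → κ)) := (linearIndependent_monoidHom M κ).comp χ hχ
  rw [Fintype.linearIndependent_iff] at hli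
  have expand : ∀ (c : D → κ) b, (∑ g, c g • (χ g : M → κ)) b = ∑ s, (∑ g, c g • a g) s * w b s := by
    intro c b
    simp only [Finset.sum_apply, Pi.smul_apply, smul_eq_mul, h, Finset.mul_sum, Finset.sum_mul]
    rw [Finset.sum_comm]
    simp only [mul_assoc]
  have hla : LinearIndependent κ a := by
    rw [Fintype.linearIndependent_iff]
    intro c hc
    apply hli c
    funext b
    rw [expand, hc]; simp
  have hspa : Submodule.span κ (Set.range a) = ⊤ := hla.span_eq_top_of_card_eq_finrank' (by simp [hD])
  have hspw : Submodule.span κ (Set.range w) = ⊤ := by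
    by_contra hne
    obtain ⟨f, hf0, hf⟩ := Submodule.exists_le_ker_of_lt_top _ (lt_top_iff_ne_top.2 hne)
    apply hf0
    have hfv : ∀ v, f v = ∑ s, f (Pi.single s 1) * v s := by
      intro v
      conv_lhs => rw [pi_eq_sum_univ' v]
      simp only [map_sum, map_smul, smul_eq_mul, mul_comm]
    obtain ⟨c, hc⟩ := (Submodule.mem_span_range_iff_exists_fun κ).1 (show (fun s => f (Pi.single s 1)) ∈ Submodule.span κ (Set.range a) by rw [hspa]; trivial)
    have hc0 : ∀ g, c g = 0 := by
      apply hli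
      funext b
      rw [expand, hc, ← hfv]
      exact hf (Submodule.subset_span ⟨b, rfl⟩)
    apply LinearMap.ext
    intro v
    rw [hfv]
    have : ∀ s, f (Pi.single s 1) = 0 := by
      intro s
      have := congrFun hc s
      rw [← this]; simp [hc0]
    simp [this]
  obtain H := Submodule.exists_fun_fin_finrank_span_eq κ (Set.range w)
  have hfr : Module.finrank κ (Submodule.span κ (Set.range w)) = d := by rw [hspw]; simp
  rw [hfr] at H
  obtain ⟨f, hf, -, hlif⟩ := H
  choose b hb using hf
  refine ⟨b, ?_⟩
  have : (Matrix.of fun i s => w (b i) s) = Matrix.of f := by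
    ext i s; simp [hb]
  rw [this]
  have := (Matrix.linearIndependent_rows_iff_isUnit (A := Matrix.of f)).1 hlif
  exact ((Matrix.isUnit_iff_isUnit_det _).1 this).ne_zero

/-- the base change of a functional. -/
noncomputable def bK (R K HR : Type) [CommRing R] [CommRing K] [Algebra R K] [AddCommGroup HR] [Module R HR] (b : HR →ₗ[R] R) : K ⊗[R] HR →ₗ[K] K :=
  LinearMap.liftBaseChange K (Algebra.linearMap R K ∘ₗ b)

lemma bK_kills {R K HR : Type} [CommRing R] [Field K] [Algebra R K] [Ring HR] [HopfAlgebra R HR] {n : ℕ}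
    (haR : HopfAction R HR (WeylAlgebra R n))
    (hap : ModAlgAction K (K ⊗[R] HR) (bcComul R K HR (Coalgebra.comul (R := R))) (bcCounit R K HR (Coalgebra.counit (R := R))) (WeylAlgebra K n))
    (hjp : ∀ (x : HR) (a : WeylAlgebra R n), hap.act ((1 : K) ⊗ₜ[R] x) (wmap R K n a) = wmap R K n (haR.act x a))
    (I : Submodule K (K ⊗[R] HR)) (h2 : ∀ x ∈ I, bcComul R K HR (Coalgebra.comul (R := R)) x ∈ tensorIdeal K (K ⊗[R] HR) I)
    (h3 : ∀ x ∈ I, bcCounit R K HR (Coalgebra.counit (R := R)) x = 0)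
    (hk : ∀ x ∈ I, ∀ a, hap.act x a = 0)
    (b : WithConv (HR →ₗ[R] R)) (hb : b ∈ Algebra.adjoin R {b | ∃ f r, b = toConv (cf r ∘ₗ haR.act.flip f)}) :
    ∀ x ∈ I, bK R K HR b.ofConv x = 0 := by
  induction hb using Algebra.adjoin_induction with
  | mem b h =>
    obtain ⟨f, r, rfl⟩ := h
    intro x hx
    have : bK R K HR (toConv (cf r ∘ₗ haR.act.flip f)).ofConv = cf r ∘ₗ hap.act.flip (wmap R K n f) := by
      apply TensorProduct.AlgebraTensorModule.curry_injective
      ext z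
      simp [bK, hjp, cf_wmap]
    rw [this]
    simp [hk x hx]
  | algebraMap r =>
    intro x hx
    have : bK R K HR (algebraMap R (WithConv (HR →ₗ[R] R)) r).ofConv = algebraMap R K r • bcCounit R K HR (Coalgebra.counit (R := R)) := by
      apply TensorProduct.AlgebraTensorModule.curry_injective
      ext z
      have : (algebraMap R (WithConv (HR →ₗ[R] R)) r).ofConv z = r * counit (R := R) z := by
        rw [Algebra.algebraMap_eq_smul_one]; rfl
      simp [bK, bcCounit, this, Algebra.smul_def]
    rw [this, LinearMap.smul_apply, h3 x hx, smul_zero]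
  | add b b' _ _ h h' =>
    intro x hx
    have : bK R K HR (b + b').ofConv = bK R K HR b.ofConv + bK R K HR b'.ofConv := by
      apply TensorProduct.AlgebraTensorModule.curry_injective
      ext z
      simp [bK]
    rw [this, LinearMap.add_apply, h x hx, h' x hx, add_zero]
  | mul b b' _ _ h h' =>
    intro x hx
    have : bK R K HR (b * b').ofConv = LinearMap.mul' K K ∘ₗ TensorProduct.map (bK R K HR b.ofConv) (bK R K HR b'.ofConv) ∘ₗ bcComul R K HR (Coalgebra.comul (R := R)) := by
      apply TensorProduct.AlgebraTensorModule.curry_injective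
      ext z
      have e : (b * b').ofConv z = LinearMap.mul' R R (TensorProduct.map b.ofConv b'.ofConv (comul (R := R) z)) := rfl
      simp only [TensorProduct.AlgebraTensorModule.curry_apply, LinearMap.restrictScalars_self, TensorProduct.curry_apply, LinearMap.comp_apply, LinearMap.coe_restrictScalars, bcComul, LinearMap.baseChange_tmul, LinearEquiv.coe_coe]
      simp only [bK, LinearMap.liftBaseChange_tmul, one_smul, LinearMap.comp_apply, e]
      generalize comul (R := R) z = w
      induction w using TensorProduct.induction_on with
      | zero => simp
      | add u v hu hv => simp only [map_add, TensorProduct.tmul_add, hu, hv]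
      | tmul u v => simp
    rw [this, LinearMap.comp_apply, LinearMap.comp_apply]
    have hx2 := h2 x hx
    unfold tensorIdeal at hx2
    generalize bcComul R K HR (Coalgebra.comul (R := R)) x = w at hx2
    induction hx2 using Submodule.span_induction with
    | zero => simp
    | add u v _ _ hu hv => rw [map_add, map_add, hu, hv, add_zero]
    | smul c u _ hu => rw [map_smul, map_smul, hu, smul_zero]
    | mem u hu =>
      rcases hu with ⟨a, ha, b2, rfl⟩ | ⟨a, b2, hb2, rfl⟩
      · simp [h a ha]
      · simp [h' b2 hb2]
end WF

namespace WF
open TensorProduct Coalgebra WithConv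

theorem finalK
    {k : Type} [Field k] [IsAlgClosed k] [CharZero k]
    {H : Type} [Ring H] [HopfAlgebra k H] [FiniteDimensional k H]
    {n : ℕ} (ha : HopfAction k H (WeylAlgebra k n))
    (hif : ha.InnerFaithful)
    (R : Subring k) (hfg : ∃ s : Finset k, Subring.closure (s : Set k) = R)
    {HR : Type} [Ring HR] [HopfAlgebra R HR] [Module.Finite R HR] [Module.Projective R HR]
    (ι : HR →ₗ[R] H)
    (horder : Function.Bijective (LinearMap.liftBaseChange k ι))
    (hcomul : ∀ x : HR, Coalgebra.comul (R := k) (ι x) =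
        ordTensor R k H HR ι (Coalgebra.comul (R := R) x))
    (hcounit : ∀ x : HR, Coalgebra.counit (R := k) (ι x) =
        algebraMap R k (Coalgebra.counit (R := R) x))
    (haR : HopfAction R HR (WeylAlgebra R n))
    (hj : ∀ (x : HR) (a : WeylAlgebra R n), ha.act (ι x) (wmap R k n a) = wmap R k n (haR.act x a))
    {K : Type} [Field K] [Algebra R K] (p : ℕ) [CharP K p] (hp : Module.finrank k H < p)
    (hap : ModAlgAction K (K ⊗[R] HR) (bcComul R K HR (Coalgebra.comul (R := R))) (bcCounit R K HR (Coalgebra.counit (R := R))) (WeylAlgebra K n))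
    (hjp : ∀ (x : HR) (a : WeylAlgebra R n), hap.act ((1 : K) ⊗ₜ[R] x) (wmap R K n a) = wmap R K n (haR.act x a))
    (S : K ⊗[R] HR →ₗ[K] K ⊗[R] HR) :
    InnerFaithfulWith K (K ⊗[R] HR) (bcComul R K HR (Coalgebra.comul (R := R))) (bcCounit R K HR (Coalgebra.counit (R := R))) S
      (WeylAlgebra K n) hap.act := by
  classical
  have hsp := grouplike_main k H n ha hif R hfg HR ι horder hcomul haR hj
  let P : Ideal R := RingHom.ker (algebraMap R K)
  haveI : P.IsPrime := RingHom.ker_isPrime _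
  obtain ⟨V, hV, hVP⟩ := exists_val R P
  obtain ⟨d, y, B, hB, hz, hgV⟩ := setup R ι P V hV hVP hcomul hcounit horder
  have hd : Module.finrank k H = d := by rw [Module.finrank_eq_card_basis B]; simp
  have hr : ∀ r : ℕ, 0 < r → r ≤ Module.finrank k H → V.valuation (r : k) = 1 := by
    intro r h0 h1
    refine le_antisymm ((V.valuation_le_one_iff _).2 (natCast_mem V r)) (not_lt.1 fun h => ?_)
    have h2 : (r : R) ∈ P := (hVP r).1 (by simpa using h)
    have h3 : ((r : ℕ) : K) = 0 := by
      have : algebraMap R K r = 0 := h2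
      simpa using this
    have h4 := (CharP.cast_eq_zero_iff K p r).1 h3
    exact absurd (Nat.le_of_dvd h0 h4) (by omega)
  have hevV : ∀ g, IsGroupLikeElem k g → ∀ b, ev R ι horder g b ∈ V := by
    intro g hg b
    rw [ev_basis R ι horder y B hB]
    exact sum_mem fun s _ => mul_mem (hgV g hg s) (hV _)
  have hglV : ∀ g, IsGroupLikeElem k g → ∀ f m, cf m (ha.act g (wmap R k n f)) ∈ V := by
    intro g hg f m
    rw [← ev_mc R ι horder ha haR hj]
    exact hevV g hg _
  let BR := Algebra.adjoin R {b : WithConv (HR →ₗ[R] R) | ∃ f r, b = toConv (cf r ∘ₗ haR.act.flip f)}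
  let res := IsLocalRing.residue V
  let χ : GroupLike k H → (BR →* IsLocalRing.ResidueField V) := fun g =>
    { toFun := fun b => res ⟨ev R ι horder g.val b.1, hevV _ g.isGroupLikeElem_val _⟩
      map_one' := by
        rw [← map_one res]; congr 1; apply Subtype.ext
        exact ev_one R ι horder hcounit _ g.isGroupLikeElem_val
      map_mul' := by
        intro b b'
        rw [← map_mul res]; congr 1; apply Subtype.ext
        exact ev_mul R ι horder hcomul _ g.isGroupLikeElem_val b.1 b'.1 }
  have hχ : Function.Injective χ := by
    intro g h e
    apply GroupLike.val_injective
    apply distinct R V ha hif hsp hr hV hglV _ _ g.isGroupLikeElem_val h.isGroupLikeElem_val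
    intro f m
    have e1 := DFunLike.congr_fun e (⟨toConv (cf m ∘ₗ haR.act.flip f), Algebra.subset_adjoin ⟨f, m, rfl⟩⟩ : BR)
    have e2 : res (⟨_, hevV _ g.isGroupLikeElem_val (toConv (cf m ∘ₗ haR.act.flip f))⟩ - ⟨_, hevV _ h.isGroupLikeElem_val (toConv (cf m ∘ₗ haR.act.flip f))⟩) = 0 := by
      rw [map_sub, sub_eq_zero]; exact e1
    rw [IsLocalRing.residue_eq_zero_iff] at e2
    have e3 := (V.valuation_lt_one_iff _).1 e2
    rw [← ev_mc R ι horder ha haR hj, ← ev_mc R ι horder ha haR hj]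
    exact e3
  haveI : Finite (GroupLike k H) := (linearIndep_groupLikeVal (R := k) (A := H)).finite
  haveI := Fintype.ofFinite (GroupLike k H)
  have hcard : Fintype.card (GroupLike k H) = d := by
    have hr' : Set.range (GroupLike.val (R := k) (A := H)) = {g : H | IsGroupLikeElem k g} := by
      ext g; exact ⟨fun ⟨u, hu⟩ => hu ▸ u.isGroupLikeElem_val, fun hg => ⟨⟨g, hg⟩, rfl⟩⟩
    rw [← hd, Module.finrank_eq_card_basis (Module.Basis.mk (linearIndep_groupLikeVal (R := k) (A := H)) (by rw [hr', hsp]))]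
  let inc : R → V := fun r => ⟨(r : k), hV r⟩
  let incH : R →+* V := { toFun := inc, map_one' := rfl, map_mul' := fun _ _ => rfl, map_zero' := rfl, map_add' := fun _ _ => rfl }
  obtain ⟨b, hdet⟩ := det_exists hcard χ hχ (fun g s => res ⟨B.coord s g.val, hgV _ g.isGroupLikeElem_val s⟩)
    (fun b s => res (incH (b.1.ofConv (y s)))) (by
      intro g b
      simp only [← map_mul, ← map_sum]
      change res _ = _
      congr 1
      apply Subtype.ext
      change ev R ι horder g.val b.1 = _
      rw [ev_basis R ι horder y B hB]
      push_cast
      rfl)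
  let D : Matrix (Fin d) (Fin d) R := Matrix.of fun i s => (b i).1.ofConv (y s)
  have hD : D.det ∉ P := by
    intro hDP
    apply hdet
    have e1 : (Matrix.of fun i s => res (incH ((b i).1.ofConv (y s)))) = (res.comp incH).mapMatrix D := rfl
    rw [e1, ← RingHom.map_det, RingHom.comp_apply, IsLocalRing.residue_eq_zero_iff]
    exact (V.valuation_lt_one_iff _).2 ((hVP _).2 hDP)
  intro I hI hk
  rw [eq_bot_iff]
  intro x hx
  have hxe : ∃ a : Fin d → K, x = ∑ s, a s ⊗ₜ[R] y s := by
    clear hx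
    induction x using TensorProduct.induction_on with
    | zero => exact ⟨0, by simp⟩
    | add u v hu hv =>
      obtain ⟨a, rfl⟩ := hu
      obtain ⟨a', rfl⟩ := hv
      exact ⟨a + a', by simp [TensorProduct.add_tmul, Finset.sum_add_distrib]⟩
    | tmul c z =>
      obtain ⟨t, e, ht, hte⟩ := hz z
      have ht0 : algebraMap R K t ≠ 0 := ht
      refine ⟨fun s => (e s) • (c * (algebraMap R K t)⁻¹), ?_⟩
      have : c = t • (c * (algebraMap R K t)⁻¹) := by
        rw [Algebra.smul_def]; field_simp
      conv_lhs => rw [this, TensorProduct.smul_tmul, hte, TensorProduct.tmul_sum]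
      simp only [TensorProduct.smul_tmul]
  obtain ⟨a, rfl⟩ := hxe
  have hkill := fun i => bK_kills haR hap hjp I hI.2.1 hI.2.2.1 hk (b i).1 (b i).2 _ hx
  have hmv : ((algebraMap R K).mapMatrix D).mulVec a = 0 := by
    funext i
    rw [Pi.zero_apply, ← hkill i]
    simp only [map_sum, bK, LinearMap.liftBaseChange_tmul, Matrix.mulVec, dotProduct]
    apply Finset.sum_congr rfl
    intro s _
    simp [D, mul_comm]
  have ha0 := Matrix.eq_zero_of_mulVec_eq_zero (by rw [← RingHom.map_det]; exact hD) hmv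
  simp [ha0]
end WF

/-- Let `H` be a finite dimensional Hopf algebra over `k` acting **inner faithfully** on
the Weyl algebra `A = A_n(k)`, the action restricting to a Hopf `R`-order `H_R` over a
finitely generated subring `R ⊆ k`.  Then for every sufficiently large prime `p`, the
reduced action of `H_p = H_R ⊗_R F̄_p` on `A_p = A_n(F̄_p)` is inner faithful. -/
theorem reduction_mod_p_inner_faithful
    (k : Type) [Field k] [IsAlgClosed k] [CharZero k]
    (H : Type) [Ring H] [HopfAlgebra k H] [FiniteDimensional k H]
    (n : ℕ) (ha : HopfAction k H (WeylAlgebra k n))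
    (hif : ha.InnerFaithful)
    (R : Subring k) (hfg : ∃ s : Finset k, Subring.closure (s : Set k) = R)
    (HR : Type) [Ring HR] [HopfAlgebra R HR] [Module.Finite R HR] [Module.Projective R HR]
    (ι : HR →ₗ[R] H) (hone : ι 1 = 1) (hmul : ∀ x y : HR, ι (x * y) = ι x * ι y)
    (horder : Function.Bijective (LinearMap.liftBaseChange k ι))
    (hcomul : ∀ x : HR, Coalgebra.comul (R := k) (ι x) =
        ordTensor R k H HR ι (Coalgebra.comul (R := R) x))
    (hcounit : ∀ x : HR, Coalgebra.counit (R := k) (ι x) =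
        algebraMap R k (Coalgebra.counit (R := R) x))
    (hanti : ∀ x : HR,
        HopfAlgebra.antipode (R := k) (ι x) = ι (HopfAlgebra.antipode (R := R) x))
    (haR : HopfAction R HR (WeylAlgebra R n))
    (j : WeylAlgebra R n →+* WeylAlgebra k n)
    (hjX : ∀ i : Fin n, j (WeylAlgebra.X i) = WeylAlgebra.X i)
    (hjY : ∀ i : Fin n, j (WeylAlgebra.Y i) = WeylAlgebra.Y i)
    (hjs : ∀ r : R, j (algebraMap R (WeylAlgebra R n) r) = algebraMap k (WeylAlgebra k n) r)
    (hj : ∀ (x : HR) (a : WeylAlgebra R n), ha.act (ι x) (j a) = j (haR.act x a)) :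
    ∃ N : ℕ, ∀ p : ℕ, ∀ hp : p.Prime, N ≤ p →
      haveI : Fact p.Prime := ⟨hp⟩
      ∀ ψ : R →+* AlgebraicClosure (ZMod p),
      letI := ψ.toAlgebra
      ∀ jp : WeylAlgebra R n →+* WeylAlgebra (AlgebraicClosure (ZMod p)) n,
        (∀ i : Fin n, jp (WeylAlgebra.X i) = WeylAlgebra.X i) →
        (∀ i : Fin n, jp (WeylAlgebra.Y i) = WeylAlgebra.Y i) →
        (∀ r : R, jp (algebraMap R (WeylAlgebra R n) r) =
          algebraMap (AlgebraicClosure (ZMod p)) (WeylAlgebra (AlgebraicClosure (ZMod p)) n)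
            (ψ r)) →
        ∀ hap : ModAlgAction (AlgebraicClosure (ZMod p)) (AlgebraicClosure (ZMod p) ⊗[R] HR)
            (bcComul R (AlgebraicClosure (ZMod p)) HR (Coalgebra.comul (R := R)))
            (bcCounit R (AlgebraicClosure (ZMod p)) HR (Coalgebra.counit (R := R)))
            (WeylAlgebra (AlgebraicClosure (ZMod p)) n),
          (∀ (x : HR) (a : WeylAlgebra R n),
            hap.act ((1 : AlgebraicClosure (ZMod p)) ⊗ₜ[R] x) (jp a) = jp (haR.act x a)) →
          InnerFaithfulWith (AlgebraicClosure (ZMod p)) (AlgebraicClosure (ZMod p) ⊗[R] HR)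
            (bcComul R (AlgebraicClosure (ZMod p)) HR (Coalgebra.comul (R := R)))
            (bcCounit R (AlgebraicClosure (ZMod p)) HR (Coalgebra.counit (R := R)))
            ((HopfAlgebra.antipode (R := R) (A := HR)).baseChange (AlgebraicClosure (ZMod p)))
            (WeylAlgebra (AlgebraicClosure (ZMod p)) n) hap.act := by
  have hjs' : ∀ r : R, j (algebraMap R (WeylAlgebra R n) r) = algebraMap R (WeylAlgebra k n) r := by
    intro r
    rw [hjs, IsScalarTower.algebraMap_apply R k (WeylAlgebra k n) r]; rfl
  refine ⟨Module.finrank k H + 1, fun p hp hN => ?_⟩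
  haveI : Fact p.Prime := ⟨hp⟩
  intro ψ
  letI := ψ.toAlgebra
  intro jp hX hY hs hap hact
  have hs' : ∀ r : R, jp (algebraMap R (WeylAlgebra R n) r) = algebraMap R (WeylAlgebra (AlgebraicClosure (ZMod p)) n) r := by
    intro r
    rw [hs, IsScalarTower.algebraMap_apply R (AlgebraicClosure (ZMod p)) (WeylAlgebra (AlgebraicClosure (ZMod p)) n) r]; rfl
  refine WF.finalK ha hif R hfg ι horder hcomul hcounit haR ?_ p (by omega) hap ?_ _
  · intro x a
    rw [← WF.eq_wmap R k n j hjX hjY hjs', ← WF.eq_wmap R k n j hjX hjY hjs', hj]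
  · intro x a
    rw [← WF.eq_wmap R _ n jp hX hY hs', ← WF.eq_wmap R _ n jp hX hY hs', hact]
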